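/- (Theorem 9: bounds on the ID capacity region of the BC with a common message identified separately.) The ID capacity region 𝒞_{cm-s} of the BC W(y,z|x) with a common message, where each receiver identifies the common message and its private message separately, is contained in the set of all triples (R, R_𝒴, R_𝒵) ∈ [0,∞)³ for which some PMF P on 𝒳 satisfies R ≤ I(P,W_𝒴), R_𝒴 ≤ I(P,W_𝒴), R ≤ I(P,W_𝒵), and R_𝒵 ≤ I(P,W_𝒵); and 𝒞_{cm-s} contains the set of all triples (R, R_𝒴, R_𝒵) ∈ [0,∞)³ for which some PMF P on 𝒳 satisfies those four inequalities together with R_𝒴 ≤ 2·I(P, W_𝒵) and R_𝒵 ≤ 2·I(P, W_𝒴). -/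

import Mathlib

open scoped Classical
open Finset

noncomputable section

/-- `P` is a probability mass function on the finite type `X`. -/
def IsPMF {X : Type*} [Fintype X] (P : X → ℝ) : Prop :=
  (∀ x, 0 ≤ P x) ∧ ∑ x, P x = 1

/-- `W` is a (discrete memoryless) channel from `X` to `Y`. -/
def IsChannel {X Y : Type*} [Fintype Y] (W : X → Y → ℝ) : Prop :=
  (∀ x y, 0 ≤ W x y) ∧ ∀ x, ∑ y, W x y = 1

/-- The `n`-fold memoryless extension `W^n(𝐲|𝐱) = ∏ᵢ W(yᵢ|xᵢ)`. -/
def Wn {X Y : Type*} (W : X → Y → ℝ) (n : ℕ) (x : Fin n → X) (y : Fin n → Y) : ℝ :=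
  ∏ i, W (x i) (y i)

/-- Mutual information `I(P,W)` (natural logarithm), with the convention that
terms with `P x * W x y = 0` contribute `0`. -/
def mutInf {X Y : Type*} [Fintype X] [Fintype Y] (P : X → ℝ) (W : X → Y → ℝ) : ℝ :=
  ∑ x, ∑ y, if P x * W x y = 0 then 0
    else P x * W x y * Real.log (W x y / ∑ x', P x' * W x' y)

/-- The error requirements of an `(n, M, l1, l2)` ID code for the DMC `W`:
maximum probability of missed identification at most `l1`, maximum probability
of wrong identification at most `l2`. -/
def IDCodeErr {X Y M : Type*} [Fintype X] [Fintype Y]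
    (n : ℕ) (W : X → Y → ℝ) (Q : M → (Fin n → X) → ℝ)
    (D : M → Finset (Fin n → Y)) (l1 l2 : ℝ) : Prop :=
  (∀ m, ∑ x, Q m x * ∑ y ∈ (D m)ᶜ, Wn W n x y ≤ l1) ∧
  (∀ m m', m ≠ m' → ∑ x, Q m x * ∑ y ∈ D m', Wn W n x y ≤ l2)

/-- `(n, M, l1, l2)` ID code for the DMC `W`. -/
def IsIDCode {X Y M : Type*} [Fintype X] [Fintype Y]
    (n : ℕ) (W : X → Y → ℝ) (Q : M → (Fin n → X) → ℝ)
    (D : M → Finset (Fin n → Y)) (l1 l2 : ℝ) : Prop :=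
  (∀ m, IsPMF (Q m)) ∧ IDCodeErr n W Q D l1 l2

/-- `W` is a two-receiver broadcast channel from `X` to `Y × Z`. -/
def IsBC {X Y Z : Type*} [Fintype Y] [Fintype Z] (W : X → Y → Z → ℝ) : Prop :=
  (∀ x y z, 0 ≤ W x y z) ∧ ∀ x, ∑ y, ∑ z, W x y z = 1

/-- Marginal channel to terminal `Y`. -/
def margY {X Y Z : Type*} [Fintype Z] (W : X → Y → Z → ℝ) : X → Y → ℝ :=
  fun x y => ∑ z, W x y z

/-- Marginal channel to terminal `Z`. -/
def margZ {X Y Z : Type*} [Fintype Y] (W : X → Y → Z → ℝ) : X → Z → ℝ :=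
  fun x z => ∑ y, W x y z

/-- ID code for the BC with a common message where each receiver identifies
the common message and its private message separately: the four mixture codes
are ID codes for the respective marginal channels. -/
def IsCMSIDCode {X Y Z : Type*} [Fintype X] [Fintype Y] [Fintype Z]
    (n k kY kZ : ℕ) (W : X → Y → Z → ℝ)
    (Q : Fin k → Fin kY → Fin kZ → (Fin n → X) → ℝ)
    (DcY : Fin k → Finset (Fin n → Y)) (DY : Fin kY → Finset (Fin n → Y))
    (DcZ : Fin k → Finset (Fin n → Z)) (DZ : Fin kZ → Finset (Fin n → Z))
    (l1Y l2Y l1Z l2Z : ℝ) : Prop :=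
  (∀ m my mz, IsPMF (Q m my mz)) ∧
  IDCodeErr n (margY W)
    (fun m x => ((kY * kZ : ℕ) : ℝ)⁻¹ * ∑ my, ∑ mz, Q m my mz x) DcY l1Y l2Y ∧
  IDCodeErr n (margY W)
    (fun my x => ((k * kZ : ℕ) : ℝ)⁻¹ * ∑ m, ∑ mz, Q m my mz x) DY l1Y l2Y ∧
  IDCodeErr n (margZ W)
    (fun m x => ((kY * kZ : ℕ) : ℝ)⁻¹ * ∑ my, ∑ mz, Q m my mz x) DcZ l1Z l2Z ∧
  IDCodeErr n (margZ W)
    (fun mz x => ((k * kY : ℕ) : ℝ)⁻¹ * ∑ m, ∑ my, Q m my mz x) DZ l1Z l2Z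

/-- The rate triple `(R, R_Y, R_Z)` is achievable for the BC with a common
message identified separately. -/
def CMSAchievable {X Y Z : Type*} [Fintype X] [Fintype Y] [Fintype Z]
    (W : X → Y → Z → ℝ) (Rt : ℝ × ℝ × ℝ) : Prop :=
  0 ≤ Rt.1 ∧ 0 ≤ Rt.2.1 ∧ 0 ≤ Rt.2.2 ∧
  ∀ l1Y l2Y l1Z l2Z : ℝ, 0 < l1Y → 0 < l2Y → 0 < l1Z → 0 < l2Z →
    ∃ n₀ : ℕ, ∀ n : ℕ, n₀ ≤ n →
      ∃ (k kY kZ : ℕ) (Q : Fin k → Fin kY → Fin kZ → (Fin n → X) → ℝ)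
        (DcY : Fin k → Finset (Fin n → Y)) (DY : Fin kY → Finset (Fin n → Y))
        (DcZ : Fin k → Finset (Fin n → Z)) (DZ : Fin kZ → Finset (Fin n → Z)),
        IsCMSIDCode n k kY kZ W Q DcY DY DcZ DZ l1Y l2Y l1Z l2Z ∧
        ((0 < Rt.1 → Rt.1 ≤ (1 / n) * Real.log (Real.log k)) ∧ (Rt.1 = 0 → k = 1)) ∧
        ((0 < Rt.2.1 → Rt.2.1 ≤ (1 / n) * Real.log (Real.log kY)) ∧ (Rt.2.1 = 0 → kY = 1)) ∧
        ((0 < Rt.2.2 → Rt.2.2 ≤ (1 / n) * Real.log (Real.log kZ)) ∧ (Rt.2.2 = 0 → kZ = 1))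

section ProductWeights

variable {ι A : Type*} [Fintype ι] [DecidableEq ι] [Fintype A]

/-- The product weight `∏ᵢ pᵢ(ωᵢ)` on functions `ι → A`. -/
def piWt {ι A : Type*} [Fintype ι] (p : ι → A → ℝ) (ω : ι → A) : ℝ :=
  ∏ i, p i (ω i)

theorem sum_prod_pi (f : ι → A → ℝ) :
    ∑ ω : ι → A, ∏ i, f i (ω i) = ∏ i, ∑ a, f i a := by
  rw [Finset.prod_univ_sum, Fintype.piFinset_univ]

theorem isPMF_piWt {p : ι → A → ℝ} (hp : ∀ i, IsPMF (p i)) : IsPMF (piWt p) := by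
  refine ⟨fun ω => Finset.prod_nonneg fun i _ => (hp i).1 _, ?_⟩
  unfold piWt
  rw [sum_prod_pi]
  exact Finset.prod_eq_one fun i _ => (hp i).2

theorem sum_piWt_mul_apply {p : ι → A → ℝ} (hp : ∀ i, ∑ a, p i a = 1) (i : ι) (g : A → ℝ) :
    ∑ ω, piWt p ω * g (ω i) = ∑ a, p i a * g a := by
  have h : ∀ ω : ι → A, piWt p ω * g (ω i)
      = ∏ l, p l (ω l) * (if l = i then g (ω l) else 1) := by
    intro ω
    rw [Finset.prod_mul_distrib]
    simp [piWt]
  simp_rw [h]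
  rw [sum_prod_pi (fun l a => p l a * (if l = i then g a else 1))]
  rw [Finset.prod_eq_single i]
  · simp
  · intro l _ hl
    simp [hl, hp]
  · simp

theorem sum_piWt_mul_apply_mul_apply {p : ι → A → ℝ} (hp : ∀ i, ∑ a, p i a = 1) {i j : ι}
    (hij : i ≠ j) (g h : A → ℝ) :
    ∑ ω, piWt p ω * (g (ω i) * h (ω j)) = (∑ a, p i a * g a) * ∑ a, p j a * h a := by
  have h' : ∀ ω : ι → A, piWt p ω * (g (ω i) * h (ω j))
      = ∏ l, p l (ω l) * ((if l = i then g (ω l) else 1) * (if l = j then h (ω l) else 1)) := by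
    intro ω
    rw [Finset.prod_mul_distrib, Finset.prod_mul_distrib]
    simp [piWt]
  simp_rw [h']
  rw [sum_prod_pi (fun l a => p l a * ((if l = i then g a else 1) * (if l = j then h a else 1)))]
  rw [Finset.prod_eq_mul i j hij]
  · simp [hij, hij.symm]
  · rintro l _ ⟨hi, hj⟩
    simp [hi, hj, hp]
  · simp
  · simp

theorem sum_piWt_mul_pair {p : ι → A → ℝ} (hp : ∀ i, ∑ a, p i a = 1) {i j : ι}
    (hij : i ≠ j) (f : A → A → ℝ) :
    ∑ ω, piWt p ω * f (ω i) (ω j) = ∑ a, ∑ b, p i a * (p j b * f a b) := by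
  have h : ∀ ω : ι → A, piWt p ω * f (ω i) (ω j)
      = ∑ a, piWt p ω * ((if ω i = a then 1 else 0) * f a (ω j)) := by
    intro ω
    rw [← Finset.mul_sum]
    simp
  simp_rw [h]
  rw [Finset.sum_comm]
  refine Finset.sum_congr rfl fun a _ => ?_
  rw [sum_piWt_mul_apply_mul_apply hp hij (fun b => if b = a then 1 else 0) (f a)]
  rw [Finset.sum_eq_single a] <;> simp +contextual [Finset.mul_sum]

/-- Second moment of a sum of independent centred variables. -/
theorem sum_piWt_mul_sq {p : ι → A → ℝ} (hp : ∀ i, ∑ a, p i a = 1) (f : ι → A → ℝ)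
    (hf : ∀ i, ∑ a, p i a * f i a = 0) :
    ∑ ω, piWt p ω * (∑ i, f i (ω i)) ^ 2 = ∑ i, ∑ a, p i a * f i a ^ 2 := by
  have h : ∀ ω : ι → A, piWt p ω * (∑ i, f i (ω i)) ^ 2
      = ∑ i, ∑ j, piWt p ω * (f i (ω i) * f j (ω j)) := by
    intro ω
    rw [sq, Finset.sum_mul_sum, Finset.mul_sum]
    simp_rw [Finset.mul_sum]
  simp_rw [h]
  rw [Finset.sum_comm]
  refine Finset.sum_congr rfl fun i _ => ?_
  rw [Finset.sum_comm, Finset.sum_eq_single i]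
  · simp_rw [← sq]
    exact sum_piWt_mul_apply hp i (fun a => f i a ^ 2)
  · intro j _ hj
    rw [sum_piWt_mul_apply_mul_apply hp hj.symm, hf, zero_mul]
  · simp

/-- Chebyshev's inequality for sums of independent variables. -/
theorem chebyshev_piWt {p : ι → A → ℝ} (hp : ∀ i, IsPMF (p i)) (f : ι → A → ℝ) {t : ℝ}
    (ht : 0 < t) :
    ∑ ω with t ≤ |∑ i, f i (ω i) - ∑ i, ∑ a, p i a * f i a|, piWt p ω
      ≤ (∑ i, ∑ a, p i a * f i a ^ 2) / t ^ 2 := by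
  have hp1 : ∀ i, ∑ a, p i a = 1 := fun i => (hp i).2
  set μ : ι → ℝ := fun i => ∑ a, p i a * f i a with hμ
  have hsq := sum_piWt_mul_sq hp1 (fun i a => f i a - μ i) (by
    intro i
    simp_rw [mul_sub, Finset.sum_sub_distrib, ← Finset.sum_mul, hp1, one_mul]
    simp [hμ])
  have hvar : ∑ i, ∑ a, p i a * (f i a - μ i) ^ 2 ≤ ∑ i, ∑ a, p i a * f i a ^ 2 := by
    refine Finset.sum_le_sum fun i _ => ?_
    have : ∑ a, p i a * (f i a - μ i) ^ 2 = ∑ a, p i a * f i a ^ 2 - μ i ^ 2 := by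
      have : ∀ a, p i a * (f i a - μ i) ^ 2
          = p i a * f i a ^ 2 - 2 * μ i * (p i a * f i a) + p i a * μ i ^ 2 := fun a => by ring
      simp_rw [this, Finset.sum_add_distrib, Finset.sum_sub_distrib, ← Finset.mul_sum,
        ← Finset.sum_mul, hp1]
      have : ∑ a, p i a * f i a = μ i := rfl
      rw [this]
      ring
    rw [this]
    nlinarith [sq_nonneg (μ i)]
  rw [le_div_iff₀ (by positivity)]
  refine le_trans ?_ hvar
  rw [← hsq, Finset.sum_mul]
  have hnn : ∀ ω, 0 ≤ piWt p ω := (isPMF_piWt hp).1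
  refine le_trans (Finset.sum_le_sum (g := fun ω => piWt p ω * (∑ i, (f i (ω i) - μ i)) ^ 2) ?_)
    (Finset.sum_le_sum_of_subset_of_nonneg (Finset.filter_subset _ _)
      fun ω _ _ => mul_nonneg (hnn ω) (sq_nonneg _))
  intro ω hω
  rw [Finset.mem_filter] at hω
  refine mul_le_mul_of_nonneg_left ?_ (hnn ω)
  rw [Finset.sum_sub_distrib, ← sq_abs (_ - _)]
  exact pow_le_pow_left₀ ht.le hω.2 2

end ProductWeights

theorem IsPMF.exists_le {A : Type*} [Fintype A] {p : A → ℝ} (hp : IsPMF p) {f : A → ℝ} {c : ℝ}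
    (h : ∑ a, p a * f a ≤ c) : ∃ a, f a ≤ c := by
  by_contra! hc
  have h1 : ∑ a, p a * c < ∑ a, p a * f a := by
    have hex : ∃ a ∈ Finset.univ, 0 < p a := by
      by_contra! h0
      have := Finset.sum_nonpos h0
      rw [hp.2] at this
      linarith
    obtain ⟨a, _, ha⟩ := hex
    exact Finset.sum_lt_sum (fun b _ => mul_le_mul_of_nonneg_left (hc b).le (hp.1 b))
      ⟨a, Finset.mem_univ a, mul_lt_mul_of_pos_left (hc a) ha⟩
  rw [← Finset.sum_mul, hp.2] at h1
  linarith

theorem IsPMF.sum_mul_abs_sq_le {A : Type*} [Fintype A] {p : A → ℝ} (hp : IsPMF p) (f : A → ℝ) :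
    (∑ a, p a * |f a|) ^ 2 ≤ ∑ a, p a * f a ^ 2 := by
  set μ := ∑ a, p a * |f a| with hμ
  have h0 : 0 ≤ ∑ a, p a * (|f a| - μ) ^ 2 :=
    Finset.sum_nonneg fun a _ => mul_nonneg (hp.1 a) (sq_nonneg _)
  have h : ∀ a, p a * (|f a| - μ) ^ 2 = p a * f a ^ 2 - 2 * μ * (p a * |f a|) + p a * μ ^ 2 := by
    intro a
    rw [← sq_abs (f a)]
    ring
  simp_rw [h, Finset.sum_add_distrib, Finset.sum_sub_distrib, ← Finset.mul_sum,
    ← Finset.sum_mul, hp.2, ← hμ] at h0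
  nlinarith

/-- Soft covering: a random list of `L` inputs drawn from `Q` reproduces the output law of `Q`
up to the mass on which the likelihood ratio exceeds `κ`, plus `√(κ / L)`. -/
theorem exists_list_output_close {U V : Type*} [Fintype U] [Fintype V] {Q : U → ℝ}
    (hQ : IsPMF Q) {w : U → V → ℝ} (hw : IsChannel w) {κ ε : ℝ} (hκ : 0 ≤ κ)
    (hbad : ∑ u, Q u * ∑ v with κ * ∑ u', Q u' * w u' v < w u v, w u v ≤ ε)
    {L : ℕ} (hL : 0 < L) :
    ∃ s : Fin L → U,
      ∑ v, |∑ u, Q u * w u v - (L : ℝ)⁻¹ * ∑ l, w (s l) v| ≤ 2 * ε + √(κ / L) := by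
  have hL' : (0 : ℝ) < L := by exact_mod_cast hL
  set out : V → ℝ := fun v => ∑ u, Q u * w u v with hout
  have hout0 : ∀ v, 0 ≤ out v := fun v =>
    Finset.sum_nonneg fun u _ => mul_nonneg (hQ.1 u) (hw.1 u v)
  have hout1 : ∑ v, out v = 1 := by
    rw [hout, Finset.sum_comm]
    simp_rw [← Finset.mul_sum, hw.2, mul_one, hQ.2]
  set w₁ : U → V → ℝ := fun u v => if κ * out v < w u v then 0 else w u v with hw₁
  set w₂ : U → V → ℝ := fun u v => if κ * out v < w u v then w u v else 0 with hw₂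
  have hsplit : ∀ u v, w u v = w₁ u v + w₂ u v := by
    intro u v
    simp only [hw₁, hw₂]
    split_ifs <;> simp
  have hw₁0 : ∀ u v, 0 ≤ w₁ u v := by
    intro u v
    simp only [hw₁]
    split_ifs
    exacts [le_rfl, hw.1 u v]
  have hw₂0 : ∀ u v, 0 ≤ w₂ u v := by
    intro u v
    simp only [hw₂]
    split_ifs
    exacts [hw.1 u v, le_rfl]
  have hw₁κ : ∀ u v, w₁ u v ≤ κ * out v := by
    intro u v
    simp only [hw₁]
    split_ifs with h
    exacts [mul_nonneg hκ (hout0 v), not_lt.1 h]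
  set μ₁ : V → ℝ := fun v => ∑ u, Q u * w₁ u v with hμ₁
  set μ₂ : V → ℝ := fun v => ∑ u, Q u * w₂ u v with hμ₂
  have hμ₂0 : ∀ v, 0 ≤ μ₂ v := fun v =>
    Finset.sum_nonneg fun u _ => mul_nonneg (hQ.1 u) (hw₂0 u v)
  have hμ : ∀ v, out v = μ₁ v + μ₂ v := by
    intro v
    simp only [hout, hμ₁, hμ₂, ← Finset.sum_add_distrib, ← mul_add, ← hsplit]
  have hμ₂ε : ∑ v, μ₂ v ≤ ε := by
    rw [hμ₂, Finset.sum_comm]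
    simp_rw [← Finset.mul_sum, hw₂, ← Finset.sum_filter]
    exact hbad
  have hpmf : IsPMF (piWt fun _ : Fin L => Q) := isPMF_piWt fun _ => hQ
  have hQ1 : ∀ _ : Fin L, ∑ a, Q a = 1 := fun _ => hQ.2
  -- mean deviation of the truncated part, letter by letter
  have hdev : ∀ v, ∑ s : Fin L → U, piWt (fun _ => Q) s *
      |(L : ℝ)⁻¹ * ∑ l, (w₁ (s l) v - μ₁ v)| ≤ √(κ / L) * out v := by
    intro v
    refine le_of_sq_le_sq ?_ (mul_nonneg (Real.sqrt_nonneg _) (hout0 v))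
    refine (hpmf.sum_mul_abs_sq_le _).trans ?_
    have h1 : ∀ s : Fin L → U, piWt (fun _ => Q) s *
        ((L : ℝ)⁻¹ * ∑ l, (w₁ (s l) v - μ₁ v)) ^ 2
        = ((L : ℝ)⁻¹) ^ 2 * (piWt (fun _ => Q) s * (∑ l, (w₁ (s l) v - μ₁ v)) ^ 2) :=
      fun s => by ring
    simp_rw [h1]
    rw [← Finset.mul_sum, sum_piWt_mul_sq hQ1 (fun _ u => w₁ u v - μ₁ v)]
    · have h2 : ∑ u, Q u * (w₁ u v - μ₁ v) ^ 2 ≤ κ * out v ^ 2 := by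
        have h3 : ∀ u, Q u * (w₁ u v - μ₁ v) ^ 2
            = Q u * w₁ u v ^ 2 - 2 * μ₁ v * (Q u * w₁ u v) + Q u * μ₁ v ^ 2 :=
          fun u => by ring
        simp_rw [h3, Finset.sum_add_distrib, Finset.sum_sub_distrib, ← Finset.mul_sum,
          ← Finset.sum_mul, hQ.2]
        have h4 : ∑ u, Q u * w₁ u v ^ 2 ≤ ∑ u, κ * out v * (Q u * w₁ u v) := by
          refine Finset.sum_le_sum fun u _ => ?_
          have := mul_le_mul_of_nonneg_left (hw₁κ u v) (mul_nonneg (hQ.1 u) (hw₁0 u v))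
          nlinarith
        rw [← Finset.mul_sum] at h4
        have h5 : ∑ u, Q u * w₁ u v = μ₁ v := rfl
        have h6 : κ * out v * μ₁ v ≤ κ * out v * out v :=
          mul_le_mul_of_nonneg_left (by linarith [hμ v, hμ₂0 v]) (mul_nonneg hκ (hout0 v))
        rw [h5] at h4 ⊢
        nlinarith [sq_nonneg (μ₁ v)]
      rw [Finset.sum_const, Finset.card_univ, Fintype.card_fin, nsmul_eq_mul, mul_pow,
        Real.sq_sqrt (by positivity)]
      calc ((L : ℝ)⁻¹) ^ 2 * (L * ∑ u, Q u * (w₁ u v - μ₁ v) ^ 2)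
          = (L : ℝ)⁻¹ * ∑ u, Q u * (w₁ u v - μ₁ v) ^ 2 := by field_simp
        _ ≤ (L : ℝ)⁻¹ * (κ * out v ^ 2) := by gcongr
        _ = κ / L * out v ^ 2 := by ring
    · intro _
      simp_rw [mul_sub, Finset.sum_sub_distrib, ← Finset.sum_mul, hQ.2, one_mul]
      simp [hμ₁]
  have hdev₂ : ∀ v, ∑ s : Fin L → U, piWt (fun _ => Q) s * ((L : ℝ)⁻¹ * ∑ l, w₂ (s l) v)
      = μ₂ v := by
    intro v
    have h1 : ∀ s : Fin L → U, piWt (fun _ => Q) s * ((L : ℝ)⁻¹ * ∑ l, w₂ (s l) v)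
        = (L : ℝ)⁻¹ * ∑ l, piWt (fun _ => Q) s * w₂ (s l) v := by
      intro s
      rw [← Finset.mul_sum]
      ring
    simp_rw [h1]
    rw [← Finset.mul_sum, Finset.sum_comm]
    simp_rw [fun l : Fin L => sum_piWt_mul_apply hQ1 l (fun u => w₂ u v)]
    rw [Finset.sum_const, Finset.card_univ, Fintype.card_fin, nsmul_eq_mul]
    field_simp
    rfl
  have hpt : ∀ (s : Fin L → U) (v : V), |out v - (L : ℝ)⁻¹ * ∑ l, w (s l) v|
      ≤ |(L : ℝ)⁻¹ * ∑ l, (w₁ (s l) v - μ₁ v)| + (L : ℝ)⁻¹ * ∑ l, w₂ (s l) v + μ₂ v := by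
    intro s v
    have h1 : out v - (L : ℝ)⁻¹ * ∑ l, w (s l) v
        = -((L : ℝ)⁻¹ * ∑ l, (w₁ (s l) v - μ₁ v)) - (L : ℝ)⁻¹ * ∑ l, w₂ (s l) v + μ₂ v := by
      simp_rw [hsplit, Finset.sum_add_distrib, Finset.sum_sub_distrib, hμ v]
      rw [Finset.sum_const, Finset.card_univ, Fintype.card_fin, nsmul_eq_mul]
      field_simp
      ring
    have h2 : 0 ≤ (L : ℝ)⁻¹ * ∑ l, w₂ (s l) v :=
      mul_nonneg (by positivity) (Finset.sum_nonneg fun l _ => hw₂0 _ _)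
    rw [h1]
    refine (abs_add_le _ _).trans ?_
    rw [abs_of_nonneg (hμ₂0 v)]
    refine add_le_add_left ((abs_sub _ _).trans ?_) _
    rw [abs_neg, abs_of_nonneg h2]
  refine hpmf.exists_le ?_
  calc ∑ s : Fin L → U, piWt (fun _ => Q) s * ∑ v, |out v - (L : ℝ)⁻¹ * ∑ l, w (s l) v|
      ≤ ∑ s : Fin L → U, piWt (fun _ => Q) s * ∑ v,
          (|(L : ℝ)⁻¹ * ∑ l, (w₁ (s l) v - μ₁ v)| + (L : ℝ)⁻¹ * ∑ l, w₂ (s l) v + μ₂ v) :=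
        Finset.sum_le_sum fun s _ =>
          mul_le_mul_of_nonneg_left (Finset.sum_le_sum fun v _ => hpt s v) (hpmf.1 s)
    _ = ∑ v, (∑ s : Fin L → U, piWt (fun _ => Q) s * |(L : ℝ)⁻¹ * ∑ l, (w₁ (s l) v - μ₁ v)|
          + ∑ s : Fin L → U, piWt (fun _ => Q) s * ((L : ℝ)⁻¹ * ∑ l, w₂ (s l) v) + μ₂ v) := by
        simp_rw [Finset.mul_sum (s := (Finset.univ : Finset V))]
        rw [Finset.sum_comm]
        refine Finset.sum_congr rfl fun v _ => ?_
        simp_rw [mul_add, Finset.sum_add_distrib, ← Finset.sum_mul, hpmf.2, one_mul]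
    _ ≤ ∑ v, (√(κ / L) * out v + μ₂ v + μ₂ v) := by
        refine Finset.sum_le_sum fun v _ => ?_
        rw [hdev₂ v]
        linarith [hdev v]
    _ ≤ 2 * ε + √(κ / L) := by
        rw [Finset.sum_add_distrib, Finset.sum_add_distrib, ← Finset.mul_sum, hout1]
        linarith

section InformationDensity

variable {X Y : Type*} [Fintype X] [Fintype Y]

/-- The output distribution `P W` of the channel `W` under the input distribution `P`. -/
def outDist {X Y : Type*} [Fintype X] (P : X → ℝ) (W : X → Y → ℝ) (y : Y) : ℝ :=
  ∑ x, P x * W x y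

/-- The information density of `P` and `W`, set to `0` off the support of the joint law. -/
def infoDensity {X Y : Type*} [Fintype X] (P : X → ℝ) (W : X → Y → ℝ) (x : X) (y : Y) : ℝ :=
  if P x * W x y = 0 then 0 else Real.log (W x y / outDist P W y)

theorem outDist_nonneg {P : X → ℝ} {W : X → Y → ℝ} (hP : IsPMF P) (hW : IsChannel W) (y : Y) :
    0 ≤ outDist P W y :=
  Finset.sum_nonneg fun x _ => mul_nonneg (hP.1 x) (hW.1 x y)

theorem isPMF_outDist {P : X → ℝ} {W : X → Y → ℝ} (hP : IsPMF P) (hW : IsChannel W) :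
    IsPMF (outDist P W) := by
  refine ⟨outDist_nonneg hP hW, ?_⟩
  unfold outDist
  rw [Finset.sum_comm]
  simp_rw [← Finset.mul_sum, hW.2, mul_one, hP.2]

theorem IsPMF.le_one {A : Type*} [Fintype A] {p : A → ℝ} (hp : IsPMF p) (a : A) : p a ≤ 1 := by
  rw [← hp.2]
  exact Finset.single_le_sum (fun b _ => hp.1 b) (Finset.mem_univ a)

theorem IsChannel.isPMF {X Y : Type*} [Fintype Y] {W : X → Y → ℝ} (hW : IsChannel W) (x : X) : IsPMF (W x) :=
  ⟨hW.1 x, hW.2 x⟩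

theorem mul_le_outDist {P : X → ℝ} {W : X → Y → ℝ} (hP : IsPMF P) (hW : IsChannel W)
    (x : X) (y : Y) : P x * W x y ≤ outDist P W y :=
  Finset.single_le_sum (f := fun x => P x * W x y) (fun x _ => mul_nonneg (hP.1 x) (hW.1 x y))
    (Finset.mem_univ x)

theorem mutInf_eq_sum_infoDensity (P : X → ℝ) (W : X → Y → ℝ) :
    mutInf P W = ∑ x, ∑ y, P x * (W x y * infoDensity P W x y) := by
  unfold mutInf infoDensity outDist
  refine Finset.sum_congr rfl fun x _ => Finset.sum_congr rfl fun y _ => ?_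
  split_ifs
  · simp
  · ring

theorem mutInf_eq_negMulLog {P : X → ℝ} {W : X → Y → ℝ} (hP : IsPMF P) (hW : IsChannel W) :
    mutInf P W = ∑ y, Real.negMulLog (∑ x, P x * W x y)
      - ∑ x, ∑ y, P x * Real.negMulLog (W x y) := by
  have h : ∀ y, Real.negMulLog (∑ x, P x * W x y)
      = ∑ x, -(P x * W x y * Real.log (∑ x, P x * W x y)) := by
    intro y
    rw [Real.negMulLog, Finset.sum_neg_distrib, ← Finset.sum_mul]
    ring
  simp_rw [h]
  rw [Finset.sum_comm, ← Finset.sum_sub_distrib]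
  unfold mutInf
  refine Finset.sum_congr rfl fun x _ => ?_
  rw [← Finset.sum_sub_distrib]
  refine Finset.sum_congr rfl fun y _ => ?_
  split_ifs with h0
  · rw [h0]
    rcases mul_eq_zero.1 h0 with h1 | h1 <;> simp [h1, Real.negMulLog]
  · have h1 : W x y ≠ 0 := right_ne_zero_of_mul h0
    have h2 : 0 < P x * W x y := lt_of_le_of_ne (mul_nonneg (hP.1 x) (hW.1 x y)) (Ne.symm h0)
    have h3 : ∑ x, P x * W x y ≠ 0 := (h2.trans_le (mul_le_outDist hP hW x y)).ne'
    rw [Real.log_div h1 h3, Real.negMulLog]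
    ring

theorem continuousOn_mutInf {W : X → Y → ℝ} (hW : IsChannel W) :
    ContinuousOn (fun P => mutInf P W) {P : X → ℝ | IsPMF P} := by
  refine ContinuousOn.congr (f := fun P : X → ℝ => ∑ y, Real.negMulLog (∑ x, P x * W x y)
      - ∑ x, ∑ y, P x * Real.negMulLog (W x y)) ?_ fun P hP => mutInf_eq_negMulLog hP hW
  refine Continuous.continuousOn ?_
  fun_prop

theorem mutInf_nonneg {P : X → ℝ} {W : X → Y → ℝ} (hP : IsPMF P) (hW : IsChannel W) :
    0 ≤ mutInf P W := by
  have h : ∑ x, ∑ y, (P x * W x y - P x * outDist P W y) ≤ mutInf P W := by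
    unfold mutInf
    refine Finset.sum_le_sum fun x _ => Finset.sum_le_sum fun y _ => ?_
    have h0 := mul_nonneg (hP.1 x) (outDist_nonneg hP hW y)
    split_ifs with h1
    · linarith
    · have h2 : 0 < P x * W x y := lt_of_le_of_ne (mul_nonneg (hP.1 x) (hW.1 x y)) (Ne.symm h1)
      have h3 : 0 < outDist P W y := h2.trans_le (mul_le_outDist hP hW x y)
      have h4 : 0 < W x y := lt_of_le_of_ne (hW.1 x y) (Ne.symm (right_ne_zero_of_mul h1))
      have h5 := Real.one_sub_inv_le_log_of_pos (div_pos h4 h3)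
      have h6 := mul_le_mul_of_nonneg_left h5 h2.le
      refine le_trans (le_of_eq ?_) h6
      field_simp
  refine le_trans (le_of_eq ?_) h
  simp_rw [Finset.sum_sub_distrib, ← Finset.mul_sum, hW.2, (isPMF_outDist hP hW).2]
  simp

theorem mul_log_sq_le {t : ℝ} (h0 : 0 ≤ t) (h1 : t ≤ 1) : t * Real.log t ^ 2 ≤ 4 := by
  rcases h0.eq_or_lt with rfl | h0
  · simp
  have h := Real.abs_log_mul_self_rpow_lt t (1 / 2) h0 h1 (by norm_num)
  rw [← Real.sqrt_eq_rpow] at h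
  have h2 : (Real.log t * √t) ^ 2 ≤ 2 ^ 2 := by
    rw [← sq_abs]
    exact pow_le_pow_left₀ (abs_nonneg _) (by linarith) 2
  rw [mul_pow, Real.sq_sqrt h0.le] at h2
  linarith

theorem sum_mul_infoDensity_sq_le {P : X → ℝ} {W : X → Y → ℝ} (hP : IsPMF P)
    (hW : IsChannel W) :
    ∑ x, ∑ y, P x * (W x y * infoDensity P W x y ^ 2)
      ≤ 16 * (Fintype.card X * Fintype.card Y) := by
  have h : ∀ x y, P x * (W x y * infoDensity P W x y ^ 2) ≤ 16 := by
    intro x y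
    unfold infoDensity
    split_ifs with h1
    · norm_num
    · have h2 : 0 < P x * W x y := lt_of_le_of_ne (mul_nonneg (hP.1 x) (hW.1 x y)) (Ne.symm h1)
      have h3 : 0 < outDist P W y := h2.trans_le (mul_le_outDist hP hW x y)
      have h4 : W x y ≠ 0 := right_ne_zero_of_mul h1
      rw [Real.log_div h4 h3.ne']
      have h5 : P x * (W x y * Real.log (W x y) ^ 2) ≤ 1 * 4 :=
        mul_le_mul (hP.le_one x) (mul_log_sq_le (hW.1 x y) ((hW.isPMF x).le_one y))
          (mul_nonneg (hW.1 x y) (sq_nonneg _)) zero_le_one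
      have h6 : P x * W x y * Real.log (outDist P W y) ^ 2 ≤ 4 :=
        (mul_le_mul_of_nonneg_right (mul_le_outDist hP hW x y) (sq_nonneg _)).trans
          (mul_log_sq_le h3.le ((isPMF_outDist hP hW).le_one y))
      nlinarith [mul_nonneg h2.le (sq_nonneg (Real.log (W x y) + Real.log (outDist P W y)))]
  calc _ ≤ ∑ _x : X, ∑ _y : Y, (16 : ℝ) :=
        Finset.sum_le_sum fun x _ => Finset.sum_le_sum fun y _ => h x y
    _ = _ := by
        simp only [Finset.sum_const, Finset.card_univ, nsmul_eq_mul]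
        ring

theorem Wn_eq_exp_sum_infoDensity {P : X → ℝ} {W : X → Y → ℝ} (hP : IsPMF P)
    (hW : IsChannel W) {n : ℕ} {x : Fin n → X} {y : Fin n → Y}
    (h : ∀ i, P (x i) * W (x i) (y i) ≠ 0) :
    Wn W n x y = Real.exp (∑ i, infoDensity P W (x i) (y i)) * ∏ i, outDist P W (y i) := by
  rw [Real.exp_sum, ← Finset.prod_mul_distrib]
  refine Finset.prod_congr rfl fun i _ => ?_
  have h2 : 0 < P (x i) * W (x i) (y i) :=
    lt_of_le_of_ne (mul_nonneg (hP.1 _) (hW.1 _ _)) (h i).symm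
  have h3 : 0 < outDist P W (y i) := h2.trans_le (mul_le_outDist hP hW _ _)
  have h4 : 0 < W (x i) (y i) := lt_of_le_of_ne (hW.1 _ _) (right_ne_zero_of_mul (h i)).symm
  rw [infoDensity, if_neg (h i), Real.exp_log (div_pos h4 h3)]
  field_simp

theorem prod_outDist_nonneg {P : X → ℝ} {W : X → Y → ℝ} (hP : IsPMF P) (hW : IsChannel W)
    {n : ℕ} (y : Fin n → Y) : 0 ≤ ∏ i, outDist P W (y i) :=
  Finset.prod_nonneg fun i _ => outDist_nonneg hP hW (y i)

theorem isChannel_Wn {X Y : Type*} [Fintype Y] {W : X → Y → ℝ} (hW : IsChannel W) (n : ℕ) : IsChannel (Wn W n) :=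
  ⟨fun x => (isPMF_piWt fun i => hW.isPMF (x i)).1,
    fun x => (isPMF_piWt fun i => hW.isPMF (x i)).2⟩

/-- The empirical distribution of a word. -/
def empDist {X : Type*} {n : ℕ} (x : Fin n → X) (a : X) : ℝ :=
  (#{i | x i = a} : ℝ) / n

theorem sum_apply_eq_empDist {n : ℕ} (hn : 0 < n) (x : Fin n → X) (f : X → ℝ) :
    ∑ i, f (x i) = n * ∑ a, empDist x a * f a := by
  have hn' : (n : ℝ) ≠ 0 := by exact_mod_cast hn.ne'
  have h : ∀ i, f (x i) = ∑ a, if x i = a then f a else 0 := fun i => by simp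
  simp_rw [h]
  rw [Finset.sum_comm, Finset.mul_sum]
  refine Finset.sum_congr rfl fun a _ => ?_
  rw [← Finset.sum_filter, Finset.sum_const, nsmul_eq_mul, empDist]
  field_simp

theorem isPMF_empDist {n : ℕ} (hn : 0 < n) (x : Fin n → X) : IsPMF (empDist x) := by
  have hn' : (n : ℝ) ≠ 0 := by exact_mod_cast hn.ne'
  refine ⟨fun a => by unfold empDist; positivity, ?_⟩
  have h := sum_apply_eq_empDist hn x fun _ => 1
  simp only [mul_one, Finset.sum_const, Finset.card_univ, Fintype.card_fin, nsmul_eq_mul] at h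
  have h' : (n : ℝ) * (∑ a, empDist x a) = n * 1 := by linarith
  exact mul_left_cancel₀ hn' h'

theorem empDist_apply_pos {X : Type*} {n : ℕ} (x : Fin n → X) (i : Fin n) : 0 < empDist x (x i) := by
  have hn : 0 < n := i.pos
  have h : 0 < #{j | x j = x i} := Finset.card_pos.2 ⟨i, by simp⟩
  unfold empDist
  positivity

theorem card_image_empDist_le (n : ℕ) :
    #(Finset.univ.image (empDist : (Fin n → X) → X → ℝ)) ≤ (n + 1) ^ Fintype.card X := by
  have h : Finset.univ.image (empDist : (Fin n → X) → X → ℝ)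
      ⊆ Finset.univ.image fun (c : X → Fin (n + 1)) (a : X) => ((c a : ℕ) : ℝ) / n := by
    intro P hP
    obtain ⟨x, _, rfl⟩ := Finset.mem_image.1 hP
    refine Finset.mem_image.2 ⟨fun a => ⟨#{i | x i = a}, ?_⟩, Finset.mem_univ _, rfl⟩
    exact Nat.lt_succ_of_le ((Finset.card_le_univ _).trans_eq (Fintype.card_fin n))
  refine (Finset.card_le_card h).trans (Finset.card_image_le.trans ?_)
  simp

/-- Given the input word `x` of type `P`, the normalised information density rarely exceeds
`I(P, W)`. -/
theorem sum_Wn_infoDensity_upper_tail {W : X → Y → ℝ} (hW : IsChannel W) {n : ℕ} (hn : 0 < n)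
    (x : Fin n → X) {δ : ℝ} (hδ : 0 < δ) :
    ∑ y with Real.exp (n * (mutInf (empDist x) W + δ)) * ∏ i, outDist (empDist x) W (y i)
        < Wn W n x y, Wn W n x y
      ≤ 16 * (Fintype.card X * Fintype.card Y) / (n * δ ^ 2) := by
  have hn' : (0 : ℝ) < n := by exact_mod_cast hn
  set P := empDist x with hPdef
  have hP : IsPMF P := isPMF_empDist hn x
  have hmean : ∑ i, ∑ y, W (x i) y * infoDensity P W (x i) y = n * mutInf P W := by
    rw [sum_apply_eq_empDist hn x fun a => ∑ y, W a y * infoDensity P W a y,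
      mutInf_eq_sum_infoDensity]
    simp_rw [Finset.mul_sum, ← hPdef]
  have hvar : ∑ i, ∑ y, W (x i) y * infoDensity P W (x i) y ^ 2
      ≤ n * (16 * (Fintype.card X * Fintype.card Y)) := by
    rw [sum_apply_eq_empDist hn x fun a => ∑ y, W a y * infoDensity P W a y ^ 2]
    refine mul_le_mul_of_nonneg_left ?_ hn'.le
    simp_rw [Finset.mul_sum]
    exact sum_mul_infoDensity_sq_le hP hW
  have hcheb := chebyshev_piWt (p := fun i => W (x i)) (fun i => hW.isPMF (x i))
    (fun i => infoDensity P W (x i)) (t := n * δ) (by positivity)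
  have hle : ∑ y with Real.exp (n * (mutInf P W + δ)) * ∏ i, outDist P W (y i) < Wn W n x y,
      Wn W n x y ≤ ∑ y with n * δ ≤ |∑ i, infoDensity P W (x i) (y i)
        - ∑ i, ∑ a, W (x i) a * infoDensity P W (x i) a|, piWt (fun i => W (x i)) y := by
    refine Finset.sum_le_sum_of_subset_of_nonneg ?_ fun y _ _ => (isChannel_Wn hW n).1 x y
    intro y hy
    rw [Finset.mem_filter] at hy ⊢
    refine ⟨Finset.mem_univ _, ?_⟩
    have h0 := prod_outDist_nonneg hP hW y
    have hpos : 0 < Wn W n x y := lt_of_le_of_lt (by positivity) hy.2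
    have hne : ∀ i, P (x i) * W (x i) (y i) ≠ 0 := by
      intro i
      refine mul_ne_zero (empDist_apply_pos x i).ne' ?_
      exact Finset.prod_ne_zero_iff.1 hpos.ne' i (Finset.mem_univ i)
    have h1 := hy.2
    rw [Wn_eq_exp_sum_infoDensity hP hW hne] at h1
    have h2 := Real.exp_lt_exp.1 (lt_of_mul_lt_mul_right h1 h0)
    rw [hmean]
    refine le_trans ?_ (le_abs_self _)
    nlinarith
  refine (hle.trans hcheb).trans ?_
  calc _ ≤ n * (16 * (Fintype.card X * Fintype.card Y)) / (n * δ) ^ 2 := by gcongr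
    _ = _ := by field_simp

/-- Under the i.i.d. joint law, the normalised information density rarely falls below
`I(P, W)`. -/
theorem sum_Wn_infoDensity_lower_tail {P : X → ℝ} {W : X → Y → ℝ} (hP : IsPMF P)
    (hW : IsChannel W) {n : ℕ} (hn : 0 < n) {δ : ℝ} (hδ : 0 < δ) :
    ∑ x : Fin n → X, piWt (fun _ => P) x *
        ∑ y with ¬ Real.exp (n * (mutInf P W - δ)) * ∏ i, outDist P W (y i) ≤ Wn W n x y,
          Wn W n x y
      ≤ 16 * (Fintype.card X * Fintype.card Y) / (n * δ ^ 2) := by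
  have hn' : (0 : ℝ) < n := by exact_mod_cast hn
  set p : X × Y → ℝ := fun a => P a.1 * W a.1 a.2 with hp
  set f : X × Y → ℝ := fun a => infoDensity P W a.1 a.2 with hf
  have hpm : IsPMF p := by
    refine ⟨fun a => mul_nonneg (hP.1 _) (hW.1 _ _), ?_⟩
    rw [Fintype.sum_prod_type]
    simp_rw [hp, ← Finset.mul_sum, hW.2, mul_one, hP.2]
  have hcheb := chebyshev_piWt (ι := Fin n) (p := fun _ => p) (fun _ => hpm)
    (fun _ => f) (t := n * δ) (by positivity)
  have hmean : ∑ a, p a * f a = mutInf P W := by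
    rw [Fintype.sum_prod_type, mutInf_eq_sum_infoDensity]
    simp_rw [hp, hf, mul_assoc]
  have hvar : ∑ a, p a * f a ^ 2 ≤ 16 * (Fintype.card X * Fintype.card Y) := by
    rw [Fintype.sum_prod_type]
    simp_rw [hp, hf, mul_assoc]
    exact sum_mul_infoDensity_sq_le hP hW
  simp only [Finset.sum_const, Finset.card_univ, Fintype.card_fin, nsmul_eq_mul, hmean] at hcheb
  have hcheb' : ∑ ω : Fin n → X × Y with n * δ ≤ |∑ i, f (ω i) - n * mutInf P W|,
      piWt (fun _ => p) ω ≤ 16 * (Fintype.card X * Fintype.card Y) / (n * δ ^ 2) := by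
    refine hcheb.trans ?_
    calc _ ≤ n * (16 * (Fintype.card X * Fintype.card Y)) / (n * δ) ^ 2 := by gcongr
      _ = _ := by field_simp
  refine le_trans ?_ hcheb'
  rw [Finset.sum_filter, ← (Equiv.arrowProdEquivProdArrow (Fin n) (fun _ => X)
    (fun _ => Y)).symm.sum_comp, Fintype.sum_prod_type]
  refine Finset.sum_le_sum fun x _ => ?_
  rw [Finset.mul_sum, Finset.sum_filter]
  refine Finset.sum_le_sum fun y _ => ?_
  have hwt : piWt (fun _ => p) ((Equiv.arrowProdEquivProdArrow (Fin n) (fun _ => X)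
      (fun _ => Y)).symm (x, y)) = piWt (fun _ => P) x * Wn W n x y := by
    simp [piWt, Wn, hp, Equiv.arrowProdEquivProdArrow, Finset.prod_mul_distrib]
  have h0 : 0 ≤ piWt (fun _ => P) x * Wn W n x y :=
    mul_nonneg ((isPMF_piWt fun _ => hP).1 x) ((isChannel_Wn hW n).1 x y)
  rw [hwt]
  by_cases h1 : Real.exp (n * (mutInf P W - δ)) * ∏ i, outDist P W (y i) ≤ Wn W n x y
  · rw [if_neg (not_not.2 h1)]
    split_ifs
    exacts [h0, le_rfl]
  rw [if_pos h1]
  split_ifs with h2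
  · exact le_rfl
  · refine le_of_eq ?_
    by_contra hne
    have hne' : ∀ i, P (x i) * W (x i) (y i) ≠ 0 := by
      intro i
      refine mul_ne_zero ?_ ?_
      · exact Finset.prod_ne_zero_iff.1 (left_ne_zero_of_mul hne) i (Finset.mem_univ i)
      · exact Finset.prod_ne_zero_iff.1 (right_ne_zero_of_mul hne) i (Finset.mem_univ i)
    rw [not_le, Wn_eq_exp_sum_infoDensity hP hW hne'] at h1
    have h3 := Real.exp_lt_exp.1 (lt_of_mul_lt_mul_right h1 (prod_outDist_nonneg hP hW y))
    apply h2
    have h4 : ∑ i, f ((Equiv.arrowProdEquivProdArrow (Fin n) (fun _ => X)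
      (fun _ => Y)).symm (x, y) i) = ∑ i, infoDensity P W (x i) (y i) := rfl
    rw [h4, abs_sub_comm]
    refine le_trans ?_ (le_abs_self _)
    nlinarith

end InformationDensity

section Converse

variable {X Y : Type*} [Fintype X] [Fintype Y]

/-- Output laws of input laws supported on words whose types have mutual information at most `r`
are reproduced by lists of roughly `exp (n r)` words. -/
theorem exists_list_output_close_of_type {W : X → Y → ℝ} (hW : IsChannel W) {n : ℕ} (hn : 0 < n)
    {r δ θ : ℝ} (hδ : 0 < δ) (hθ : 0 < θ) {Q : (Fin n → X) → ℝ} (hQ : IsPMF Q)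
    (hsupp : ∀ x, Q x ≠ 0 → mutInf (empDist x) W ≤ r) {L : ℕ} (hL : 0 < L) :
    ∃ s : Fin L → Fin n → X,
      ∑ y, |∑ x, Q x * Wn W n x y - (L : ℝ)⁻¹ * ∑ l, Wn W n (s l) y|
        ≤ 2 * (θ + 16 * (Fintype.card X * Fintype.card Y) / (n * δ ^ 2))
          + √((n + 1) ^ Fintype.card X * Real.exp (n * (r + δ)) / θ / L) := by
  have hn' : (0 : ℝ) < n := by exact_mod_cast hn
  have hWn := isChannel_Wn hW n
  refine exists_list_output_close hQ hWn (by positivity) ?_ hL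
  set T : ℝ := (n + 1) ^ Fintype.card X with hT
  have hT0 : 0 < T := by positivity
  set out : (Fin n → Y) → ℝ := fun y => ∑ x, Q x * Wn W n x y with hout
  have hout0 : ∀ y, 0 ≤ out y := fun y =>
    Finset.sum_nonneg fun x _ => mul_nonneg (hQ.1 x) (hWn.1 x y)
  set types := Finset.univ.image (empDist : (Fin n → X) → X → ℝ) with htypes
  have htypes_pmf : ∀ P ∈ types, IsPMF P := by
    intro P hP
    obtain ⟨x, _, rfl⟩ := Finset.mem_image.1 hP
    exact isPMF_empDist hn x
  set q : (Fin n → Y) → ℝ := fun y => ∑ P ∈ types, ∏ i, outDist P W (y i) with hq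
  have hq1 : ∑ y, q y ≤ T := by
    rw [hq, Finset.sum_comm]
    have h : ∀ P ∈ types, ∑ y : Fin n → Y, ∏ i, outDist P W (y i) = 1 := fun P hP =>
      (isPMF_piWt fun _ : Fin n => isPMF_outDist (htypes_pmf P hP) hW).2
    rw [Finset.sum_congr rfl h]
    simp only [Finset.sum_const, nsmul_eq_mul, mul_one]
    rw [hT]
    exact_mod_cast card_image_empDist_le n
  have hq0 : ∀ y, 0 ≤ q y := fun y =>
    Finset.sum_nonneg fun P hP => prod_outDist_nonneg (htypes_pmf P hP) hW y
  have hmass : ∑ x, Q x * ∑ y with out y < θ / T * q y, Wn W n x y ≤ θ := by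
    simp_rw [Finset.mul_sum]
    rw [Finset.sum_comm]
    calc ∑ y with out y < θ / T * q y, out y
        ≤ ∑ y with out y < θ / T * q y, θ / T * q y :=
          Finset.sum_le_sum fun y hy => (Finset.mem_filter.1 hy).2.le
      _ ≤ ∑ y, θ / T * q y :=
          Finset.sum_le_sum_of_subset_of_nonneg (Finset.filter_subset _ _)
            fun y _ _ => mul_nonneg (by positivity) (hq0 y)
      _ ≤ θ / T * T := by
          rw [← Finset.mul_sum]
          gcongr
      _ = θ := by field_simp
  set C : ℝ := 16 * (Fintype.card X * Fintype.card Y) / (n * δ ^ 2) with hC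
  have htail : ∑ x, Q x * ∑ y with Real.exp (n * (mutInf (empDist x) W + δ))
      * ∏ i, outDist (empDist x) W (y i) < Wn W n x y, Wn W n x y ≤ C := by
    calc _ ≤ ∑ x, Q x * C := Finset.sum_le_sum fun x _ =>
          mul_le_mul_of_nonneg_left (sum_Wn_infoDensity_upper_tail hW hn x hδ) (hQ.1 x)
      _ = C := by rw [← Finset.sum_mul, hQ.2, one_mul]
  refine le_trans ?_ (add_le_add hmass htail)
  rw [← Finset.sum_add_distrib]
  refine Finset.sum_le_sum fun x _ => ?_
  by_cases hx : Q x = 0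
  · simp [hx]
  rw [← mul_add]
  refine mul_le_mul_of_nonneg_left ?_ (hQ.1 x)
  rw [← Finset.sum_union_inter]
  refine le_add_of_le_of_nonneg ?_ (Finset.sum_nonneg fun y _ => hWn.1 x y)
  refine Finset.sum_le_sum_of_subset_of_nonneg ?_ fun y _ _ => hWn.1 x y
  intro y hy
  simp only [Finset.mem_union, Finset.mem_filter, Finset.mem_univ, true_and] at hy ⊢
  by_contra! hcon
  obtain ⟨h1, h2⟩ := hcon
  have h3 : ∏ i, outDist (empDist x) W (y i) ≤ q y :=
    Finset.single_le_sum (f := fun P => ∏ i, outDist P W (y i))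
      (fun P hP => prod_outDist_nonneg (htypes_pmf P hP) hW y)
      (Finset.mem_image_of_mem _ (Finset.mem_univ x))
  have h4 : T * Real.exp (n * (r + δ)) / θ * (θ / T * q y) ≤ T * Real.exp (n * (r + δ)) / θ * out y :=
    mul_le_mul_of_nonneg_left h1 (by positivity)
  have h5 : T * Real.exp (n * (r + δ)) / θ * (θ / T * q y) = Real.exp (n * (r + δ)) * q y := by
    field_simp
  have h6 : Real.exp (n * (mutInf (empDist x) W + δ)) ≤ Real.exp (n * (r + δ)) := by
    have := hsupp x hx
    gcongr
  have h7 : Wn W n x y ≤ Real.exp (n * (r + δ)) * q y :=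
    h2.trans (mul_le_mul h6 h3 (prod_outDist_nonneg (isPMF_empDist hn x) hW y) (by positivity))
  linarith [hy]

/-- Only few messages of an identification code can put non-negligible weight on words whose
types have mutual information at most `r`. -/
theorem card_messages_low_information_le {W : X → Y → ℝ} (hW : IsChannel W) {n : ℕ} (hn : 0 < n)
    {r δ : ℝ} (hδ : 0 < δ) {M : Type*} [Fintype M] {Q : M → (Fin n → X) → ℝ}
    (hQ : ∀ m, IsPMF (Q m)) {D : M → Finset (Fin n → Y)}
    (hD : IDCodeErr n W Q D (1 / 100) (1 / 100)) {L : ℕ} (hL : 0 < L)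
    (hη : 2 * (1 / 100 + 16 * (Fintype.card X * Fintype.card Y) / (n * δ ^ 2))
          + √((n + 1) ^ Fintype.card X * Real.exp (n * (r + δ)) / (1 / 100) / L) ≤ (1 / 4 : ℝ)) :
    #{m | 1 / 10 ≤ ∑ x with mutInf (empDist x) W ≤ r, Q m x} ≤ (Fintype.card X ^ n) ^ L := by
  have hWn := isChannel_Wn hW n
  set S : Finset M := {m | 1 / 10 ≤ ∑ x with mutInf (empDist x) W ≤ r, Q m x} with hS
  set B : Finset (Fin n → X) := {x | mutInf (empDist x) W ≤ r} with hB
  set q : M → ℝ := fun m => ∑ x ∈ B, Q m x with hq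
  set Q' : M → (Fin n → X) → ℝ := fun m x => if x ∈ B then Q m x / q m else 0 with hQ'
  have hqS : ∀ m ∈ S, 1 / 10 ≤ q m := fun m hm => (Finset.mem_filter.1 hm).2
  have hQ'pmf : ∀ m ∈ S, IsPMF (Q' m) := by
    intro m hm
    have h1 := hqS m hm
    refine ⟨fun x => ?_, ?_⟩
    · simp only [hQ']
      split_ifs
      · exact div_nonneg ((hQ m).1 x) (by linarith)
      · exact le_rfl
    · simp only [hQ']
      rw [Finset.sum_ite_mem, Finset.univ_inter, ← Finset.sum_div]
      exact div_self (by linarith)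
  have hQ'le : ∀ m ∈ S, ∀ g : (Fin n → X) → ℝ, (∀ x, 0 ≤ g x) →
      ∑ x, Q' m x * g x ≤ 10 * ∑ x, Q m x * g x := by
    intro m hm g hg
    have h1 := hqS m hm
    rw [Finset.mul_sum]
    refine Finset.sum_le_sum fun x _ => ?_
    have h2 := mul_nonneg ((hQ m).1 x) (hg x)
    simp only [hQ']
    split_ifs
    · rw [div_mul_eq_mul_div, div_le_iff₀ (by linarith)]
      nlinarith
    · linarith
  have hlist : ∀ m : M, ∃ s : Fin L → Fin n → X, m ∈ S →
      ∑ y, |∑ x, Q' m x * Wn W n x y - (L : ℝ)⁻¹ * ∑ l, Wn W n (s l) y| ≤ 1 / 4 := by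
    intro m
    by_cases hm : m ∈ S
    · obtain ⟨s, hs⟩ := exists_list_output_close_of_type hW hn (r := r) hδ
        (by norm_num : (0 : ℝ) < 1 / 100) (hQ'pmf m hm) (by
          intro x hx
          by_contra hcon
          refine hx ?_
          simp only [hQ', hB, Finset.mem_filter, Finset.mem_univ, true_and]
          rw [if_neg hcon]) hL
      exact ⟨s, fun _ => hs.trans hη⟩
    · obtain ⟨x⟩ : Nonempty (Fin n → X) := by
        by_contra hne
        rw [not_nonempty_iff] at hne
        have := (hQ m).2
        simp at this
      exact ⟨fun _ => x, fun h => absurd h hm⟩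
  choose s hs using hlist
  have hinj : Set.InjOn s S := by
    intro m hm m' hm' heq
    by_contra hne
    have h1 : ∑ x, Q' m x * ∑ y ∈ (D m)ᶜ, Wn W n x y ≤ 1 / 10 := by
      have := hQ'le m hm (fun x => ∑ y ∈ (D m)ᶜ, Wn W n x y)
        fun x => Finset.sum_nonneg fun y _ => hWn.1 x y
      linarith [hD.1 m]
    have h2 : ∑ x, Q' m' x * ∑ y ∈ D m, Wn W n x y ≤ 1 / 10 := by
      have := hQ'le m' hm' (fun x => ∑ y ∈ D m, Wn W n x y)
        fun x => Finset.sum_nonneg fun y _ => hWn.1 x y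
      linarith [hD.2 m' m (Ne.symm hne)]
    have h3 : ∑ x, Q' m x * ∑ y ∈ D m, Wn W n x y
        + ∑ x, Q' m x * ∑ y ∈ (D m)ᶜ, Wn W n x y = 1 := by
      rw [← Finset.sum_add_distrib]
      simp_rw [← mul_add, Finset.sum_add_sum_compl, hWn.2, mul_one]
      exact (hQ'pmf m hm).2
    have h4 : ∀ m'' : M, ∑ x, Q' m'' x * ∑ y ∈ D m, Wn W n x y
        = ∑ y ∈ D m, ∑ x, Q' m'' x * Wn W n x y := by
      intro m''
      simp_rw [Finset.mul_sum]
      exact Finset.sum_comm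
    rw [h4] at h2 h3
    have h5 : ∑ y ∈ D m, ∑ x, Q' m x * Wn W n x y - ∑ y ∈ D m, ∑ x, Q' m' x * Wn W n x y
        ≤ 1 / 4 + 1 / 4 := by
      have hm1 := hs m hm
      have hm2 := hs m' hm'
      rw [← heq] at hm2
      refine le_trans ?_ (add_le_add hm1 hm2)
      rw [← Finset.sum_sub_distrib, ← Finset.sum_add_distrib]
      refine le_trans (Finset.sum_le_sum fun y _ => ?_)
        (Finset.sum_le_sum_of_subset_of_nonneg (Finset.subset_univ (D m))
          fun y _ _ => add_nonneg (abs_nonneg _) (abs_nonneg _))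
      have ha := le_abs_self (∑ x, Q' m x * Wn W n x y - (L : ℝ)⁻¹ * ∑ l, Wn W n (s m l) y)
      have hb := neg_abs_le (∑ x, Q' m' x * Wn W n x y - (L : ℝ)⁻¹ * ∑ l, Wn W n (s m l) y)
      linarith
    linarith
  have hcard := Finset.card_le_card_of_injOn (t := Finset.univ) s (fun _ _ => by simp) hinj
  simpa using hcard

theorem tendsto_natCast_succ_pow_mul_exp_neg (d : ℕ) {c : ℝ} (hc : 0 < c) :
    Filter.Tendsto (fun n : ℕ => ((n : ℝ) + 1) ^ d * Real.exp (-(n * c))) Filter.atTop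
      (nhds 0) := by
  have h := (isLittleO_pow_exp_pos_mul_atTop (k := d) hc).tendsto_div_nhds_zero
  have h2 : Filter.Tendsto (fun n : ℕ => ((n : ℝ) + 1)) Filter.atTop Filter.atTop :=
    Filter.tendsto_atTop_add_const_right _ _ tendsto_natCast_atTop_atTop
  have h3 := (h.comp h2).mul_const (Real.exp c)
  rw [zero_mul] at h3
  refine h3.congr fun n => ?_
  simp only [Function.comp]
  rw [div_mul_eq_mul_div, div_eq_iff (Real.exp_pos _).ne', mul_assoc, ← Real.exp_add]
  congr 2
  ring

theorem exp_exp_le_of_le_log_log {n k : ℕ} {R : ℝ} (hR : 0 < R)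
    (h : R ≤ 1 / n * Real.log (Real.log k)) :
    0 < n ∧ 0 < k ∧ Real.exp (Real.exp (n * R)) ≤ k := by
  rcases Nat.eq_zero_or_pos n with rfl | hn
  · simp at h
    linarith
  have hn' : (0 : ℝ) < n := by exact_mod_cast hn
  rw [one_div, inv_mul_eq_div, le_div_iff₀ hn'] at h
  have h0 : 0 < Real.log (Real.log k) := lt_of_lt_of_le (by positivity) h
  have h1 : 0 < Real.log k := by
    refine lt_of_le_of_ne (Real.log_natCast_nonneg k) fun h2 => ?_
    rw [← h2] at h0
    simp at h0
  have h2 : (0 : ℝ) < k := by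
    rcases Nat.eq_zero_or_pos k with rfl | hk
    · simp at h1
    · exact_mod_cast hk
  refine ⟨hn, by exact_mod_cast h2, ?_⟩
  rw [← Real.le_log_iff_exp_le h2, ← Real.le_log_iff_exp_le h1]
  linarith

/-- For an identification code of rate `R`, the average input law puts little weight on words
whose types have mutual information below `R - δ`. -/
theorem eventually_average_low_information_le [Nonempty X] {W : X → Y → ℝ} (hW : IsChannel W)
    {R δ : ℝ} (hδ : 0 < δ) (hδR : δ ≤ R) :
    ∃ n₀ : ℕ, ∀ n : ℕ, n₀ ≤ n → ∀ (k : ℕ) (Q : Fin k → (Fin n → X) → ℝ)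
      (D : Fin k → Finset (Fin n → Y)), (∀ m, IsPMF (Q m)) →
      IDCodeErr n W Q D (1 / 100) (1 / 100) → R ≤ 1 / n * Real.log (Real.log k) →
      (k : ℝ)⁻¹ * ∑ m, ∑ x with mutInf (empDist x) W ≤ R - δ, Q m x ≤ 1 / 5 := by
  have hR : 0 < R := hδ.trans_le hδR
  set d := Fintype.card X with hd
  set C : ℝ := 16 * (Fintype.card X * Fintype.card Y) with hC
  have hCn : Filter.Tendsto (fun n : ℕ => C / (n * (δ / 4) ^ 2)) Filter.atTop (nhds 0) :=
    Filter.Tendsto.const_div_atTop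
      (tendsto_natCast_atTop_atTop.atTop_mul_const (by positivity)) C
  have h2 := (tendsto_natCast_succ_pow_mul_exp_neg d (c := δ / 4) (by positivity)).const_mul 100
  have h3 := (tendsto_natCast_succ_pow_mul_exp_neg 1 (c := δ / 2) (by positivity)).const_mul
    (2 * Real.log d)
  have h4 := (tendsto_natCast_succ_pow_mul_exp_neg 0 hR).const_mul (Real.log 10)
  rw [mul_zero] at h2 h3 h4
  have ev := (hCn.eventually_le_const (by norm_num : (0 : ℝ) < 1 / 100)).and
    ((h2.eventually_le_const (by norm_num : (0 : ℝ) < 1 / 100)).and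
    ((h3.eventually_le_const (by norm_num : (0 : ℝ) < 1 / 2)).and
    (h4.eventually_le_const (by norm_num : (0 : ℝ) < 1 / 2))))
  obtain ⟨n₀, hn₀⟩ := Filter.eventually_atTop.1 ev
  refine ⟨n₀, fun n hn k Q D hQ hD hk => ?_⟩
  obtain ⟨e1, e2, e3, e4⟩ := hn₀ n hn
  obtain ⟨hn0, hk0, hkexp⟩ := exp_exp_le_of_le_log_log hR hk
  have hn' : (0 : ℝ) < n := by exact_mod_cast hn0
  have hk' : (0 : ℝ) < k := by exact_mod_cast hk0
  set E := Real.exp (n * (R - δ + 2 * (δ / 4))) with hE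
  have hE1 : 1 ≤ E := Real.one_le_exp (by nlinarith)
  set L := ⌈E⌉₊ with hL
  have hLE : E ≤ L := Nat.le_ceil E
  have hL2 : (L : ℝ) ≤ 2 * E := by
    have := Nat.ceil_lt_add_one (Real.exp_pos (n * (R - δ + 2 * (δ / 4)))).le
    linarith
  have hL0 : 0 < L := Nat.ceil_pos.2 (Real.exp_pos _)
  have hL0' : (0 : ℝ) < L := by exact_mod_cast hL0
  have hη : 2 * (1 / 100 + 16 * (Fintype.card X * Fintype.card Y) / (n * (δ / 4) ^ 2))
      + √((n + 1) ^ Fintype.card X * Real.exp (n * (R - δ + δ / 4)) / (1 / 100) / L)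
      ≤ (1 / 4 : ℝ) := by
    have hs : √((n + 1) ^ Fintype.card X * Real.exp (n * (R - δ + δ / 4)) / (1 / 100) / L)
        ≤ (1 / 10 : ℝ) := by
      rw [Real.sqrt_le_left (by norm_num), div_le_iff₀ hL0']
      have hx : Real.exp (n * (R - δ + δ / 4)) = E * Real.exp (-(n * (δ / 4))) := by
        rw [hE, ← Real.exp_add]
        congr 1
        ring
      rw [hx]
      have := mul_le_mul_of_nonneg_left e2 (Real.exp_pos (n * (R - δ + 2 * (δ / 4)))).le
      rw [← hE, hd] at this
      nlinarith
    linarith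
  have hcard := card_messages_low_information_le hW hn0 (r := R - δ) (δ := δ / 4)
    (by positivity) hQ hD hL0 hη
  set S : Finset (Fin k) :=
    {m | 1 / 10 ≤ ∑ x with mutInf (empDist x) W ≤ R - δ, Q m x} with hS
  have hd0 : (0 : ℝ) < d := by
    rw [hd]
    exact_mod_cast Fintype.card_pos
  have hSk : (#S : ℝ) ≤ 1 / 10 * k := by
    have h5 : (#S : ℝ) ≤ ((d : ℝ) ^ n) ^ L := by exact_mod_cast hcard
    have h6 : ((d : ℝ) ^ n) ^ L = Real.exp (n * L * Real.log d) := by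
      rw [← pow_mul, mul_comm, ← Real.rpow_natCast, Real.rpow_def_of_pos hd0]
      push_cast
      ring_nf
    have hlogd : 0 ≤ Real.log d := Real.log_natCast_nonneg d
    have h7 : n * L * Real.log d + Real.log 10 ≤ Real.exp (n * R) := by
      have h8 : E = Real.exp (n * R) * Real.exp (-(n * (δ / 2))) := by
        rw [hE, ← Real.exp_add]
        congr 1
        ring
      have h9 : Real.exp (n * R) * Real.exp (-(n * R)) = 1 := by
        rw [← Real.exp_add, add_neg_cancel, Real.exp_zero]
      have h10 : n * L * Real.log d ≤ n * (2 * E) * Real.log d := by gcongr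
      have h11 : n * (2 * E) * Real.log d ≤ (n + 1) * (2 * E) * Real.log d := by
        gcongr
        linarith
      have h12 := mul_le_mul_of_nonneg_left e3 (Real.exp_pos (n * R)).le
      have h13 := mul_le_mul_of_nonneg_left e4 (Real.exp_pos (n * R)).le
      rw [h8] at h10 h11
      simp only [pow_one, pow_zero, one_mul] at h12 h13
      have h14 : Real.exp (n * R) * (Real.log 10 * Real.exp (-(n * R))) = Real.log 10 := by
        rw [mul_left_comm, h9, mul_one]
      rw [h14] at h13
      nlinarith
    have h8 : Real.exp (n * L * Real.log d) * 10 ≤ k := by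
      refine le_trans ?_ hkexp
      calc Real.exp (n * L * Real.log d) * 10
          = Real.exp (n * L * Real.log d + Real.log 10) := by
            rw [Real.exp_add, Real.exp_log (by norm_num)]
        _ ≤ _ := Real.exp_le_exp.2 h7
    rw [h6] at h5
    linarith
  rw [inv_mul_le_iff₀ hk']
  have hpt : ∀ m, ∑ x with mutInf (empDist x) W ≤ R - δ, Q m x
      ≤ 1 / 10 + if m ∈ S then 1 else 0 := by
    intro m
    split_ifs with hm
    · have : ∑ x with mutInf (empDist x) W ≤ R - δ, Q m x ≤ ∑ x, Q m x :=
        Finset.sum_le_sum_of_subset_of_nonneg (Finset.filter_subset _ _)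
          fun x _ _ => (hQ m).1 x
      rw [(hQ m).2] at this
      linarith
    · rw [hS, Finset.mem_filter, not_and, not_le] at hm
      linarith [hm (Finset.mem_univ m)]
  refine (Finset.sum_le_sum fun m _ => hpt m).trans ?_
  rw [Finset.sum_add_distrib, Finset.sum_ite_mem, Finset.univ_inter]
  simp only [Finset.sum_const, Finset.card_univ, Fintype.card_fin, nsmul_eq_mul, mul_one]
  linarith

end Converse

section OuterBound

theorem isPMF_average {A : Type*} [Fintype A] {a b : ℕ} (ha : 0 < a) (hb : 0 < b)
    {Q : Fin a → Fin b → A → ℝ} (hQ : ∀ i j, IsPMF (Q i j)) :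
    IsPMF (fun x => ((a * b : ℕ) : ℝ)⁻¹ * ∑ i, ∑ j, Q i j x) := by
  have ha' : (a : ℝ) ≠ 0 := by exact_mod_cast ha.ne'
  have hb' : (b : ℝ) ≠ 0 := by exact_mod_cast hb.ne'
  refine ⟨fun x => mul_nonneg (by positivity)
    (Finset.sum_nonneg fun i _ => Finset.sum_nonneg fun j _ => (hQ i j).1 x), ?_⟩
  rw [← Finset.mul_sum, Finset.sum_comm]
  have h : ∀ i, ∑ x, ∑ j, Q i j x = b := by
    intro i
    rw [Finset.sum_comm]
    simp_rw [(hQ i _).2]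
    simp
  simp_rw [h]
  simp only [Finset.sum_const, Finset.card_univ, Fintype.card_fin, nsmul_eq_mul]
  push_cast
  field_simp

theorem isChannel_margY {X Y Z : Type*} [Fintype Y] [Fintype Z] {W : X → Y → Z → ℝ}
    (hW : IsBC W) : IsChannel (margY W) :=
  ⟨fun x y => Finset.sum_nonneg fun z _ => hW.1 x y z, hW.2⟩

theorem isChannel_margZ {X Y Z : Type*} [Fintype Y] [Fintype Z] {W : X → Y → Z → ℝ}
    (hW : IsBC W) : IsChannel (margZ W) :=
  ⟨fun x z => Finset.sum_nonneg fun y _ => hW.1 x y z, fun x => by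
    unfold margZ
    rw [Finset.sum_comm]
    exact hW.2 x⟩

theorem eventually_average_information_lt_le {X Y : Type*} [Fintype X] [Fintype Y] [Nonempty X]
    {W : X → Y → ℝ} (hW : IsChannel W) {R δ : ℝ} (hδ : 0 < δ) :
    ∃ n₀ : ℕ, ∀ n : ℕ, n₀ ≤ n → 0 < n → ∀ (k : ℕ) (Q : Fin k → (Fin n → X) → ℝ)
      (D : Fin k → Finset (Fin n → Y)), (∀ m, IsPMF (Q m)) →
      IDCodeErr n W Q D (1 / 100) (1 / 100) → (0 < R → R ≤ 1 / n * Real.log (Real.log k)) →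
      ∑ x with mutInf (empDist x) W < R - δ, (k : ℝ)⁻¹ * ∑ m, Q m x ≤ 1 / 5 := by
  by_cases hδR : δ ≤ R
  · obtain ⟨n₀, h⟩ := eventually_average_low_information_le hW hδ hδR
    refine ⟨n₀, fun n hn _ k Q D hQ hD hk => ?_⟩
    refine le_trans ?_ (h n hn k Q D hQ hD (hk (hδ.trans_le hδR)))
    rw [← Finset.mul_sum, Finset.sum_comm]
    refine mul_le_mul_of_nonneg_left (Finset.sum_le_sum fun m _ => ?_) (by positivity)
    refine Finset.sum_le_sum_of_subset_of_nonneg ?_ fun x _ _ => (hQ m).1 x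
    intro x hx
    rw [Finset.mem_filter] at hx ⊢
    exact ⟨hx.1, hx.2.le⟩
  · refine ⟨0, fun n _ hn k Q D _ _ _ => ?_⟩
    rw [Finset.filter_false_of_mem]
    · norm_num
    · intro x _
      have := mutInf_nonneg (isPMF_empDist hn x) hW
      rw [not_lt]
      linarith

theorem CMSAchievable.exists_isPMF_sub_le_mutInf {X Y Z : Type*} [Fintype X] [Fintype Y]
    [Fintype Z] [Nonempty X] {W : X → Y → Z → ℝ} (hW : IsBC W) {p : ℝ × ℝ × ℝ}
    (hp : CMSAchievable W p) {δ : ℝ} (hδ : 0 < δ) :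
    ∃ P : X → ℝ, IsPMF P ∧ p.1 - δ ≤ mutInf P (margY W) ∧ p.2.1 - δ ≤ mutInf P (margY W) ∧
      p.1 - δ ≤ mutInf P (margZ W) ∧ p.2.2 - δ ≤ mutInf P (margZ W) := by
  obtain ⟨h1, h2, h3, hcode⟩ := hp
  have hWY := isChannel_margY hW
  have hWZ := isChannel_margZ hW
  obtain ⟨n₀, hn₀⟩ := hcode (1 / 100) (1 / 100) (1 / 100) (1 / 100) (by norm_num) (by norm_num)
    (by norm_num) (by norm_num)
  obtain ⟨n₁, hn₁⟩ := eventually_average_information_lt_le hWY (R := p.1) hδ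
  obtain ⟨n₂, hn₂⟩ := eventually_average_information_lt_le hWY (R := p.2.1) hδ
  obtain ⟨n₃, hn₃⟩ := eventually_average_information_lt_le hWZ (R := p.1) hδ
  obtain ⟨n₄, hn₄⟩ := eventually_average_information_lt_le hWZ (R := p.2.2) hδ
  set n := n₀ + n₁ + n₂ + n₃ + n₄ + 1 with hn
  have hn0 : 0 < n := by omega
  obtain ⟨k, kY, kZ, Q, DcY, DY, DcZ, DZ, ⟨hQ, hcY, hY, hcZ, hZ⟩, ⟨hk, hk'⟩, ⟨hkY, hkY'⟩,
    ⟨hkZ, hkZ'⟩⟩ := hn₀ n (by omega)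
  have hpos : ∀ {R : ℝ} {j : ℕ}, 0 ≤ R → (0 < R → R ≤ 1 / n * Real.log (Real.log j)) →
      (R = 0 → j = 1) → 0 < j := by
    intro R j hR hj hj'
    rcases hR.eq_or_lt with h | h
    · rw [hj' h.symm]
      exact one_pos
    · exact (exp_exp_le_of_le_log_log h (hj h)).2.1
  have pk : 0 < k := hpos h1 hk hk'
  have pY : 0 < kY := hpos h2 hkY hkY'
  have pZ : 0 < kZ := hpos h3 hkZ hkZ'
  have rk : (k : ℝ) ≠ 0 := by exact_mod_cast pk.ne'
  have rY : (kY : ℝ) ≠ 0 := by exact_mod_cast pY.ne'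
  have rZ : (kZ : ℝ) ≠ 0 := by exact_mod_cast pZ.ne'
  set A : (Fin n → X) → ℝ := fun x =>
    (k : ℝ)⁻¹ * ∑ m, ((kY * kZ : ℕ) : ℝ)⁻¹ * ∑ my, ∑ mz, Q m my mz x with hA
  have hA1 : ∑ x, A x = 1 := by
    rw [hA, ← Finset.mul_sum, Finset.sum_comm]
    simp_rw [(isPMF_average pY pZ (hQ _)).2]
    simp [rk]
  have hAY : ∀ x, A x = (kY : ℝ)⁻¹ * ∑ my, ((k * kZ : ℕ) : ℝ)⁻¹ * ∑ m, ∑ mz, Q m my mz x := by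
    intro x
    simp only [hA]
    rw [← Finset.mul_sum, ← Finset.mul_sum, Finset.sum_comm]
    push_cast
    field_simp
  have hAZ : ∀ x, A x = (kZ : ℝ)⁻¹ * ∑ mz, ((k * kY : ℕ) : ℝ)⁻¹ * ∑ m, ∑ my, Q m my mz x := by
    intro x
    have h : ∑ mz, ∑ m, ∑ my, Q m my mz x = ∑ m, ∑ my, ∑ mz, Q m my mz x := by
      rw [Finset.sum_comm]
      exact Finset.sum_congr rfl fun m _ => Finset.sum_comm
    simp only [hA]
    rw [← Finset.mul_sum, ← Finset.mul_sum, h]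
    push_cast
    field_simp
  have b1 := hn₁ n (by omega) hn0 k _ DcY (fun m => isPMF_average pY pZ (hQ m)) hcY hk
  have b2 := hn₂ n (by omega) hn0 kY _ DY (fun my => isPMF_average pk pZ fun m => hQ m my) hY hkY
  have b3 := hn₃ n (by omega) hn0 k _ DcZ (fun m => isPMF_average pY pZ (hQ m)) hcZ hk
  have b4 := hn₄ n (by omega) hn0 kZ _ DZ (fun mz => isPMF_average pk pY fun m my => hQ m my mz)
    hZ hkZ
  simp_rw [← hAY] at b2
  simp_rw [← hAZ] at b4
  have hA0 : ∀ x, 0 ≤ A x := fun x => mul_nonneg (by positivity)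
    (Finset.sum_nonneg fun m _ => (isPMF_average pY pZ (hQ m)).1 x)
  by_contra! hcon
  have hle : ∑ x, A x
      ≤ ∑ x with mutInf (empDist x) (margY W) < p.1 - δ, A x
        + ∑ x with mutInf (empDist x) (margY W) < p.2.1 - δ, A x
        + ∑ x with mutInf (empDist x) (margZ W) < p.1 - δ, A x
        + ∑ x with mutInf (empDist x) (margZ W) < p.2.2 - δ, A x := by
    simp_rw [Finset.sum_filter, ← Finset.sum_add_distrib]
    refine Finset.sum_le_sum fun x _ => ?_
    have h0 := hA0 x
    by_cases c1 : mutInf (empDist x) (margY W) < p.1 - δ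
    · rw [if_pos c1]
      split_ifs <;> linarith
    by_cases c2 : mutInf (empDist x) (margY W) < p.2.1 - δ
    · rw [if_pos c2]
      split_ifs <;> linarith
    by_cases c3 : mutInf (empDist x) (margZ W) < p.1 - δ
    · rw [if_pos c3]
      split_ifs <;> linarith
    have c4 := hcon (empDist x) (isPMF_empDist hn0 x) (not_lt.1 c1) (not_lt.1 c2) (not_lt.1 c3)
    rw [if_pos c4]
    split_ifs <;> linarith
  rw [hA1] at hle
  linarith

theorem closure_CMSAchievable_subset {X Y Z : Type*} [Fintype X] [Fintype Y] [Fintype Z]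
    [Nonempty X] {W : X → Y → Z → ℝ} (hW : IsBC W) :
    closure {p : ℝ × ℝ × ℝ | CMSAchievable W p}
      ⊆ {p : ℝ × ℝ × ℝ | 0 ≤ p.1 ∧ 0 ≤ p.2.1 ∧ 0 ≤ p.2.2 ∧
          ∃ P : X → ℝ, IsPMF P ∧
            p.1 ≤ mutInf P (margY W) ∧ p.2.1 ≤ mutInf P (margY W) ∧
            p.1 ≤ mutInf P (margZ W) ∧ p.2.2 ≤ mutInf P (margZ W)} := by
  intro p hp
  have happrox : ∀ δ : ℝ, 0 < δ → ∃ q : ℝ × ℝ × ℝ, CMSAchievable W q ∧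
      |p.1 - q.1| < δ ∧ |p.2.1 - q.2.1| < δ ∧ |p.2.2 - q.2.2| < δ := by
    intro δ hδ
    obtain ⟨q, hq, hd⟩ := Metric.mem_closure_iff.1 hp δ hδ
    simp only [Prod.dist_eq, max_lt_iff, Real.dist_eq] at hd
    exact ⟨q, hq, hd.1, hd.2.1, hd.2.2⟩
  have hnn : ∀ δ : ℝ, 0 < δ → -δ ≤ p.1 ∧ -δ ≤ p.2.1 ∧ -δ ≤ p.2.2 := by
    intro δ hδ
    obtain ⟨q, ⟨a1, a2, a3, _⟩, d1, d2, d3⟩ := happrox δ hδ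
    rw [abs_lt] at d1 d2 d3
    exact ⟨by linarith, by linarith, by linarith⟩
  have hzero : ∀ {t : ℝ}, (∀ δ : ℝ, 0 < δ → -δ ≤ t) → 0 ≤ t := fun h =>
    le_of_forall_pos_le_add fun δ hδ => by linarith [h δ hδ]
  refine ⟨hzero fun δ hδ => (hnn δ hδ).1, hzero fun δ hδ => (hnn δ hδ).2.1,
    hzero fun δ hδ => (hnn δ hδ).2.2, ?_⟩
  have hK : {P : X → ℝ | IsPMF P} = stdSimplex ℝ X := rfl
  have hcY := continuousOn_mutInf (isChannel_margY hW)
  have hcZ := continuousOn_mutInf (isChannel_margZ hW)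
  rw [hK] at hcY hcZ
  set F : (X → ℝ) → ℝ := fun P =>
    min (min (mutInf P (margY W) - p.1) (mutInf P (margY W) - p.2.1))
      (min (mutInf P (margZ W) - p.1) (mutInf P (margZ W) - p.2.2)) with hF
  have hFc : ContinuousOn F (stdSimplex ℝ X) :=
    ((hcY.sub continuousOn_const).inf (hcY.sub continuousOn_const)).inf
      ((hcZ.sub continuousOn_const).inf (hcZ.sub continuousOn_const))
  have hFa : ∀ δ : ℝ, 0 < δ → ∃ P ∈ stdSimplex ℝ X, -δ ≤ F P := by
    intro δ hδ
    obtain ⟨q, hq, d1, d2, d3⟩ := happrox (δ / 2) (by positivity)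
    obtain ⟨P, hP, i1, i2, i3, i4⟩ := hq.exists_isPMF_sub_le_mutInf hW (half_pos hδ)
    rw [abs_lt] at d1 d2 d3
    refine ⟨P, hP, ?_⟩
    simp only [hF, le_min_iff]
    refine ⟨⟨?_, ?_⟩, ?_, ?_⟩ <;> linarith
  obtain ⟨P₀, hP₀, _⟩ := hFa 1 one_pos
  obtain ⟨P, hP, hmax⟩ := (isCompact_stdSimplex ℝ X).exists_isMaxOn ⟨P₀, hP₀⟩ hFc
  have hFP : 0 ≤ F P := hzero fun δ hδ => by
    obtain ⟨P', hP', h⟩ := hFa δ hδ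
    exact h.trans (hmax hP')
  simp only [hF, le_min_iff, sub_nonneg] at hFP
  exact ⟨P, hP, hFP.1.1, hFP.1.2, hFP.2.1, hFP.2.2⟩

end OuterBound

section RandomLists

variable {V : Type*} [Fintype V]

/-- The uniform weight on a finite type. -/
def unifWt (V : Type*) [Fintype V] (_ : V) : ℝ :=
  (Fintype.card V : ℝ)⁻¹

theorem isPMF_unifWt [Nonempty V] : IsPMF (unifWt V) := by
  refine ⟨fun _ => by unfold unifWt; positivity, ?_⟩
  simp [unifWt]

/-- The law of a list of `K` independent uniform elements. -/
def listWt (V : Type*) [Fintype V] (K : ℕ) : (Fin K → V) → ℝ :=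
  piWt fun _ => unifWt V

theorem isPMF_listWt [Nonempty V] (K : ℕ) : IsPMF (listWt V K) :=
  isPMF_piWt fun _ => isPMF_unifWt

/-- The multiplicity of `v` in the list `β`. -/
def listCount {V : Type*} {K : ℕ} (β : Fin K → V) (v : V) : ℝ :=
  ∑ i, if β i = v then 1 else 0

theorem listCount_nonneg {V : Type*} {K : ℕ} (β : Fin K → V) (v : V) : 0 ≤ listCount β v :=
  Finset.sum_nonneg fun _ _ => by split_ifs <;> norm_num

theorem sum_listCount_mul {K : ℕ} (β : Fin K → V) (f : V → ℝ) :
    ∑ v, listCount β v * f v = ∑ i, f (β i) := by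
  unfold listCount
  simp_rw [Finset.sum_mul]
  rw [Finset.sum_comm]
  simp

theorem sum_listWt_mul_sum [Nonempty V] {K : ℕ} (f : V → ℝ) :
    ∑ β, listWt V K β * ∑ i, f (β i) = K * ((Fintype.card V : ℝ)⁻¹ * ∑ v, f v) := by
  simp_rw [Finset.mul_sum]
  rw [Finset.sum_comm]
  have h : ∀ i : Fin K, ∑ β, listWt V K β * f (β i) = (Fintype.card V : ℝ)⁻¹ * ∑ v, f v := by
    intro i
    unfold listWt
    rw [sum_piWt_mul_apply (fun _ => isPMF_unifWt.2) i f, Finset.mul_sum]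
    rfl
  simp_rw [h, Finset.sum_const, Finset.card_univ, Fintype.card_fin, nsmul_eq_mul, Finset.mul_sum]

theorem sum_listWt_mul_listCount [Nonempty V] (K : ℕ) (v : V) :
    ∑ β, listWt V K β * listCount β v = K / Fintype.card V := by
  unfold listCount
  rw [sum_listWt_mul_sum fun a => if a = v then 1 else 0]
  simp [div_eq_mul_inv]

theorem sum_listWt_mul_listCount_mul_le [Nonempty V] (K : ℕ) (v v' : V) :
    ∑ β, listWt V K β * (listCount β v * listCount β v')
      ≤ (if v = v' then (K : ℝ) / Fintype.card V else 0) + (K / Fintype.card V) ^ 2 := by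
  set N : ℝ := (Fintype.card V : ℝ) with hN
  have hN0 : 0 < N := by rw [hN]; exact_mod_cast Fintype.card_pos
  have h : ∀ i j : Fin K, ∑ β, listWt V K β *
      ((if β i = v then (1 : ℝ) else 0) * if β j = v' then 1 else 0)
      ≤ (if i = j then (if v = v' then N⁻¹ else 0) else 0) + (N⁻¹) ^ 2 := by
    intro i j
    unfold listWt
    by_cases hij : i = j
    · subst hij
      rw [sum_piWt_mul_apply (fun _ => isPMF_unifWt.2) i
        (fun a => (if a = v then (1 : ℝ) else 0) * if a = v' then 1 else 0)]
      by_cases hv : v = v'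
      · subst hv
        simp [unifWt, ← hN, sq_nonneg]
      · simp [unifWt, ← hN, hv, Ne.symm hv, sq_nonneg]
    · rw [sum_piWt_mul_apply_mul_apply (fun _ => isPMF_unifWt.2) hij
        (fun a => if a = v then 1 else 0) (fun a => if a = v' then 1 else 0)]
      simp [unifWt, ← hN, hij, sq]
  calc ∑ β, listWt V K β * (listCount β v * listCount β v')
      = ∑ i, ∑ j, ∑ β, listWt V K β *
        ((if β i = v then (1 : ℝ) else 0) * if β j = v' then 1 else 0) := by
        unfold listCount
        simp_rw [Finset.sum_mul_sum, Finset.mul_sum]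
        rw [Finset.sum_comm]
        exact Finset.sum_congr rfl fun i _ => Finset.sum_comm
    _ ≤ ∑ i : Fin K, ∑ j : Fin K,
        ((if i = j then (if v = v' then N⁻¹ else 0) else 0) + (N⁻¹) ^ 2) :=
        Finset.sum_le_sum fun i _ => Finset.sum_le_sum fun j _ => h i j
    _ = _ := by
        simp [Finset.sum_add_distrib]
        split_ifs <;> ring

theorem sum_mul_sum_mul {L τ : Type*} [Fintype L] [Fintype τ] (p : L → ℝ) (F : τ → L → ℝ)
    (c : τ → ℝ) : ∑ a, p a * ∑ t, c t * F t a = ∑ t, c t * ∑ a, p a * F t a := by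
  simp_rw [Finset.mul_sum]
  rw [Finset.sum_comm]
  exact Finset.sum_congr rfl fun t _ => Finset.sum_congr rfl fun a _ => by ring

theorem sum_mul_sum_mul_sum_mul {L₁ L₂ L₃ τ : Type*} [Fintype L₁] [Fintype L₂] [Fintype L₃]
    [Fintype τ] (p : L₁ → ℝ) (q : L₂ → ℝ) (r : L₃ → ℝ) (f : τ → L₁ → ℝ) (g : τ → L₂ → ℝ)
    (h : τ → L₃ → ℝ) :
    ∑ α, p α * ∑ β, q β * ∑ γ, r γ * ∑ t, f t α * g t β * h t γ
      = ∑ t, (∑ α, p α * f t α) * (∑ β, q β * g t β) * ∑ γ, r γ * h t γ := by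
  have h1 : ∀ α β, ∑ γ, r γ * ∑ t, f t α * g t β * h t γ
      = ∑ t, (f t α * ∑ γ, r γ * h t γ) * g t β := fun α β => by
    rw [sum_mul_sum_mul r h]
    exact Finset.sum_congr rfl fun t _ => by ring
  have h2 : ∀ α, ∑ β, q β * ∑ γ, r γ * ∑ t, f t α * g t β * h t γ
      = ∑ t, ((∑ γ, r γ * h t γ) * ∑ β, q β * g t β) * f t α := fun α => by
    simp_rw [h1]
    rw [sum_mul_sum_mul q g]
    exact Finset.sum_congr rfl fun t _ => by ring
  simp_rw [h2]
  rw [sum_mul_sum_mul p f]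
  exact Finset.sum_congr rfl fun t _ => by ring

/-- The number of coincidences of three lists. -/
def tripleCount {V : Type*} [Fintype V] {a b c : ℕ} (α : Fin a → V) (β : Fin b → V)
    (γ : Fin c → V) : ℝ :=
  ∑ v, listCount α v * listCount β v * listCount γ v

theorem sum_listWt_mul_tripleCount [Nonempty V] (a b c : ℕ) :
    ∑ α, listWt V a α * ∑ β, listWt V b β * ∑ γ, listWt V c γ * tripleCount α β γ
      = (a * b * c : ℝ) / (Fintype.card V : ℝ) ^ 2 := by
  have hN0 : (Fintype.card V : ℝ) ≠ 0 := by exact_mod_cast Fintype.card_ne_zero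
  unfold tripleCount
  rw [sum_mul_sum_mul_sum_mul (listWt V a) (listWt V b) (listWt V c)
    (fun v α => listCount α v) (fun v β => listCount β v) (fun v γ => listCount γ v)]
  simp_rw [sum_listWt_mul_listCount]
  simp
  field_simp

theorem IsPMF.sum_mul_affine {L : Type*} [Fintype L] {p : L → ℝ} (hp : IsPMF p) (A B C : ℝ)
    (f g : L → ℝ) : ∑ a, p a * (A * f a + (B - C * g a))
      = A * ∑ a, p a * f a + (B - C * ∑ a, p a * g a) := by
  have h : ∀ a, p a * (A * f a + (B - C * g a))
      = A * (p a * f a) + (p a * B - C * (p a * g a)) := fun a => by ring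
  simp_rw [h, Finset.sum_add_distrib, Finset.sum_sub_distrib, ← Finset.mul_sum,
    ← Finset.sum_mul, hp.2, one_mul]

/-- Three independent random lists have few coincidences only with small probability. -/
theorem sum_listWt_tripleCount_lt_le [Nonempty V] {a b c : ℕ} (ha : 0 < a) (hb : 0 < b)
    (hc : 0 < c) (haV : a ≤ Fintype.card V) (hbV : b ≤ Fintype.card V)
    (hcV : c ≤ Fintype.card V) :
    ∑ α, listWt V a α * ∑ β, listWt V b β * ∑ γ, listWt V c γ *
      (if tripleCount α β γ < (a * b * c : ℝ) / (Fintype.card V : ℝ) ^ 2 / 2 then 1 else 0)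
      ≤ 32 / ((a * b * c : ℝ) / (Fintype.card V : ℝ) ^ 2) := by
  have hmean := sum_listWt_mul_tripleCount (V := V) a b c
  set N : ℝ := (Fintype.card V : ℝ) with hN
  set s : ℝ := (a * b * c : ℝ) / N ^ 2 with hs
  have hN0 : 0 < N := by rw [hN]; exact_mod_cast Fintype.card_pos
  have ha0 : (0 : ℝ) < a := by exact_mod_cast ha
  have hb0 : (0 : ℝ) < b := by exact_mod_cast hb
  have hc0 : (0 : ℝ) < c := by exact_mod_cast hc
  have hs0 : 0 < s := by positivity
  have hpa := isPMF_listWt (V := V) a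
  have hpb := isPMF_listWt (V := V) b
  have hpc := isPMF_listWt (V := V) c
  have hsq : ∑ α, listWt V a α * ∑ β, listWt V b β * ∑ γ, listWt V c γ * tripleCount α β γ ^ 2
      ≤ s ^ 2 + 8 * s := by
    have hexp : ∀ (α : Fin a → V) (β : Fin b → V) (γ : Fin c → V), tripleCount α β γ ^ 2
        = ∑ t : V × V, (listCount α t.1 * listCount α t.2) * (listCount β t.1 * listCount β t.2) *
          (listCount γ t.1 * listCount γ t.2) := by
      intro α β γ
      unfold tripleCount
      rw [sq, Finset.sum_mul_sum, Fintype.sum_prod_type]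
      exact Finset.sum_congr rfl fun v _ => Finset.sum_congr rfl fun v' _ => by ring
    simp_rw [hexp]
    rw [sum_mul_sum_mul_sum_mul (listWt V a) (listWt V b) (listWt V c)
      (fun (t : V × V) α => listCount α t.1 * listCount α t.2)
      (fun (t : V × V) β => listCount β t.1 * listCount β t.2)
      (fun (t : V × V) γ => listCount γ t.1 * listCount γ t.2), Fintype.sum_prod_type]
    have hx1 : (a : ℝ) / N ≤ 1 := (div_le_one hN0).2 (by rw [hN]; exact_mod_cast haV)
    have hy1 : (b : ℝ) / N ≤ 1 := (div_le_one hN0).2 (by rw [hN]; exact_mod_cast hbV)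
    have hz1 : (c : ℝ) / N ≤ 1 := (div_le_one hN0).2 (by rw [hN]; exact_mod_cast hcV)
    have hx0 : 0 < (a : ℝ) / N := by positivity
    have hy0 : 0 < (b : ℝ) / N := by positivity
    have hz0 : 0 < (c : ℝ) / N := by positivity
    have hsx : s = N * ((a : ℝ) / N * ((b : ℝ) / N) * ((c : ℝ) / N)) := by
      rw [hs]; field_simp
    set x := (a : ℝ) / N
    set y := (b : ℝ) / N
    set z := (c : ℝ) / N
    have hnn : ∀ (K : ℕ) (v v' : V),
        0 ≤ ∑ β, listWt V K β * (listCount β v * listCount β v') := fun K v v' =>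
      Finset.sum_nonneg fun β _ => mul_nonneg ((isPMF_listWt K).1 β)
        (mul_nonneg (listCount_nonneg _ _) (listCount_nonneg _ _))
    have hterm : ∀ v v' : V,
        (∑ β, listWt V a β * (listCount β v * listCount β v')) *
        (∑ β, listWt V b β * (listCount β v * listCount β v')) *
        (∑ β, listWt V c β * (listCount β v * listCount β v'))
        ≤ (if v = v' then 8 * (x * y * z) else 0) + x ^ 2 * y ^ 2 * z ^ 2 := by
      intro v v'
      have h1 := sum_listWt_mul_listCount_mul_le a v v'
      have h2 := sum_listWt_mul_listCount_mul_le b v v'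
      have h3 := sum_listWt_mul_listCount_mul_le c v v'
      refine (mul_le_mul (mul_le_mul h1 h2 (hnn _ _ _) ((hnn _ _ _).trans h1)) h3 (hnn _ _ _)
        (mul_nonneg ((hnn _ _ _).trans h1) ((hnn _ _ _).trans h2))).trans ?_
      change (_ + x ^ 2) * (_ + y ^ 2) * (_ + z ^ 2) ≤ _
      by_cases hv : v = v'
      · simp only [hv, if_true]
        change (x + x ^ 2) * (y + y ^ 2) * (z + z ^ 2) ≤ _
        have e : (x + x ^ 2) * (y + y ^ 2) * (z + z ^ 2)
            = x * y * z * ((1 + x) * (1 + y) * (1 + z)) := by ring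
        have h8 : (1 + x) * (1 + y) * (1 + z) ≤ 2 * 2 * 2 := by gcongr <;> linarith
        have hp : 0 < x * y * z := by positivity
        rw [e]
        nlinarith [mul_le_mul_of_nonneg_left h8 hp.le, sq_nonneg (x * y * z)]
      · simp only [hv, if_false]
        apply le_of_eq
        ring
    refine (Finset.sum_le_sum fun v _ => Finset.sum_le_sum fun v' _ => hterm v v').trans ?_
    apply le_of_eq
    simp [Finset.sum_add_distrib, ← hN]
    rw [hsx]
    ring
  have hpt : ∀ (α : Fin a → V) (β : Fin b → V) (γ : Fin c → V),
      (if tripleCount α β γ < s / 2 then (1 : ℝ) else 0)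
        ≤ 4 / s ^ 2 * tripleCount α β γ ^ 2 + (4 - 8 / s * tripleCount α β γ) := by
    intro α β γ
    have e : 4 / s ^ 2 * tripleCount α β γ ^ 2 + (4 - 8 / s * tripleCount α β γ)
        = (2 * (s - tripleCount α β γ) / s) ^ 2 := by
      field_simp
      ring
    rw [e]
    split_ifs with h
    · rw [one_le_sq_iff₀ (by apply div_nonneg <;> linarith), one_le_div hs0]
      linarith
    · positivity
  calc _ ≤ ∑ α, listWt V a α * ∑ β, listWt V b β * ∑ γ, listWt V c γ *
        (4 / s ^ 2 * tripleCount α β γ ^ 2 + (4 - 8 / s * tripleCount α β γ)) := by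
        refine Finset.sum_le_sum fun α _ => mul_le_mul_of_nonneg_left ?_ (hpa.1 α)
        refine Finset.sum_le_sum fun β _ => mul_le_mul_of_nonneg_left ?_ (hpb.1 β)
        exact Finset.sum_le_sum fun γ _ => mul_le_mul_of_nonneg_left (hpt α β γ) (hpc.1 γ)
    _ = 4 / s ^ 2 * (∑ α, listWt V a α * ∑ β, listWt V b β * ∑ γ, listWt V c γ *
          tripleCount α β γ ^ 2) + (4 - 8 / s * ∑ α, listWt V a α * ∑ β, listWt V b β *
          ∑ γ, listWt V c γ * tripleCount α β γ) := by
        simp_rw [hpc.sum_mul_affine, hpb.sum_mul_affine, hpa.sum_mul_affine]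
    _ ≤ 4 / s ^ 2 * (s ^ 2 + 8 * s) + (4 - 8 / s * s) := by
        rw [hmean]
        gcongr
    _ = 32 / s := by
        field_simp
        ring

end RandomLists

/-- Chernoff bound for the average of a function with small mean along a random list. -/
theorem sum_listWt_ge_le {V : Type*} [Fintype V] [Nonempty V] {g : V → ℝ} (h0 : ∀ v, 0 ≤ g v)
    (h1 : ∀ v, g v ≤ 1) {ε : ℝ} (hg : (Fintype.card V : ℝ)⁻¹ * ∑ v, g v ≤ ε) (K : ℕ) :
    ∑ β, listWt V K β * (if 4 * ε * K ≤ ∑ i, g (β i) then 1 else 0) ≤ Real.exp (-(2 * ε * K)) := by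
  have hmgf : ∑ v, unifWt V v * Real.exp (g v) ≤ Real.exp (2 * ε) := by
    have hpt : ∀ v, Real.exp (g v) ≤ 1 + 2 * g v := by
      intro v
      have := Real.abs_exp_sub_one_sub_id_le (x := g v) (by rw [abs_of_nonneg (h0 v)]; exact h1 v)
      have h2 := (abs_le.1 this).2
      nlinarith [h0 v, h1 v]
    calc ∑ v, unifWt V v * Real.exp (g v) ≤ ∑ v, unifWt V v * (1 + 2 * g v) :=
          Finset.sum_le_sum fun v _ => mul_le_mul_of_nonneg_left (hpt v) (isPMF_unifWt.1 v)
      _ = 1 + 2 * ((Fintype.card V : ℝ)⁻¹ * ∑ v, g v) := by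
          simp_rw [mul_add, Finset.sum_add_distrib, mul_one, isPMF_unifWt.2, Finset.mul_sum, unifWt]
          congr 1
          exact Finset.sum_congr rfl fun v _ => by ring
      _ ≤ 2 * ε + 1 := by linarith
      _ ≤ _ := Real.add_one_le_exp _
  have hpt : ∀ β : Fin K → V, (if 4 * ε * K ≤ ∑ i, g (β i) then (1 : ℝ) else 0)
      ≤ Real.exp (-(4 * ε * K)) * ∏ i, Real.exp (g (β i)) := by
    intro β
    rw [← Real.exp_sum, ← Real.exp_add]
    split_ifs with h
    · exact Real.one_le_exp (by linarith)
    · positivity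
  calc _ ≤ ∑ β, listWt V K β * (Real.exp (-(4 * ε * K)) * ∏ i, Real.exp (g (β i))) :=
        Finset.sum_le_sum fun β _ => mul_le_mul_of_nonneg_left (hpt β) ((isPMF_listWt K).1 β)
    _ = Real.exp (-(4 * ε * K)) * (∑ v, unifWt V v * Real.exp (g v)) ^ K := by
        simp_rw [mul_left_comm (listWt V K _), ← Finset.mul_sum, listWt, piWt,
          ← Finset.prod_mul_distrib]
        rw [sum_prod_pi (fun (_ : Fin K) v => unifWt V v * Real.exp (g v))]
        simp
    _ ≤ Real.exp (-(4 * ε * K)) * Real.exp (2 * ε) ^ K := by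
        gcongr
        exact Finset.sum_nonneg fun v _ => mul_nonneg (isPMF_unifWt.1 v) (Real.exp_pos _).le
    _ = Real.exp (-(2 * ε * K)) := by
        rw [← Real.exp_nat_mul, ← Real.exp_add]
        congr 1
        ring

section Families

variable {L V : Type*} [Fintype V]

/-- The cost of a family `ω` of lists: the average of `φ`, the number of bad pairs, and the
number of points whose total weight is at least twice its mean. -/
def familyCost {L V : Type*} [Fintype V] {M : ℕ} (φ : L → ℝ) (bad : L → L → Prop)
    (cnt : L → V → ℝ) (d : ℝ) (ω : Fin M → L) : ℝ :=
  (M : ℝ)⁻¹ * ∑ m, φ (ω m)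
    + ∑ m, ∑ m', (if m ≠ m' ∧ bad (ω m) (ω m') then 1 else 0)
    + ∑ v, if 2 * d * M ≤ ∑ m, cnt (ω m) v then 1 else 0

theorem sum_piWt_mul_familyCost_le [Fintype L] {p : L → ℝ} (hp : IsPMF p) {M : ℕ} (hM : 0 < M) (φ : L → ℝ)
    (bad : L → L → Prop) {cnt : L → V → ℝ} {d e : ℝ} (hd : 0 < d)
    (hcnt : ∀ v, ∑ a, p a * cnt a v = d) (hcnt2 : ∀ v, ∑ a, p a * cnt a v ^ 2 ≤ e) :
    ∑ ω : Fin M → L, piWt (fun _ => p) ω * familyCost φ bad cnt d ω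
      ≤ ∑ a, p a * φ a + (M : ℝ) ^ 2 * ∑ a, ∑ b, p a * (p b * if bad a b then 1 else 0)
        + Fintype.card V * (e / (M * d ^ 2)) := by
  have hM0 : (0 : ℝ) < M := by exact_mod_cast hM
  have hp1 : ∀ _ : Fin M, ∑ a, p a = 1 := fun _ => hp.2
  unfold familyCost
  simp_rw [mul_add, Finset.sum_add_distrib]
  refine add_le_add (add_le_add ?_ ?_) ?_
  · simp_rw [Finset.mul_sum]
    rw [Finset.sum_comm]
    simp_rw [mul_left_comm _ (M : ℝ)⁻¹, ← Finset.mul_sum]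
    simp_rw [sum_piWt_mul_apply hp1]
    simp
    field_simp
    exact le_rfl
  · set B := ∑ a, ∑ b, p a * (p b * if bad a b then (1 : ℝ) else 0) with hB
    have hB0 : 0 ≤ B := Finset.sum_nonneg fun a _ => Finset.sum_nonneg fun b _ =>
      mul_nonneg (hp.1 a) (mul_nonneg (hp.1 b) (by split_ifs <;> norm_num))
    simp_rw [Finset.mul_sum]
    rw [Finset.sum_comm]
    have h : ∀ m m' : Fin M, ∑ ω : Fin M → L, piWt (fun _ => p) ω *
        (if m ≠ m' ∧ bad (ω m) (ω m') then (1 : ℝ) else 0) ≤ B := by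
      intro m m'
      by_cases hmm : m = m'
      · simp [hmm, hB0]
      · simp only [ne_eq, hmm, not_false_eq_true, true_and]
        rw [sum_piWt_mul_pair hp1 hmm fun a b => if bad a b then (1 : ℝ) else 0]
    calc _ = ∑ m : Fin M, ∑ m' : Fin M, ∑ ω : Fin M → L, piWt (fun _ => p) ω *
          (if m ≠ m' ∧ bad (ω m) (ω m') then (1 : ℝ) else 0) :=
          Finset.sum_congr rfl fun m _ => Finset.sum_comm
      _ ≤ ∑ m : Fin M, ∑ m' : Fin M, B :=
          Finset.sum_le_sum fun m _ => Finset.sum_le_sum fun m' _ => h m m'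
      _ = _ := by
          simp
          ring
  · simp_rw [Finset.mul_sum]
    rw [Finset.sum_comm]
    have h : ∀ v, ∑ ω : Fin M → L, piWt (fun _ => p) ω *
        (if 2 * d * M ≤ ∑ m, cnt (ω m) v then (1 : ℝ) else 0) ≤ e / (M * d ^ 2) := by
      intro v
      have hc := chebyshev_piWt (fun _ : Fin M => hp) (fun _ a => cnt a v)
        (t := M * d) (by positivity)
      simp_rw [hcnt] at hc
      simp_rw [mul_ite, mul_one, mul_zero]
      rw [← Finset.sum_filter]
      have hsub : (univ.filter fun ω : Fin M → L => 2 * d * M ≤ ∑ m, cnt (ω m) v)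
          ⊆ univ.filter fun ω : Fin M → L =>
            M * d ≤ |∑ i, cnt (ω i) v - ∑ _ : Fin M, d| := by
        intro ω hω
        rw [Finset.mem_filter] at hω ⊢
        refine ⟨hω.1, le_trans ?_ (le_abs_self _)⟩
        simp
        linarith [hω.2]
      refine (Finset.sum_le_sum_of_subset_of_nonneg hsub
        fun ω _ _ => (isPMF_piWt fun _ => hp).1 ω).trans (hc.trans ?_)
      calc _ ≤ (∑ _ : Fin M, e) / (M * d) ^ 2 := by
            gcongr
            exact hcnt2 v
        _ = e / (M * d ^ 2) := by
            simp
            field_simp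
    refine (Finset.sum_le_sum fun v _ => h v).trans ?_
    simp

/-- A nonnegative function on `2k` points with average at most `τ` is at most `2τ` on `k` of
them. -/
theorem exists_injective_le_two_mul {k : ℕ} (hk : 0 < k) {f : Fin (2 * k) → ℝ} (hf : ∀ m, 0 ≤ f m)
    {τ : ℝ} (h : ((2 * k : ℕ) : ℝ)⁻¹ * ∑ m, f m ≤ τ) :
    ∃ ι : Fin k → Fin (2 * k), Function.Injective ι ∧ ∀ m, f (ι m) ≤ 2 * τ := by
  have hk0 : (0 : ℝ) < k := by exact_mod_cast hk
  have hcard : k ≤ (univ.filter fun m => f m ≤ 2 * τ).card := by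
    by_contra! hlt
    have hc : (univ.filter fun m => f m ≤ 2 * τ).card
        + (univ.filter fun m => ¬ f m ≤ 2 * τ).card = 2 * k := by
      rw [Finset.card_filter_add_card_filter_not]
      simp
    have hgt : (k : ℝ) + 1 ≤ (univ.filter fun m => ¬ f m ≤ 2 * τ).card := by
      exact_mod_cast (by omega : k + 1 ≤ _)
    have hsum : ∑ m, f m ≤ τ * (2 * k) := by
      rw [inv_mul_le_iff₀ (by positivity)] at h
      push_cast at h
      linarith
    have hne : (univ.filter fun m => ¬ f m ≤ 2 * τ).Nonempty :=
      Finset.card_pos.1 (by omega)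
    have hlow : (univ.filter fun m => ¬ f m ≤ 2 * τ).card * (2 * τ)
        < ∑ m ∈ univ.filter (fun m => ¬ f m ≤ 2 * τ), f m := by
      rw [← nsmul_eq_mul, ← Finset.sum_const]
      exact Finset.sum_lt_sum_of_nonempty hne fun m hm => not_le.1 (Finset.mem_filter.1 hm).2
    have hle : ∑ m ∈ univ.filter (fun m => ¬ f m ≤ 2 * τ), f m ≤ ∑ m, f m :=
      Finset.sum_le_sum_of_subset_of_nonneg (Finset.filter_subset _ _) fun m _ _ => hf m
    have hτ : 0 ≤ τ := by
      by_contra! hneg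
      have := Finset.sum_nonneg (fun m (_ : m ∈ univ) => hf m)
      nlinarith
    nlinarith
  obtain ⟨s, hs, hsk⟩ := Finset.exists_subset_card_eq hcard
  exact ⟨s.orderEmbOfFin hsk, (s.orderEmbOfFin hsk).injective,
    fun m => (Finset.mem_filter.1 (hs (s.orderEmbOfFin_mem hsk m))).2⟩

theorem sum_comp_le_sum_of_injective {A B : Type*} [Fintype A] [Fintype B] {ι : A → B}
    (hι : Function.Injective ι) {f : B → ℝ} (hf : ∀ b, 0 ≤ f b) : ∑ a, f (ι a) ≤ ∑ b, f b := by
  rw [← Finset.sum_image (f := f) (g := ι) (s := univ) fun a _ b _ hab => hι hab]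
  exact Finset.sum_le_sum_of_subset_of_nonneg (Finset.subset_univ _) fun b _ _ => hf b

theorem familyCost_nonneg {M : ℕ} {φ : L → ℝ} (hφ : ∀ a, 0 ≤ φ a) (bad : L → L → Prop)
    (cnt : L → V → ℝ) (d : ℝ) (ω : Fin M → L) : 0 ≤ familyCost φ bad cnt d ω := by
  have hi : ∀ (P : Prop) [Decidable P], (0 : ℝ) ≤ if P then 1 else 0 := fun P _ => by
    split_ifs <;> norm_num
  exact add_nonneg (add_nonneg
    (mul_nonneg (by positivity) (Finset.sum_nonneg fun m _ => hφ _))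
    (Finset.sum_nonneg fun m _ => Finset.sum_nonneg fun m' _ => hi _))
    (Finset.sum_nonneg fun v _ => hi _)

theorem exists_subfamily {k : ℕ} (hk : 0 < k) {φ : L → ℝ} (hφ : ∀ a, 0 ≤ φ a)
    {bad : L → L → Prop} {cnt : L → V → ℝ} (hcnt : ∀ a v, 0 ≤ cnt a v) {d : ℝ}
    (ω : Fin (2 * k) → L) {ψ : Fin (2 * k) → ℝ} (hψ : ∀ m, 0 ≤ ψ m) {τ : ℝ} (hτ : τ < 1)
    (h : familyCost φ bad cnt d ω + ((2 * k : ℕ) : ℝ)⁻¹ * ∑ m, ψ m ≤ τ) :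
    ∃ ι : Fin k → Fin (2 * k), Function.Injective ι ∧
      (∀ m, φ (ω (ι m)) ≤ 2 * τ) ∧ (∀ m, ψ (ι m) ≤ 2 * τ) ∧
      (∀ m m', m ≠ m' → ¬ bad (ω (ι m)) (ω (ι m'))) ∧
      ∀ v, ∑ m, cnt (ω (ι m)) v ≤ 4 * d * k := by
  unfold familyCost at h
  have hA : 0 ≤ ((2 * k : ℕ) : ℝ)⁻¹ * ∑ m, φ (ω m) :=
    mul_nonneg (by positivity) (Finset.sum_nonneg fun m _ => hφ _)
  have hA' : 0 ≤ ((2 * k : ℕ) : ℝ)⁻¹ * ∑ m, ψ m :=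
    mul_nonneg (by positivity) (Finset.sum_nonneg fun m _ => hψ _)
  have hi : ∀ (P : Prop) [Decidable P], (0 : ℝ) ≤ if P then 1 else 0 := fun P _ => by split_ifs <;> norm_num
  have hB : 0 ≤ ∑ m, ∑ m', (if m ≠ m' ∧ bad (ω m) (ω m') then (1 : ℝ) else 0) :=
    Finset.sum_nonneg fun m _ => Finset.sum_nonneg fun m' _ => hi _
  have hC : 0 ≤ ∑ v, (if 2 * d * (2 * k : ℕ) ≤ ∑ m, cnt (ω m) v then (1 : ℝ) else 0) :=
    Finset.sum_nonneg fun v _ => hi _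
  obtain ⟨ι, hι, hle⟩ := exists_injective_le_two_mul hk
    (f := fun m => φ (ω m) + ψ m) (fun m => add_nonneg (hφ _) (hψ m)) (τ := τ) (by
      rw [Finset.sum_add_distrib, mul_add]
      linarith)
  refine ⟨ι, hι, fun m => ?_, fun m => ?_, fun m m' hmm hbad => ?_, fun v => ?_⟩
  · linarith [hle m, hψ (ι m)]
  · linarith [hle m, hφ (ω (ι m))]
  · have h1 := Finset.single_le_sum (fun m _ => Finset.sum_nonneg fun m' _ => hi _)
      (Finset.mem_univ (ι m))
      (f := fun m => ∑ m', (if m ≠ m' ∧ bad (ω m) (ω m') then (1 : ℝ) else 0))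
    have h2 := Finset.single_le_sum (fun m' _ => hi _) (Finset.mem_univ (ι m'))
      (f := fun m' => (if ι m ≠ m' ∧ bad (ω (ι m)) (ω m') then (1 : ℝ) else 0))
    simp only [ne_eq, hι.eq_iff, hmm, not_false_eq_true, hbad, and_self, if_true] at h1 h2
    linarith
  · by_contra! hlt
    have h1 := Finset.single_le_sum (fun v _ => hi _) (Finset.mem_univ v)
      (f := fun v => (if 2 * d * (2 * k : ℕ) ≤ ∑ m, cnt (ω m) v then (1 : ℝ) else 0))
    have h2 : ∑ m, cnt (ω (ι m)) v ≤ ∑ m, cnt (ω m) v :=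
      sum_comp_le_sum_of_injective hι fun m => hcnt _ _
    have h3 : 2 * d * (2 * k : ℕ) ≤ ∑ m, cnt (ω m) v := by
      push_cast
      linarith
    simp only [h3, if_true] at h1
    linarith

theorem IsPMF.sum_mul_const_add {A : Type*} [Fintype A] {p : A → ℝ} (hp : IsPMF p) (c : ℝ)
    (f : A → ℝ) : ∑ a, p a * (c + f a) = c + ∑ a, p a * f a := by
  simp_rw [mul_add, Finset.sum_add_distrib, ← Finset.sum_mul, hp.2, one_mul]

theorem sum_piWt_mul_average {L : Type*} [Fintype L] {p : L → ℝ} (hp : IsPMF p) {M : ℕ} (hM : 0 < M) (f : L → ℝ) :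
    ∑ ω : Fin M → L, piWt (fun _ => p) ω * ∑ m, (M : ℝ)⁻¹ * f (ω m) = ∑ a, p a * f a := by
  have hM0 : (M : ℝ) ≠ 0 := by exact_mod_cast hM.ne'
  rw [sum_mul_sum_mul (piWt fun _ : Fin M => p) (fun m ω => f (ω m)) fun _ => (M : ℝ)⁻¹]
  simp_rw [sum_piWt_mul_apply (fun _ : Fin M => hp.2)]
  simp [hM0]

/-- Random choice and expurgation of three families of lists. -/
theorem exists_three_families {L₁ L₂ L₃ V : Type*} [Fintype L₁] [Fintype L₂] [Fintype L₃]
    [Fintype V] {p₁ : L₁ → ℝ} {p₂ : L₂ → ℝ} {p₃ : L₃ → ℝ} (hp₁ : IsPMF p₁) (hp₂ : IsPMF p₂)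
    (hp₃ : IsPMF p₃) {φ₁ : L₁ → ℝ} {φ₂ : L₂ → ℝ} {φ₃ : L₃ → ℝ} (hφ₁ : ∀ a, 0 ≤ φ₁ a)
    (hφ₂ : ∀ a, 0 ≤ φ₂ a) (hφ₃ : ∀ a, 0 ≤ φ₃ a) {bad₁ : L₁ → L₁ → Prop} {bad₂ : L₂ → L₂ → Prop}
    {bad₃ : L₃ → L₃ → Prop} {cnt₁ : L₁ → V → ℝ} {cnt₂ : L₂ → V → ℝ} {cnt₃ : L₃ → V → ℝ}
    (hcnt₁ : ∀ a v, 0 ≤ cnt₁ a v) (hcnt₂ : ∀ a v, 0 ≤ cnt₂ a v) (hcnt₃ : ∀ a v, 0 ≤ cnt₃ a v)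
    {d₁ d₂ d₃ : ℝ} {b : L₁ → L₂ → L₃ → ℝ} (hb : ∀ x y z, 0 ≤ b x y z) {k₁ k₂ k₃ : ℕ}
    (hk₁ : 0 < k₁) (hk₂ : 0 < k₂) (hk₃ : 0 < k₃) {τ₁ τ₂ τ₃ τ₀ τ : ℝ}
    (h₁ : ∑ ω : Fin (2 * k₁) → L₁, piWt (fun _ => p₁) ω * familyCost φ₁ bad₁ cnt₁ d₁ ω ≤ τ₁)
    (h₂ : ∑ ω : Fin (2 * k₂) → L₂, piWt (fun _ => p₂) ω * familyCost φ₂ bad₂ cnt₂ d₂ ω ≤ τ₂)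
    (h₃ : ∑ ω : Fin (2 * k₃) → L₃, piWt (fun _ => p₃) ω * familyCost φ₃ bad₃ cnt₃ d₃ ω ≤ τ₃)
    (h₀ : ∑ x, p₁ x * ∑ y, p₂ y * ∑ z, p₃ z * b x y z ≤ τ₀) (hτ : τ₁ + τ₂ + τ₃ + τ₀ ≤ τ)
    (hτ1 : τ < 1) :
    ∃ (α : Fin k₁ → L₁) (β : Fin k₂ → L₂) (γ : Fin k₃ → L₃),
      ((∀ i, φ₁ (α i) ≤ 2 * τ) ∧ (∀ i i', i ≠ i' → ¬ bad₁ (α i) (α i')) ∧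
        (∀ v, ∑ i, cnt₁ (α i) v ≤ 4 * d₁ * k₁) ∧
        ∀ i, ∑ j, ∑ l, b (α i) (β j) (γ l) ≤ 8 * τ * (k₂ * k₃)) ∧
      ((∀ j, φ₂ (β j) ≤ 2 * τ) ∧ (∀ j j', j ≠ j' → ¬ bad₂ (β j) (β j')) ∧
        (∀ v, ∑ j, cnt₂ (β j) v ≤ 4 * d₂ * k₂) ∧
        ∀ j, ∑ i, ∑ l, b (α i) (β j) (γ l) ≤ 8 * τ * (k₁ * k₃)) ∧
      ((∀ l, φ₃ (γ l) ≤ 2 * τ) ∧ (∀ l l', l ≠ l' → ¬ bad₃ (γ l) (γ l')) ∧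
        (∀ v, ∑ l, cnt₃ (γ l) v ≤ 4 * d₃ * k₃) ∧
        ∀ l, ∑ i, ∑ j, b (α i) (β j) (γ l) ≤ 8 * τ * (k₁ * k₂)) := by
  set c₁ : ℝ := ((2 * k₁ : ℕ) : ℝ)⁻¹ with hc₁
  set c₂ : ℝ := ((2 * k₂ : ℕ) : ℝ)⁻¹ with hc₂
  set c₃ : ℝ := ((2 * k₃ : ℕ) : ℝ)⁻¹ with hc₃
  have hM₁ : 0 < 2 * k₁ := by omega
  have hM₂ : 0 < 2 * k₂ := by omega
  have hM₃ : 0 < 2 * k₃ := by omega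
  have hP₁ := isPMF_piWt fun _ : Fin (2 * k₁) => hp₁
  have hP₂ := isPMF_piWt fun _ : Fin (2 * k₂) => hp₂
  have hP₃ := isPMF_piWt fun _ : Fin (2 * k₃) => hp₃
  set B : (Fin (2 * k₁) → L₁) → (Fin (2 * k₂) → L₂) → (Fin (2 * k₃) → L₃) → ℝ :=
    fun x y z => ∑ i, c₁ * ∑ j, c₂ * ∑ l, c₃ * b (x i) (y j) (z l) with hB
  have e₃ : ∀ x y, ∑ z, piWt (fun _ => p₃) z * B x y z
      = ∑ i, c₁ * ∑ j, c₂ * ∑ w, p₃ w * b (x i) (y j) w := by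
    intro x y
    simp only [hB]
    rw [sum_mul_sum_mul (piWt fun _ => p₃)
      (fun i z => ∑ j, c₂ * ∑ l, c₃ * b (x i) (y j) (z l)) fun _ => c₁]
    refine Finset.sum_congr rfl fun i _ => congrArg _ ?_
    rw [sum_mul_sum_mul (piWt fun _ => p₃)
      (fun j z => ∑ l, c₃ * b (x i) (y j) (z l)) fun _ => c₂]
    exact Finset.sum_congr rfl fun j _ => congrArg _ (sum_piWt_mul_average hp₃ hM₃ _)
  have e₂ : ∀ x, ∑ y, piWt (fun _ => p₂) y * ∑ z, piWt (fun _ => p₃) z * B x y z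
      = ∑ i, c₁ * ∑ v, p₂ v * ∑ w, p₃ w * b (x i) v w := by
    intro x
    simp_rw [e₃]
    rw [sum_mul_sum_mul (piWt fun _ => p₂)
      (fun i y => ∑ j, c₂ * ∑ w, p₃ w * b (x i) (y j) w) fun _ => c₁]
    exact Finset.sum_congr rfl fun i _ => congrArg _
      (sum_piWt_mul_average hp₂ hM₂ fun v => ∑ w, p₃ w * b (x i) v w)
  have e₁ : ∑ x, piWt (fun _ => p₁) x * ∑ y, piWt (fun _ => p₂) y *
      ∑ z, piWt (fun _ => p₃) z * B x y z ≤ τ₀ := by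
    simp_rw [e₂]
    rw [sum_piWt_mul_average hp₁ hM₁ fun u => ∑ v, p₂ v * ∑ w, p₃ w * b u v w]
    exact h₀
  obtain ⟨x, hx⟩ := hP₁.exists_le (f := fun x => familyCost φ₁ bad₁ cnt₁ d₁ x
      + ∑ y, piWt (fun _ => p₂) y * (familyCost φ₂ bad₂ cnt₂ d₂ y
        + ∑ z, piWt (fun _ => p₃) z * (familyCost φ₃ bad₃ cnt₃ d₃ z + B x y z))) (c := τ) (by
    simp_rw [mul_add, Finset.sum_add_distrib, mul_add, Finset.sum_add_distrib, ← Finset.sum_mul,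
      hP₁.2, hP₂.2, one_mul]
    rw [hP₁.sum_mul_const_add]
    linarith)
  obtain ⟨y, hy⟩ := hP₂.exists_le (f := fun y => familyCost φ₁ bad₁ cnt₁ d₁ x
      + (familyCost φ₂ bad₂ cnt₂ d₂ y
        + ∑ z, piWt (fun _ => p₃) z * (familyCost φ₃ bad₃ cnt₃ d₃ z + B x y z))) (c := τ) (by
    rw [hP₂.sum_mul_const_add]
    exact hx)
  obtain ⟨z, hz⟩ := hP₃.exists_le (f := fun z => familyCost φ₁ bad₁ cnt₁ d₁ x
      + (familyCost φ₂ bad₂ cnt₂ d₂ y + (familyCost φ₃ bad₃ cnt₃ d₃ z + B x y z))) (c := τ) (by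
    rw [hP₃.sum_mul_const_add, hP₃.sum_mul_const_add]
    exact hy)
  have n₁ := familyCost_nonneg hφ₁ bad₁ cnt₁ d₁ x
  have n₂ := familyCost_nonneg hφ₂ bad₂ cnt₂ d₂ y
  have n₃ := familyCost_nonneg hφ₃ bad₃ cnt₃ d₃ z
  have g₁ : 0 ≤ c₁ := by positivity
  have g₂ : 0 ≤ c₂ := by positivity
  have g₃ : 0 ≤ c₃ := by positivity
  have hss : ∀ {A A' : Type} [Fintype A] [Fintype A'] {f : A → A' → ℝ},
      (∀ a a', 0 ≤ f a a') → 0 ≤ ∑ a, ∑ a', f a a' := fun hf =>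
    Finset.sum_nonneg fun a _ => Finset.sum_nonneg fun a' _ => hf a a'
  obtain ⟨ι₁, i₁, φ₁', ψ₁, nb₁, ct₁⟩ := exists_subfamily hk₁ hφ₁ hcnt₁ (bad := bad₁) x
    (ψ := fun i => c₂ * c₃ * ∑ j, ∑ l, b (x i) (y j) (z l))
    (fun i => mul_nonneg (mul_nonneg g₂ g₃) (hss fun _ _ => hb _ _ _)) hτ1 (d := d₁) (by
      have : B x y z = c₁ * ∑ i, c₂ * c₃ * ∑ j, ∑ l, b (x i) (y j) (z l) := by
        simp only [hB, Finset.mul_sum, mul_assoc]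
      rw [← hc₁, ← this]
      linarith)
  obtain ⟨ι₂, i₂, φ₂', ψ₂, nb₂, ct₂⟩ := exists_subfamily hk₂ hφ₂ hcnt₂ (bad := bad₂) y
    (ψ := fun j => c₁ * c₃ * ∑ i, ∑ l, b (x i) (y j) (z l))
    (fun i => mul_nonneg (mul_nonneg g₁ g₃) (hss fun _ _ => hb _ _ _)) hτ1 (d := d₂) (by
      have : B x y z = c₂ * ∑ j, c₁ * c₃ * ∑ i, ∑ l, b (x i) (y j) (z l) := by
        simp only [hB, Finset.mul_sum]
        rw [Finset.sum_comm]
        exact Finset.sum_congr rfl fun i _ => Finset.sum_congr rfl fun j _ =>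
          Finset.sum_congr rfl fun l _ => by ring
      rw [← hc₂, ← this]
      linarith)
  obtain ⟨ι₃, i₃, φ₃', ψ₃, nb₃, ct₃⟩ := exists_subfamily hk₃ hφ₃ hcnt₃ (bad := bad₃) z
    (ψ := fun l => c₁ * c₂ * ∑ i, ∑ j, b (x i) (y j) (z l))
    (fun i => mul_nonneg (mul_nonneg g₁ g₂) (hss fun _ _ => hb _ _ _)) hτ1 (d := d₃) (by
      have : B x y z = c₃ * ∑ l, c₁ * c₂ * ∑ i, ∑ j, b (x i) (y j) (z l) := by
        simp only [hB, Finset.mul_sum]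
        simp_rw [Finset.sum_comm (s := (univ : Finset (Fin (2 * k₂))))]
        rw [Finset.sum_comm]
        exact Finset.sum_congr rfl fun i _ => Finset.sum_congr rfl fun j _ =>
          Finset.sum_congr rfl fun l _ => by ring
      rw [← hc₃, ← this]
      linarith)
  have hrestrict : ∀ {a a' : ℕ} {ι : Fin a → Fin (2 * a)} {ι' : Fin a' → Fin (2 * a')}
      {f : Fin (2 * a) → Fin (2 * a') → ℝ}, 0 < a → 0 < a' → Function.Injective ι →
      Function.Injective ι' → (∀ i j, 0 ≤ f i j) →
      ((2 * a : ℕ) : ℝ)⁻¹ * ((2 * a' : ℕ) : ℝ)⁻¹ * ∑ i, ∑ j, f i j ≤ 2 * τ →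
      ∑ i, ∑ j, f (ι i) (ι' j) ≤ 8 * τ * (a * a') := by
    intro a a' ι ι' f ha ha' hι hι' hf hle
    have ha0 : (0 : ℝ) < a := by exact_mod_cast ha
    have ha0' : (0 : ℝ) < a' := by exact_mod_cast ha'
    have h1 : ∑ i, ∑ j, f (ι i) (ι' j) ≤ ∑ i, ∑ j, f i j :=
      (Finset.sum_le_sum fun i _ => sum_comp_le_sum_of_injective hι' fun j => hf (ι i) j).trans
        (sum_comp_le_sum_of_injective hι fun i => Finset.sum_nonneg fun j _ => hf i j)
    rw [← mul_inv, inv_mul_le_iff₀ (by positivity)] at hle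
    push_cast at hle
    linarith
  exact ⟨x ∘ ι₁, y ∘ ι₂, z ∘ ι₃,
    ⟨φ₁', nb₁, ct₁, fun i => hrestrict hk₂ hk₃ i₂ i₃ (fun _ _ => hb _ _ _) (ψ₁ i)⟩,
    ⟨φ₂', nb₂, ct₂, fun j => hrestrict hk₁ hk₃ i₁ i₃ (fun _ _ => hb _ _ _) (ψ₂ j)⟩,
    ⟨φ₃', nb₃, ct₃, fun l => hrestrict hk₁ hk₂ i₁ i₂ (fun _ _ => hb _ _ _) (ψ₃ l)⟩⟩

end Families

section ListDecoding

variable {V B : Type*} [Fintype B]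

/-- The union of the typical sets of the members of a list. -/
def listDec {V B : Type*} (T : V → Finset B) {K : ℕ} (β : Fin K → V) : Finset B :=
  univ.biUnion fun i => T (β i)

/-- The probability that input `v` triggers the decoding set of the list `β`. -/
def listHit {V B : Type*} (w : V → B → ℝ) (T : V → Finset B) {K : ℕ} (β : Fin K → V) (v : V) : ℝ :=
  ∑ y ∈ listDec T β, w v y

/-- Average missed detection probability along the list plus average false detection probability
over all inputs. -/
def listCost {V B : Type*} [Fintype V] [Fintype B] (w : V → B → ℝ) (T : V → Finset B) {K : ℕ}
    (β : Fin K → V) : ℝ :=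
  (K : ℝ)⁻¹ * ∑ i, ∑ y ∈ (T (β i))ᶜ, w (β i) y + (Fintype.card V : ℝ)⁻¹ * ∑ v, listHit w T β v

/-- The list `β` triggers the decoding set of `β'` too often. -/
def listBad {V B : Type*} [Fintype V] (w : V → B → ℝ) (T : V → Finset B) (ε : ℝ) {K : ℕ}
    (β β' : Fin K → V) : Prop :=
  (Fintype.card V : ℝ)⁻¹ * ∑ v, listHit w T β' v ≤ ε ∧ 4 * ε * K ≤ ∑ i, listHit w T β' (β i)

theorem sum_mem_nonneg {w : V → B → ℝ} (hw : IsChannel w) (v : V) (D : Finset B) :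
    0 ≤ ∑ y ∈ D, w v y :=
  Finset.sum_nonneg fun y _ => hw.1 v y

theorem sum_mem_le_one {w : V → B → ℝ} (hw : IsChannel w) (v : V) (D : Finset B) :
    ∑ y ∈ D, w v y ≤ 1 := by
  rw [← hw.2 v]
  exact Finset.sum_le_sum_of_subset_of_nonneg (Finset.subset_univ _) fun y _ _ => hw.1 v y

theorem listCost_nonneg [Fintype V] {w : V → B → ℝ} (hw : IsChannel w) (T : V → Finset B) {K : ℕ}
    (β : Fin K → V) : 0 ≤ listCost w T β :=
  add_nonneg
    (mul_nonneg (by positivity) (Finset.sum_nonneg fun i _ => sum_mem_nonneg hw _ _))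
    (mul_nonneg (by positivity) (Finset.sum_nonneg fun v _ => sum_mem_nonneg hw _ _))

theorem listHit_le {w : V → B → ℝ} (hw : IsChannel w) (T : V → Finset B) {K : ℕ}
    (β : Fin K → V) (v : V) : listHit w T β v ≤ ∑ i, ∑ y ∈ T (β i), w v y := by
  have h : ∑ i, ∑ y ∈ T (β i), w v y = ∑ y, ∑ i, if y ∈ T (β i) then w v y else 0 := by
    rw [Finset.sum_comm]
    simp
  rw [h]
  refine le_trans (Finset.sum_le_sum fun y hy => ?_) (Finset.sum_le_sum_of_subset_of_nonneg
    (Finset.subset_univ (listDec T β)) fun y _ _ => Finset.sum_nonneg fun i _ => ?_)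
  · obtain ⟨i, _, hi⟩ := Finset.mem_biUnion.1 hy
    refine le_trans ?_ (Finset.single_le_sum (fun i _ => ?_) (Finset.mem_univ i))
    · simp [hi]
    · split_ifs
      exacts [hw.1 v y, le_rfl]
  · split_ifs
    exacts [hw.1 v y, le_rfl]

theorem sum_listWt_mul_listCost_le [Fintype V] [Nonempty V] {w : V → B → ℝ} (hw : IsChannel w)
    {T : V → Finset B} {σ : ℝ} {K : ℕ} (hK : 0 < K)
    (hmiss : (Fintype.card V : ℝ)⁻¹ * ∑ v, ∑ y ∈ (T v)ᶜ, w v y ≤ σ)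
    (hcross : K * ((Fintype.card V : ℝ)⁻¹ * ∑ v', (Fintype.card V : ℝ)⁻¹ *
      ∑ v, ∑ y ∈ T v', w v y) ≤ σ) :
    ∑ β : Fin K → V, listWt V K β * listCost w T β ≤ 2 * σ := by
  have hK0 : (0 : ℝ) < K := by exact_mod_cast hK
  have hpt : ∀ β : Fin K → V, listCost w T β ≤ (K : ℝ)⁻¹ * ∑ i, ∑ y ∈ (T (β i))ᶜ, w (β i) y
      + ∑ i, (Fintype.card V : ℝ)⁻¹ * ∑ v, ∑ y ∈ T (β i), w v y := by
    intro β
    refine add_le_add le_rfl ?_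
    rw [← Finset.mul_sum, Finset.sum_comm]
    exact mul_le_mul_of_nonneg_left (Finset.sum_le_sum fun v _ => listHit_le hw T β v)
      (by positivity)
  refine (Finset.sum_le_sum fun β _ =>
    mul_le_mul_of_nonneg_left (hpt β) ((isPMF_listWt K).1 β)).trans ?_
  simp_rw [mul_add, Finset.sum_add_distrib, mul_left_comm _ (K : ℝ)⁻¹]
  rw [← Finset.mul_sum, sum_listWt_mul_sum (fun v => ∑ y ∈ (T v)ᶜ, w v y),
    sum_listWt_mul_sum (fun v' => (Fintype.card V : ℝ)⁻¹ * ∑ v, ∑ y ∈ T v', w v y),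
    inv_mul_cancel_left₀ hK0.ne']
  linarith

theorem sum_listWt_mul_listBad_le [Fintype V] [Nonempty V] {w : V → B → ℝ} (hw : IsChannel w)
    (T : V → Finset B) (ε : ℝ) {K : ℕ} (β' : Fin K → V) :
    ∑ β, listWt V K β * (if listBad w T ε β β' then 1 else 0) ≤ Real.exp (-(2 * ε * K)) := by
  by_cases h : (Fintype.card V : ℝ)⁻¹ * ∑ v, listHit w T β' v ≤ ε
  · simp only [listBad, h, true_and]
    exact sum_listWt_ge_le (fun v => sum_mem_nonneg hw v _) (fun v => sum_mem_le_one hw v _) h K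
  · simp [listBad, h, Real.exp_nonneg]

/-- Expected cost of a random family of lists with two receivers. -/
theorem sum_piWt_mul_familyCost_listWt_le {B' : Type*} [Fintype V] [Fintype B'] [Nonempty V] {w : V → B → ℝ}
    {w' : V → B' → ℝ} (hw : IsChannel w) (hw' : IsChannel w') {T : V → Finset B}
    {T' : V → Finset B'} {σ ε : ℝ} {k K : ℕ} (hk : 0 < k) (hK : 0 < K)
    (hmiss : (Fintype.card V : ℝ)⁻¹ * ∑ v, ∑ y ∈ (T v)ᶜ, w v y ≤ σ)
    (hcross : K * ((Fintype.card V : ℝ)⁻¹ * ∑ v', (Fintype.card V : ℝ)⁻¹ *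
      ∑ v, ∑ y ∈ T v', w v y) ≤ σ)
    (hmiss' : (Fintype.card V : ℝ)⁻¹ * ∑ v, ∑ y ∈ (T' v)ᶜ, w' v y ≤ σ)
    (hcross' : K * ((Fintype.card V : ℝ)⁻¹ * ∑ v', (Fintype.card V : ℝ)⁻¹ *
      ∑ v, ∑ y ∈ T' v', w' v y) ≤ σ)
    (hexp : ((2 * k : ℕ) : ℝ) ^ 2 * Real.exp (-(2 * ε * K)) ≤ σ)
    (hdeg : (Fintype.card V : ℝ) * (Fintype.card V + 1) / k ≤ σ) :
    ∑ ω : Fin (2 * k) → Fin K → V, piWt (fun _ => listWt V K) ω *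
      familyCost (fun β => listCost w T β + listCost w' T' β)
        (fun β β' => listBad w T ε β β' ∨ listBad w' T' ε β β') listCount
        (K / Fintype.card V) ω ≤ 7 * σ := by
  have hP := isPMF_listWt (V := V) K
  have hN0 : (0 : ℝ) < Fintype.card V := by exact_mod_cast Fintype.card_pos
  have hK0 : (0 : ℝ) < K := by exact_mod_cast hK
  have hk0 : (0 : ℝ) < k := by exact_mod_cast hk
  have hK1 : (1 : ℝ) ≤ K := by exact_mod_cast hK
  refine (sum_piWt_mul_familyCost_le hP (by omega) _ _ (d := K / Fintype.card V)
    (e := K / Fintype.card V + (K / Fintype.card V) ^ 2) (by positivity)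
    (fun v => sum_listWt_mul_listCount K v) fun v => ?_).trans ?_
  · have := sum_listWt_mul_listCount_mul_le K v v
    simp_rw [sq (listCount _ v)]
    simpa using this
  have h1 : ∑ β, listWt V K β * (listCost w T β + listCost w' T' β) ≤ 4 * σ := by
    simp_rw [mul_add, Finset.sum_add_distrib]
    linarith [sum_listWt_mul_listCost_le hw hK hmiss hcross,
      sum_listWt_mul_listCost_le hw' hK hmiss' hcross']
  have h2 : ∑ β, ∑ β', listWt V K β * (listWt V K β' *
      @ite ℝ (listBad w T ε β β' ∨ listBad w' T' ε β β') (Classical.propDecidable _) 1 0)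
      ≤ 2 * Real.exp (-(2 * ε * K)) := by
    rw [Finset.sum_comm]
    calc _ ≤ ∑ β', listWt V K β' * (2 * Real.exp (-(2 * ε * K))) := by
          refine Finset.sum_le_sum fun β' _ => ?_
          simp_rw [mul_left_comm _ (listWt V K β')]
          rw [← Finset.mul_sum]
          refine mul_le_mul_of_nonneg_left ?_ (hP.1 β')
          have hor : ∀ β, @ite ℝ (listBad w T ε β β' ∨ listBad w' T' ε β β') (Classical.propDecidable _) 1 0
              ≤ (if listBad w T ε β β' then 1 else 0) + if listBad w' T' ε β β' then 1 else 0 := by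
            intro β
            split_ifs <;> simp_all
          refine (Finset.sum_le_sum fun β _ =>
            mul_le_mul_of_nonneg_left (hor β) (hP.1 β)).trans ?_
          simp_rw [mul_add, Finset.sum_add_distrib]
          linarith [sum_listWt_mul_listBad_le hw T ε β', sum_listWt_mul_listBad_le hw' T' ε β']
      _ = _ := by rw [← Finset.sum_mul, hP.2, one_mul]
  have h3 : (Fintype.card V : ℝ) * ((K / Fintype.card V + (K / Fintype.card V) ^ 2) /
      ((2 * k : ℕ) * (K / Fintype.card V) ^ 2)) ≤ σ := by
    refine le_trans ?_ hdeg
    have e : (Fintype.card V : ℝ) * ((K / Fintype.card V + (K / Fintype.card V) ^ 2) /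
      ((2 * k : ℕ) * (K / Fintype.card V) ^ 2))
      = Fintype.card V * (Fintype.card V / K + 1) / (2 * k) := by
      push_cast
      field_simp
    rw [e]
    gcongr
    · exact div_le_self hN0.le hK1
    · linarith
  have h4 := mul_le_mul_of_nonneg_left h2 (sq_nonneg ((2 * k : ℕ) : ℝ))
  linarith

end ListDecoding

section TripleWeights

variable {V : Type*} [Fintype V]

/-- The normalised product of three weights, replaced by the uniform weight when the
normalising constant is small. -/
def tripleWt {V : Type*} [Fintype V] (s : ℝ) (a b c : V → ℝ) (v : V) : ℝ :=
  if ∑ u, a u * b u * c u < s / 2 then unifWt V v else a v * b v * c v / ∑ u, a u * b u * c u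

theorem tripleWt_comm (s : ℝ) (a b c : V → ℝ) : tripleWt s a b c = tripleWt s b a c := by
  funext v
  simp only [tripleWt, mul_comm (a _) (b _)]

theorem tripleWt_rotate (s : ℝ) (a b c : V → ℝ) : tripleWt s a b c = tripleWt s c a b := by
  funext v
  have h : ∀ u, c u * a u * b u = a u * b u * c u := fun u => by ring
  simp only [tripleWt, h]

theorem isPMF_tripleWt [Nonempty V] {s : ℝ} (hs : 0 < s) {a b c : V → ℝ} (ha : ∀ v, 0 ≤ a v)
    (hb : ∀ v, 0 ≤ b v) (hc : ∀ v, 0 ≤ c v) : IsPMF (tripleWt s a b c) := by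
  by_cases h : ∑ u, a u * b u * c u < s / 2
  · have : tripleWt s a b c = unifWt V := by
      funext v
      simp [tripleWt, h]
    rw [this]
    exact isPMF_unifWt
  · have hpos : 0 < ∑ u, a u * b u * c u := by linarith
    refine ⟨fun v => ?_, ?_⟩
    · simp only [tripleWt, h, if_false]
      exact div_nonneg (mul_nonneg (mul_nonneg (ha v) (hb v)) (hc v)) hpos.le
    · simp only [tripleWt, h, if_false]
      rw [← Finset.sum_div, div_self hpos.ne']

theorem sum_tripleWt_mul_le [Nonempty V] {s : ℝ} (hs : 0 < s) {a b c : V → ℝ} (ha : ∀ v, 0 ≤ a v)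
    (hb : ∀ v, 0 ≤ b v) (hc : ∀ v, 0 ≤ c v) {f : V → ℝ} (hf : ∀ v, 0 ≤ f v) (hf1 : ∀ v, f v ≤ 1) :
    ∑ v, tripleWt s a b c v * f v
      ≤ (if ∑ u, a u * b u * c u < s / 2 then 1 else 0) + 2 / s * ∑ v, a v * b v * c v * f v := by
  have hnn : ∀ v, 0 ≤ a v * b v * c v := fun v => mul_nonneg (mul_nonneg (ha v) (hb v)) (hc v)
  have hnn' : 0 ≤ ∑ v, a v * b v * c v * f v :=
    Finset.sum_nonneg fun v _ => mul_nonneg (hnn v) (hf v)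
  have hq := isPMF_tripleWt hs ha hb hc
  split_ifs with h
  · have h1 : ∑ v, tripleWt s a b c v * f v ≤ 1 := by
      rw [← hq.2]
      exact Finset.sum_le_sum fun v _ => mul_le_of_le_one_right (hq.1 v) (hf1 v)
    have : 0 ≤ 2 / s * ∑ v, a v * b v * c v * f v := by positivity
    linarith
  · simp only [tripleWt, h, if_false, zero_add, div_mul_eq_mul_div]
    rw [← Finset.sum_div, div_le_div_iff₀ (by linarith) hs]
    nlinarith

/-- Averaging over two of the three weights leaves essentially the third one. -/
theorem sum_sum_tripleWt_mul_le [Nonempty V] {J L : Type*} [Fintype J] [Fintype L] {s : ℝ}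
    (hs : 0 < s) {a : V → ℝ} {b : J → V → ℝ} {c : L → V → ℝ} (ha : ∀ v, 0 ≤ a v)
    (hb : ∀ j v, 0 ≤ b j v) (hc : ∀ l v, 0 ≤ c l v) {d e η : ℝ}
    (hbd : ∀ v, ∑ j, b j v ≤ d) (hce : ∀ v, ∑ l, c l v ≤ e)
    (hη : ∑ j, ∑ l, (if ∑ u, a u * b j u * c l u < s / 2 then (1 : ℝ) else 0) ≤ η)
    {f : V → ℝ} (hf : ∀ v, 0 ≤ f v) (hf1 : ∀ v, f v ≤ 1) :
    ∑ j, ∑ l, ∑ v, tripleWt s a (b j) (c l) v * f v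
      ≤ η + 2 / s * (d * e) * ∑ v, a v * f v := by
  have h1 : ∑ j, ∑ l, ∑ v, a v * b j v * c l v * f v ≤ d * e * ∑ v, a v * f v := by
    calc ∑ j, ∑ l, ∑ v, a v * b j v * c l v * f v
        = ∑ v, (∑ j, b j v) * (∑ l, c l v) * (a v * f v) := by
          simp_rw [Finset.sum_mul_sum, Finset.sum_mul]
          refine ((Finset.sum_congr rfl fun j _ => Finset.sum_comm).trans Finset.sum_comm).trans ?_
          exact Finset.sum_congr rfl fun v _ => Finset.sum_congr rfl fun j _ =>
            Finset.sum_congr rfl fun l _ => by ring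
      _ ≤ ∑ v, d * e * (a v * f v) := by
          refine Finset.sum_le_sum fun v _ => mul_le_mul_of_nonneg_right ?_
            (mul_nonneg (ha v) (hf v))
          have h0 : 0 ≤ ∑ l, c l v := Finset.sum_nonneg fun l _ => hc l v
          have h0' : 0 ≤ ∑ j, b j v := Finset.sum_nonneg fun l _ => hb l v
          exact mul_le_mul (hbd v) (hce v) h0 (h0'.trans (hbd v))
      _ = _ := by rw [Finset.mul_sum]
  calc _ ≤ ∑ j, ∑ l, ((if ∑ u, a u * b j u * c l u < s / 2 then (1 : ℝ) else 0)
        + 2 / s * ∑ v, a v * b j v * c l v * f v) :=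
        Finset.sum_le_sum fun j _ => Finset.sum_le_sum fun l _ =>
          sum_tripleWt_mul_le hs ha (hb j) (hc l) hf hf1
    _ = ∑ j, ∑ l, (if ∑ u, a u * b j u * c l u < s / 2 then (1 : ℝ) else 0)
        + 2 / s * ∑ j, ∑ l, ∑ v, a v * b j v * c l v * f v := by
        simp_rw [Finset.sum_add_distrib, ← Finset.mul_sum]
    _ ≤ η + 2 / s * (d * e * ∑ v, a v * f v) := by gcongr
    _ = _ := by ring

end TripleWeights

/-- Identification errors of a code whose inputs are essentially uniform on the lists `α m`. -/
theorem list_code_errors {V B : Type*} [Fintype V] [Fintype B] {w : V → B → ℝ}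
    (hw : IsChannel w) {T : V → Finset B} {ε : ℝ} {k K : ℕ} (hK : 0 < K) {α : Fin k → Fin K → V}
    {E : Fin k → (V → ℝ) → ℝ}
    (hE : ∀ m f, (∀ v, 0 ≤ f v) → (∀ v, f v ≤ 1) →
      E m f ≤ 4 * ε + 32 * ((K : ℝ)⁻¹ * ∑ i, f (α m i)))
    (hcost : ∀ m, listCost w T (α m) ≤ ε)
    (hbad : ∀ m m', m ≠ m' → ¬ listBad w T ε (α m) (α m')) :
    (∀ m, E m (fun v => ∑ y ∈ (listDec T (α m))ᶜ, w v y) ≤ 132 * ε) ∧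
      ∀ m m', m ≠ m' → E m (fun v => ∑ y ∈ listDec T (α m'), w v y) ≤ 132 * ε := by
  have hK0 : (0 : ℝ) < K := by exact_mod_cast hK
  have hmiss0 : ∀ m, 0 ≤ (K : ℝ)⁻¹ * ∑ i, ∑ y ∈ (T (α m i))ᶜ, w (α m i) y := fun m =>
    mul_nonneg (by positivity) (Finset.sum_nonneg fun i _ => sum_mem_nonneg hw _ _)
  have hhit0 : ∀ m, 0 ≤ (Fintype.card V : ℝ)⁻¹ * ∑ v, listHit w T (α m) v := fun m =>
    mul_nonneg (by positivity) (Finset.sum_nonneg fun i _ => sum_mem_nonneg hw _ _)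
  refine ⟨fun m => ?_, fun m m' hmm => ?_⟩
  · refine (hE m _ (fun v => sum_mem_nonneg hw v _) fun v => sum_mem_le_one hw v _).trans ?_
    have h1 : (K : ℝ)⁻¹ * ∑ i, ∑ y ∈ (listDec T (α m))ᶜ, w (α m i) y
        ≤ (K : ℝ)⁻¹ * ∑ i, ∑ y ∈ (T (α m i))ᶜ, w (α m i) y := by
      refine mul_le_mul_of_nonneg_left (Finset.sum_le_sum fun i _ =>
        Finset.sum_le_sum_of_subset_of_nonneg ?_ fun y _ _ => hw.1 _ y) (by positivity)
      exact Finset.compl_subset_compl.2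
        (Finset.subset_biUnion_of_mem (fun i => T (α m i)) (Finset.mem_univ i))
    have h2 := hcost m
    unfold listCost at h2
    linarith [hhit0 m, hmiss0 m]
  · refine (hE m _ (fun v => sum_mem_nonneg hw v _) fun v => sum_mem_le_one hw v _).trans ?_
    have h2 := hcost m'
    unfold listCost at h2
    have h3 : ∑ i, ∑ y ∈ listDec T (α m'), w (α m i) y < 4 * ε * K := by
      by_contra! h
      exact hbad m m' hmm ⟨by linarith [hmiss0 m'], h⟩
    have h4 : (K : ℝ)⁻¹ * ∑ i, ∑ y ∈ listDec T (α m'), w (α m i) y ≤ 4 * ε := by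
      rw [inv_mul_le_iff₀ hK0]
      linarith
    linarith

/-- Existence of a good broadcast identification code on an abstract pool `V` of inputs. -/
theorem exists_pool_code {V BY BZ : Type*} [Fintype V] [Nonempty V] [Fintype BY] [Fintype BZ]
    {wY : V → BY → ℝ} {wZ : V → BZ → ℝ} (hwY : IsChannel wY) (hwZ : IsChannel wZ)
    {TY : V → Finset BY} {TZ : V → Finset BZ} {σ ε : ℝ} (hσε : 44 * σ ≤ ε) (hσ : 22 * σ < 1)
    {K₁ K₂ K₃ k₁ k₂ k₃ : ℕ} (hK₁ : 0 < K₁) (hK₂ : 0 < K₂) (hK₃ : 0 < K₃) (hk₁ : 0 < k₁)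
    (hk₂ : 0 < k₂) (hk₃ : 0 < k₃) (hKV₁ : K₁ ≤ Fintype.card V) (hKV₂ : K₂ ≤ Fintype.card V)
    (hKV₃ : K₃ ≤ Fintype.card V)
    (hmissY : (Fintype.card V : ℝ)⁻¹ * ∑ v, ∑ y ∈ (TY v)ᶜ, wY v y ≤ σ)
    (hmissZ : (Fintype.card V : ℝ)⁻¹ * ∑ v, ∑ y ∈ (TZ v)ᶜ, wZ v y ≤ σ)
    (hcross₁Y : K₁ * ((Fintype.card V : ℝ)⁻¹ * ∑ v', (Fintype.card V : ℝ)⁻¹ *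
      ∑ v, ∑ y ∈ TY v', wY v y) ≤ σ)
    (hcross₁Z : K₁ * ((Fintype.card V : ℝ)⁻¹ * ∑ v', (Fintype.card V : ℝ)⁻¹ *
      ∑ v, ∑ y ∈ TZ v', wZ v y) ≤ σ)
    (hcross₂ : K₂ * ((Fintype.card V : ℝ)⁻¹ * ∑ v', (Fintype.card V : ℝ)⁻¹ *
      ∑ v, ∑ y ∈ TY v', wY v y) ≤ σ)
    (hcross₃ : K₃ * ((Fintype.card V : ℝ)⁻¹ * ∑ v', (Fintype.card V : ℝ)⁻¹ *
      ∑ v, ∑ y ∈ TZ v', wZ v y) ≤ σ)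
    (hexp₁ : ((2 * k₁ : ℕ) : ℝ) ^ 2 * Real.exp (-(2 * ε * K₁)) ≤ σ)
    (hexp₂ : ((2 * k₂ : ℕ) : ℝ) ^ 2 * Real.exp (-(2 * ε * K₂)) ≤ σ)
    (hexp₃ : ((2 * k₃ : ℕ) : ℝ) ^ 2 * Real.exp (-(2 * ε * K₃)) ≤ σ)
    (hdeg₁ : (Fintype.card V : ℝ) * (Fintype.card V + 1) / k₁ ≤ σ)
    (hdeg₂ : (Fintype.card V : ℝ) * (Fintype.card V + 1) / k₂ ≤ σ)
    (hdeg₃ : (Fintype.card V : ℝ) * (Fintype.card V + 1) / k₃ ≤ σ)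
    (htriple : 32 / ((K₁ * K₂ * K₃ : ℝ) / (Fintype.card V : ℝ) ^ 2) ≤ σ) :
    ∃ (Q : Fin k₁ → Fin k₂ → Fin k₃ → V → ℝ) (DcY : Fin k₁ → Finset BY) (DY : Fin k₂ → Finset BY)
      (DcZ : Fin k₁ → Finset BZ) (DZ : Fin k₃ → Finset BZ),
      (∀ i j l, IsPMF (Q i j l)) ∧
      ((∀ i, (k₂ * k₃ : ℝ)⁻¹ * ∑ j, ∑ l, ∑ v, Q i j l v * ∑ y ∈ (DcY i)ᶜ, wY v y ≤ 132 * ε) ∧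
        ∀ i i', i ≠ i' →
          (k₂ * k₃ : ℝ)⁻¹ * ∑ j, ∑ l, ∑ v, Q i j l v * ∑ y ∈ DcY i', wY v y ≤ 132 * ε) ∧
      ((∀ j, (k₁ * k₃ : ℝ)⁻¹ * ∑ i, ∑ l, ∑ v, Q i j l v * ∑ y ∈ (DY j)ᶜ, wY v y ≤ 132 * ε) ∧
        ∀ j j', j ≠ j' →
          (k₁ * k₃ : ℝ)⁻¹ * ∑ i, ∑ l, ∑ v, Q i j l v * ∑ y ∈ DY j', wY v y ≤ 132 * ε) ∧
      ((∀ i, (k₂ * k₃ : ℝ)⁻¹ * ∑ j, ∑ l, ∑ v, Q i j l v * ∑ y ∈ (DcZ i)ᶜ, wZ v y ≤ 132 * ε) ∧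
        ∀ i i', i ≠ i' →
          (k₂ * k₃ : ℝ)⁻¹ * ∑ j, ∑ l, ∑ v, Q i j l v * ∑ y ∈ DcZ i', wZ v y ≤ 132 * ε) ∧
      ((∀ l, (k₁ * k₂ : ℝ)⁻¹ * ∑ i, ∑ j, ∑ v, Q i j l v * ∑ y ∈ (DZ l)ᶜ, wZ v y ≤ 132 * ε) ∧
        ∀ l l', l ≠ l' →
          (k₁ * k₂ : ℝ)⁻¹ * ∑ i, ∑ j, ∑ v, Q i j l v * ∑ y ∈ DZ l', wZ v y ≤ 132 * ε) := by
  have hK₁' : (0 : ℝ) < K₁ := by exact_mod_cast hK₁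
  have hK₂' : (0 : ℝ) < K₂ := by exact_mod_cast hK₂
  have hK₃' : (0 : ℝ) < K₃ := by exact_mod_cast hK₃
  have hk₁' : (0 : ℝ) < k₁ := by exact_mod_cast hk₁
  have hk₂' : (0 : ℝ) < k₂ := by exact_mod_cast hk₂
  have hk₃' : (0 : ℝ) < k₃ := by exact_mod_cast hk₃
  have hN : (0 : ℝ) < Fintype.card V := by exact_mod_cast Fintype.card_pos
  obtain ⟨α, β, γ, ⟨hα, nα, cα, bα⟩, ⟨hβ, nβ, cβ, bβ⟩, ⟨hγ, nγ, cγ, bγ⟩⟩ := exists_three_families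
    (isPMF_listWt (V := V) K₁) (isPMF_listWt (V := V) K₂) (isPMF_listWt (V := V) K₃)
    (fun a => add_nonneg (listCost_nonneg hwY TY a) (listCost_nonneg hwZ TZ a))
    (fun a => add_nonneg (listCost_nonneg hwY TY a) (listCost_nonneg hwY TY a))
    (fun a => add_nonneg (listCost_nonneg hwZ TZ a) (listCost_nonneg hwZ TZ a))
    listCount_nonneg listCount_nonneg listCount_nonneg
    (fun x y z => by split_ifs <;> norm_num) hk₁ hk₂ hk₃
    (sum_piWt_mul_familyCost_listWt_le hwY hwZ hk₁ hK₁ hmissY hcross₁Y hmissZ hcross₁Z hexp₁ hdeg₁)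
    (sum_piWt_mul_familyCost_listWt_le hwY hwY hk₂ hK₂ hmissY hcross₂ hmissY hcross₂ hexp₂ hdeg₂)
    (sum_piWt_mul_familyCost_listWt_le hwZ hwZ hk₃ hK₃ hmissZ hcross₃ hmissZ hcross₃ hexp₃ hdeg₃)
    ((sum_listWt_tripleCount_lt_le hK₁ hK₂ hK₃ hKV₁ hKV₂ hKV₃).trans htriple)
    (τ := 22 * σ) (by linarith) hσ
  set s : ℝ := (K₁ * K₂ * K₃ : ℝ) / (Fintype.card V : ℝ) ^ 2 with hs
  have hs0 : 0 < s := by positivity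
  have hE₁ : ∀ i (f : V → ℝ), (∀ v, 0 ≤ f v) → (∀ v, f v ≤ 1) →
      (k₂ * k₃ : ℝ)⁻¹ * ∑ j, ∑ l, ∑ v,
        tripleWt s (listCount (α i)) (listCount (β j)) (listCount (γ l)) v * f v
      ≤ 4 * ε + 32 * ((K₁ : ℝ)⁻¹ * ∑ t, f (α i t)) := by
    intro i f hf hf1
    have h := sum_sum_tripleWt_mul_le hs0 (listCount_nonneg (α i))
      (fun j => listCount_nonneg (β j)) (fun l => listCount_nonneg (γ l)) cβ cγ (bα i) hf hf1
    rw [inv_mul_le_iff₀ (by positivity)]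
    refine h.trans ?_
    rw [sum_listCount_mul]
    have e : 2 / s * (4 * ((K₂ : ℝ) / Fintype.card V) * k₂ * (4 * (K₃ / Fintype.card V) * k₃))
        = k₂ * k₃ * (32 * (K₁ : ℝ)⁻¹) := by
      rw [hs]
      field_simp
      norm_num
    rw [e]
    have := mul_le_mul_of_nonneg_right hσε (by positivity : (0 : ℝ) ≤ 4 * (k₂ * k₃))
    linarith
  have hE₂ : ∀ j (f : V → ℝ), (∀ v, 0 ≤ f v) → (∀ v, f v ≤ 1) →
      (k₁ * k₃ : ℝ)⁻¹ * ∑ i, ∑ l, ∑ v,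
        tripleWt s (listCount (α i)) (listCount (β j)) (listCount (γ l)) v * f v
      ≤ 4 * ε + 32 * ((K₂ : ℝ)⁻¹ * ∑ t, f (β j t)) := by
    intro j f hf hf1
    simp_rw [tripleWt_comm s (listCount (α _))]
    simp_rw [tripleCount, mul_comm (listCount (α _) _) (listCount (β _) _)] at bβ
    have h := sum_sum_tripleWt_mul_le hs0 (listCount_nonneg (β j))
      (fun i => listCount_nonneg (α i)) (fun l => listCount_nonneg (γ l)) cα cγ (bβ j) hf hf1
    rw [inv_mul_le_iff₀ (by positivity)]
    refine h.trans ?_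
    rw [sum_listCount_mul]
    have e : 2 / s * (4 * ((K₁ : ℝ) / Fintype.card V) * k₁ * (4 * (K₃ / Fintype.card V) * k₃))
        = k₁ * k₃ * (32 * (K₂ : ℝ)⁻¹) := by
      rw [hs]
      field_simp
      norm_num
    rw [e]
    have := mul_le_mul_of_nonneg_right hσε (by positivity : (0 : ℝ) ≤ 4 * (k₁ * k₃))
    linarith
  have hE₃ : ∀ l (f : V → ℝ), (∀ v, 0 ≤ f v) → (∀ v, f v ≤ 1) →
      (k₁ * k₂ : ℝ)⁻¹ * ∑ i, ∑ j, ∑ v,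
        tripleWt s (listCount (α i)) (listCount (β j)) (listCount (γ l)) v * f v
      ≤ 4 * ε + 32 * ((K₃ : ℝ)⁻¹ * ∑ t, f (γ l t)) := by
    intro l f hf hf1
    simp_rw [tripleWt_rotate s (listCount (α _))]
    have hrot : ∀ i j (v : V), listCount (α i) v * listCount (β j) v * listCount (γ l) v
        = listCount (γ l) v * listCount (α i) v * listCount (β j) v := fun i j v => by ring
    have hb := bγ l
    simp_rw [tripleCount, hrot] at hb
    have h := sum_sum_tripleWt_mul_le hs0 (listCount_nonneg (γ l))
      (fun i => listCount_nonneg (α i)) (fun j => listCount_nonneg (β j)) cα cβ hb hf hf1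
    rw [inv_mul_le_iff₀ (by positivity)]
    refine h.trans ?_
    rw [sum_listCount_mul]
    have e : 2 / s * (4 * ((K₁ : ℝ) / Fintype.card V) * k₁ * (4 * (K₂ / Fintype.card V) * k₂))
        = k₁ * k₂ * (32 * (K₃ : ℝ)⁻¹) := by
      rw [hs]
      field_simp
      norm_num
    rw [e]
    have := mul_le_mul_of_nonneg_right hσε (by positivity : (0 : ℝ) ≤ 4 * (k₁ * k₂))
    linarith
  have left : ∀ {a b : ℝ}, 0 ≤ b → a + b ≤ 2 * (22 * σ) → a ≤ ε := fun h h' => by linarith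
  have right : ∀ {a b : ℝ}, 0 ≤ a → a + b ≤ 2 * (22 * σ) → b ≤ ε := fun h h' => by linarith
  refine ⟨fun i j l => tripleWt s (listCount (α i)) (listCount (β j)) (listCount (γ l)),
    fun i => listDec TY (α i), fun j => listDec TY (β j), fun i => listDec TZ (α i),
    fun l => listDec TZ (γ l), fun i j l => isPMF_tripleWt hs0 (listCount_nonneg _)
      (listCount_nonneg _) (listCount_nonneg _), ?_, ?_, ?_, ?_⟩
  · exact list_code_errors hwY hK₁ hE₁ (fun i => left (listCost_nonneg hwZ TZ _) (hα i))
      fun i i' h h' => nα i i' h (Or.inl h')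
  · exact list_code_errors hwY hK₂ hE₂ (fun i => left (listCost_nonneg hwY TY _) (hβ i))
      fun i i' h h' => nβ i i' h (Or.inl h')
  · exact list_code_errors hwZ hK₁ hE₁ (fun i => right (listCost_nonneg hwY TY _) (hα i))
      fun i i' h h' => nα i i' h (Or.inr h')
  · exact list_code_errors hwZ hK₃ hE₃ (fun i => left (listCost_nonneg hwZ TZ _) (hγ i))
      fun i i' h h' => nγ i i' h (Or.inl h')

section Pool

theorem IsPMF.sum_pair_average_le {L : Type*} [Fintype L] {p : L → ℝ} (hp : IsPMF p) {N : ℕ}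
    (hN : 0 < N) {F : L → L → ℝ} {e : ℝ} (he : 0 ≤ e) (hF : ∀ a, F a a ≤ 1)
    (hFe : ∀ b, ∑ a, p a * F a b ≤ e) :
    ∑ ω : Fin N → L, piWt (fun _ => p) ω *
        ∑ v', (N : ℝ)⁻¹ * ∑ v, (N : ℝ)⁻¹ * F (ω v) (ω v') ≤ (N : ℝ)⁻¹ + e := by
  have hN' : (0 : ℝ) < N := by exact_mod_cast hN
  have hpair : ∀ v v' : Fin N, ∑ ω : Fin N → L, piWt (fun _ => p) ω * F (ω v) (ω v')
      ≤ (if v' = v then 1 else 0) + e := by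
    intro v v'
    split_ifs with h
    · subst h
      rw [sum_piWt_mul_apply (fun _ => hp.2) v' fun a => F a a]
      have : ∑ a, p a * F a a ≤ ∑ a, p a * 1 :=
        Finset.sum_le_sum fun a _ => mul_le_mul_of_nonneg_left (hF a) (hp.1 a)
      rw [← Finset.sum_mul, hp.2] at this
      linarith
    · rw [sum_piWt_mul_pair (fun _ => hp.2) h fun b a => F a b]
      have : ∑ b, p b * ∑ a, p a * F a b ≤ ∑ b, p b * e :=
        Finset.sum_le_sum fun b _ => mul_le_mul_of_nonneg_left (hFe b) (hp.1 b)
      rw [← Finset.sum_mul, hp.2] at this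
      simp only [Finset.mul_sum] at this
      linarith
  have hswap : ∀ v' : Fin N, ∑ ω : Fin N → L, piWt (fun _ => p) ω *
      ∑ v, (N : ℝ)⁻¹ * F (ω v) (ω v')
        = ∑ v, (N : ℝ)⁻¹ * ∑ ω : Fin N → L, piWt (fun _ => p) ω * F (ω v) (ω v') := fun v' =>
    sum_mul_sum_mul (piWt fun _ : Fin N => p) (fun v ω => F (ω v) (ω v')) fun _ => (N : ℝ)⁻¹
  rw [sum_mul_sum_mul (piWt fun _ : Fin N => p) (fun v' ω => ∑ v, (N : ℝ)⁻¹ * F (ω v) (ω v'))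
    fun _ => (N : ℝ)⁻¹]
  simp_rw [hswap]
  calc _ ≤ ∑ v' : Fin N, (N : ℝ)⁻¹ * ∑ v : Fin N, (N : ℝ)⁻¹ * ((if v' = v then 1 else 0) + e) := by
        gcongr with v' _ v _
        exact hpair v v'
    _ = (N : ℝ)⁻¹ + e := by
        simp only [mul_add, Finset.sum_add_distrib, mul_ite, mul_one, mul_zero,
          Finset.sum_ite_eq, Finset.mem_univ, if_true, Finset.sum_const, Finset.card_univ,
          Fintype.card_fin, nsmul_eq_mul]
        field_simp

/-- The outputs whose information density with `x` is nearly at least the mutual information. -/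
def typicalOutputs {X Y : Type*} [Fintype X] [Fintype Y] (P : X → ℝ) (W : X → Y → ℝ) (δ : ℝ) {n : ℕ} (x : Fin n → X) :
    Finset (Fin n → Y) :=
  {y | Real.exp (n * (mutInf P W - δ)) * ∏ i, outDist P W (y i) ≤ Wn W n x y}

theorem sum_piWt_mul_Wn {X Y : Type*} [Fintype X] (P : X → ℝ) (W : X → Y → ℝ) {n : ℕ} (y : Fin n → Y) :
    ∑ x : Fin n → X, piWt (fun _ => P) x * Wn W n x y = ∏ i, outDist P W (y i) := by
  unfold piWt Wn outDist
  simp_rw [← Finset.prod_mul_distrib]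
  exact sum_prod_pi fun i x => P x * W x (y i)

variable {X Y Z : Type*} [Fintype X] [Fintype Y] [Fintype Z]

theorem sum_piWt_mul_typicalOutputs_le (P : X → ℝ) {W : X → Y → ℝ} (hW : IsChannel W) (δ : ℝ)
    {n : ℕ} (x' : Fin n → X) :
    ∑ x, piWt (fun _ => P) x * ∑ y ∈ typicalOutputs P W δ x', Wn W n x y
      ≤ Real.exp (-(n * (mutInf P W - δ))) := by
  simp_rw [Finset.mul_sum]
  rw [Finset.sum_comm]
  simp_rw [sum_piWt_mul_Wn]
  have h1 : ∑ y ∈ typicalOutputs P W δ x', Wn W n x' y ≤ 1 :=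
    sum_mem_le_one (isChannel_Wn hW n) x' _
  have h2 : Real.exp (n * (mutInf P W - δ)) *
      ∑ y ∈ typicalOutputs P W δ x', ∏ i, outDist P W (y i) ≤ 1 := by
    rw [Finset.mul_sum]
    exact (Finset.sum_le_sum fun y hy => (Finset.mem_filter.1 hy).2).trans h1
  rw [Real.exp_neg, ← one_div, le_div_iff₀ (Real.exp_pos _)]
  linarith

theorem typicalOutputs_compl (P : X → ℝ) (W : X → Y → ℝ) (δ : ℝ) {n : ℕ} (x : Fin n → X) :
    (typicalOutputs P W δ x)ᶜ = Finset.univ.filter fun y => ¬ Real.exp (n * (mutInf P W - δ)) *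
      ∏ i, outDist P W (y i) ≤ Wn W n x y := by
  rw [typicalOutputs, Finset.compl_filter]

/-- A pool of codewords that is good on average, for two channels simultaneously. -/
theorem exists_codeword_pool {P : X → ℝ} (hP : IsPMF P) {W : X → Y → ℝ} {V : X → Z → ℝ}
    (hW : IsChannel W) (hV : IsChannel V) {n : ℕ} (hn : 0 < n) {δ : ℝ} (hδ : 0 < δ) {N : ℕ}
    (hN : 0 < N) {c d : ℝ} (hc : 0 ≤ c) (hd : 0 ≤ d) :
    ∃ x : Fin N → Fin n → X,
      ∑ v, (N : ℝ)⁻¹ * ∑ y ∈ (typicalOutputs P W δ (x v))ᶜ, Wn W n (x v) y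
        + ∑ v, (N : ℝ)⁻¹ * ∑ y ∈ (typicalOutputs P V δ (x v))ᶜ, Wn V n (x v) y
        + c * ∑ v', (N : ℝ)⁻¹ * ∑ v, (N : ℝ)⁻¹ *
          ∑ y ∈ typicalOutputs P W δ (x v'), Wn W n (x v) y
        + d * ∑ v', (N : ℝ)⁻¹ * ∑ v, (N : ℝ)⁻¹ *
          ∑ y ∈ typicalOutputs P V δ (x v'), Wn V n (x v) y
      ≤ 16 * (Fintype.card X * Fintype.card Y) / (n * δ ^ 2)
        + 16 * (Fintype.card X * Fintype.card Z) / (n * δ ^ 2)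
        + c * ((N : ℝ)⁻¹ + Real.exp (-(n * (mutInf P W - δ))))
        + d * ((N : ℝ)⁻¹ + Real.exp (-(n * (mutInf P V - δ)))) := by
  have hPn : IsPMF (piWt fun _ : Fin n => P) := isPMF_piWt fun _ => hP
  refine (isPMF_piWt fun _ : Fin N => hPn).exists_le ?_
  simp_rw [mul_add, Finset.sum_add_distrib]
  have hmove : ∀ (c : ℝ) (f : (Fin N → Fin n → X) → ℝ),
      ∑ ω, piWt (fun _ => piWt fun _ => P) ω * (c * f ω)
        = c * ∑ ω, piWt (fun _ => piWt fun _ => P) ω * f ω := by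
    intro c f
    rw [Finset.mul_sum]
    exact Finset.sum_congr rfl fun ω _ => by ring
  rw [hmove c, hmove d]
  rw [← mul_add, ← mul_add]
  gcongr
  · rw [sum_piWt_mul_average hPn hN fun a => ∑ y ∈ (typicalOutputs P W δ a)ᶜ, Wn W n a y]
    simp_rw [typicalOutputs_compl]
    exact sum_Wn_infoDensity_lower_tail hP hW hn hδ
  · rw [sum_piWt_mul_average hPn hN fun a => ∑ y ∈ (typicalOutputs P V δ a)ᶜ, Wn V n a y]
    simp_rw [typicalOutputs_compl]
    exact sum_Wn_infoDensity_lower_tail hP hV hn hδ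
  · exact hPn.sum_pair_average_le hN (Real.exp_pos _).le
      (F := fun a b => ∑ y ∈ typicalOutputs P W δ b, Wn W n a y)
      (fun a => sum_mem_le_one (isChannel_Wn hW n) a _)
      (sum_piWt_mul_typicalOutputs_le P hW δ)
  · exact hPn.sum_pair_average_le hN (Real.exp_pos _).le
      (F := fun a b => ∑ y ∈ typicalOutputs P V δ b, Wn V n a y)
      (fun a => sum_mem_le_one (isChannel_Wn hV n) a _)
      (sum_piWt_mul_typicalOutputs_le P hV δ)

end Pool

section CodeTransfer

/-- The image of the weight `q` under `f`. -/
def mapWt {V A : Type*} [Fintype V] (f : V → A) (q : V → ℝ) (a : A) : ℝ :=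
  ∑ v, q v * if f v = a then 1 else 0

theorem isPMF_mapWt {V A : Type*} [Fintype V] [Fintype A] {q : V → ℝ} (hq : IsPMF q) (f : V → A) :
    IsPMF (mapWt f q) := by
  refine ⟨fun a => Finset.sum_nonneg fun v _ => mul_nonneg (hq.1 v) (by positivity), ?_⟩
  unfold mapWt
  rw [Finset.sum_comm]
  simpa using hq.2

theorem sum_average_mapWt {V A I J : Type*} [Fintype V] [Fintype A] [Fintype I] [Fintype J]
    (c : ℝ) (q : I → J → V → ℝ) (f : V → A) (F : A → ℝ) :
    ∑ a, (c * ∑ i, ∑ j, mapWt f (q i j) a) * F a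
      = c * ∑ i, ∑ j, ∑ v, q i j v * F (f v) := by
  unfold mapWt
  simp_rw [mul_assoc, ← Finset.mul_sum, Finset.sum_mul]
  congr 1
  rw [Finset.sum_comm]
  refine Finset.sum_congr rfl fun i _ => ?_
  rw [Finset.sum_comm]
  refine Finset.sum_congr rfl fun j _ => ?_
  rw [Finset.sum_comm]
  refine Finset.sum_congr rfl fun v _ => ?_
  simp

set_option maxHeartbeats 1000000 in
/-- Nonasymptotic direct part. -/
theorem exists_cms_code {X Y Z : Type*} [Fintype X] [Fintype Y] [Fintype Z] {W : X → Y → Z → ℝ}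
    (hW : IsBC W) {P : X → ℝ} (hP : IsPMF P) {n : ℕ} (hn : 0 < n) {δ σ ε : ℝ} (hδ : 0 < δ)
    (hσε : 44 * σ ≤ ε) (hσ : 22 * σ < 1) {N K₁ K₂ K₃ k₁ k₂ k₃ : ℕ} (hK₁ : 0 < K₁) (hK₂ : 0 < K₂)
    (hK₃ : 0 < K₃) (hk₁ : 0 < k₁) (hk₂ : 0 < k₂) (hk₃ : 0 < k₃) (hKN₁ : K₁ ≤ N) (hKN₂ : K₂ ≤ N)
    (hKN₃ : K₃ ≤ N)
    (hpool : 16 * (Fintype.card X * Fintype.card Y) / (n * δ ^ 2)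
        + 16 * (Fintype.card X * Fintype.card Z) / (n * δ ^ 2)
        + (K₁ + K₂) * ((N : ℝ)⁻¹ + Real.exp (-(n * (mutInf P (margY W) - δ))))
        + (K₁ + K₃) * ((N : ℝ)⁻¹ + Real.exp (-(n * (mutInf P (margZ W) - δ)))) ≤ σ)
    (hexp₁ : ((2 * k₁ : ℕ) : ℝ) ^ 2 * Real.exp (-(2 * ε * K₁)) ≤ σ)
    (hexp₂ : ((2 * k₂ : ℕ) : ℝ) ^ 2 * Real.exp (-(2 * ε * K₂)) ≤ σ)
    (hexp₃ : ((2 * k₃ : ℕ) : ℝ) ^ 2 * Real.exp (-(2 * ε * K₃)) ≤ σ)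
    (hdeg₁ : (N : ℝ) * (N + 1) / k₁ ≤ σ) (hdeg₂ : (N : ℝ) * (N + 1) / k₂ ≤ σ)
    (hdeg₃ : (N : ℝ) * (N + 1) / k₃ ≤ σ)
    (htriple : 32 / ((K₁ * K₂ * K₃ : ℝ) / (N : ℝ) ^ 2) ≤ σ) :
    ∃ (Q : Fin k₁ → Fin k₂ → Fin k₃ → (Fin n → X) → ℝ)
      (DcY : Fin k₁ → Finset (Fin n → Y)) (DY : Fin k₂ → Finset (Fin n → Y))
      (DcZ : Fin k₁ → Finset (Fin n → Z)) (DZ : Fin k₃ → Finset (Fin n → Z)),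
      IsCMSIDCode n k₁ k₂ k₃ W Q DcY DY DcZ DZ (132 * ε) (132 * ε) (132 * ε) (132 * ε) := by
  have hN : 0 < N := hK₁.trans_le hKN₁
  have hWY := isChannel_margY hW
  have hWZ := isChannel_margZ hW
  obtain ⟨x, hx⟩ := exists_codeword_pool hP hWY hWZ hn hδ hN (c := K₁ + K₂) (d := K₁ + K₃)
    (by positivity) (by positivity)
  have hwY : IsChannel fun v => Wn (margY W) n (x v) :=
    ⟨fun v => (isChannel_Wn hWY n).1 (x v), fun v => (isChannel_Wn hWY n).2 (x v)⟩
  have hwZ : IsChannel fun v => Wn (margZ W) n (x v) :=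
    ⟨fun v => (isChannel_Wn hWZ n).1 (x v), fun v => (isChannel_Wn hWZ n).2 (x v)⟩
  replace hx := hx.trans hpool
  simp only [← Finset.mul_sum] at hx
  set mY := (N : ℝ)⁻¹ * ∑ v, ∑ y ∈ (typicalOutputs P (margY W) δ (x v))ᶜ, Wn (margY W) n (x v) y
    with hmY
  set mZ := (N : ℝ)⁻¹ * ∑ v, ∑ y ∈ (typicalOutputs P (margZ W) δ (x v))ᶜ, Wn (margZ W) n (x v) y
    with hmZ
  set cY := ∑ v', ∑ v, ∑ y ∈ typicalOutputs P (margY W) δ (x v'), Wn (margY W) n (x v) y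
    with hcY
  set cZ := ∑ v', ∑ v, ∑ y ∈ typicalOutputs P (margZ W) δ (x v'), Wn (margZ W) n (x v) y
    with hcZ
  have hmY0 : 0 ≤ mY := mul_nonneg (by positivity)
    (Finset.sum_nonneg fun v _ => sum_mem_nonneg hwY v _)
  have hmZ0 : 0 ≤ mZ := mul_nonneg (by positivity)
    (Finset.sum_nonneg fun v _ => sum_mem_nonneg hwZ v _)
  have hcY0 : 0 ≤ (N : ℝ)⁻¹ * ((N : ℝ)⁻¹ * cY) := mul_nonneg (by positivity)
    (mul_nonneg (by positivity)
      (Finset.sum_nonneg fun v' _ => Finset.sum_nonneg fun v _ => sum_mem_nonneg hwY v _))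
  have hcZ0 : 0 ≤ (N : ℝ)⁻¹ * ((N : ℝ)⁻¹ * cZ) := mul_nonneg (by positivity)
    (mul_nonneg (by positivity)
      (Finset.sum_nonneg fun v' _ => Finset.sum_nonneg fun v _ => sum_mem_nonneg hwZ v _))
  have t1 := mul_nonneg (Nat.cast_nonneg (α := ℝ) K₁) hcY0
  have t2 := mul_nonneg (Nat.cast_nonneg (α := ℝ) K₂) hcY0
  have t3 := mul_nonneg (Nat.cast_nonneg (α := ℝ) K₁) hcZ0
  have t4 := mul_nonneg (Nat.cast_nonneg (α := ℝ) K₃) hcZ0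
  rw [add_mul, add_mul] at hx
  have hmY1 : mY ≤ σ := by linarith
  have hmZ1 : mZ ≤ σ := by linarith
  have : Nonempty (Fin N) := ⟨⟨0, hN⟩⟩
  obtain ⟨Q, DcY, DY, DcZ, DZ, hQ, h1, h2, h3, h4⟩ := exists_pool_code hwY hwZ
    (TY := fun v => typicalOutputs P (margY W) δ (x v))
    (TZ := fun v => typicalOutputs P (margZ W) δ (x v)) hσε hσ hK₁ hK₂ hK₃ hk₁ hk₂ hk₃
    (by simpa using hKN₁) (by simpa using hKN₂) (by simpa using hKN₃)
    (by rw [Fintype.card_fin]; convert hmY1) (by rw [Fintype.card_fin]; convert hmZ1)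
    (by rw [Fintype.card_fin, ← Finset.mul_sum]; linarith)
    (by rw [Fintype.card_fin, ← Finset.mul_sum]; linarith)
    (by rw [Fintype.card_fin, ← Finset.mul_sum]; linarith)
    (by rw [Fintype.card_fin, ← Finset.mul_sum]; linarith)
    hexp₁ hexp₂ hexp₃ (by simpa using hdeg₁) (by simpa using hdeg₂) (by simpa using hdeg₃)
    (by simpa using htriple)
  refine ⟨fun i j l => mapWt x (Q i j l), DcY, DY, DcZ, DZ,
    fun i j l => isPMF_mapWt (hQ i j l) x, ⟨fun i => ?_, fun i i' hi => ?_⟩,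
    ⟨fun j => ?_, fun j j' hj => ?_⟩, ⟨fun i => ?_, fun i i' hi => ?_⟩,
    ⟨fun l => ?_, fun l l' hl => ?_⟩⟩ <;> rw [Nat.cast_mul] <;> beta_reduce
  · rw [sum_average_mapWt _ (Q i) x fun a => ∑ y ∈ (DcY i)ᶜ, Wn (margY W) n a y]
    convert h1.1 i
  · rw [sum_average_mapWt _ (Q i) x fun a => ∑ y ∈ DcY i', Wn (margY W) n a y]
    convert h1.2 i i' hi
  · rw [sum_average_mapWt _ (fun i => Q i j) x fun a => ∑ y ∈ (DY j)ᶜ, Wn (margY W) n a y]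
    convert h2.1 j
  · rw [sum_average_mapWt _ (fun i => Q i j) x fun a => ∑ y ∈ DY j', Wn (margY W) n a y]
    convert h2.2 j j' hj
  · rw [sum_average_mapWt _ (Q i) x fun a => ∑ y ∈ (DcZ i)ᶜ, Wn (margZ W) n a y]
    convert h3.1 i
  · rw [sum_average_mapWt _ (Q i) x fun a => ∑ y ∈ DcZ i', Wn (margZ W) n a y]
    convert h3.2 i i' hi
  · rw [sum_average_mapWt _ (fun i j => Q i j l) x fun a => ∑ y ∈ (DZ l)ᶜ, Wn (margZ W) n a y]
    convert h4.1 l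
  · rw [sum_average_mapWt _ (fun i j => Q i j l) x fun a => ∑ y ∈ DZ l', Wn (margZ W) n a y]
    convert h4.2 l l' hl

end CodeTransfer

section Asymptotics

theorem exists_exponents_of_le {a b R₁ R₂ R₃ : ℝ} (hab : a ≤ b) (ha : 0 < a) (h₁ : R₁ < a)
    (h₂ : R₂ < a) (h₃ : R₃ < b) (h₃' : R₃ < 2 * a) :
    ∃ a₁ a₂ a₃ r δ : ℝ, 0 < δ ∧ R₁ < a₁ ∧ R₂ < a₂ ∧ R₃ < a₃ ∧ a₁ < r ∧ a₂ < r ∧ a₃ < r ∧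
      a₁ < a - δ ∧ a₁ < b - δ ∧ a₂ < a - δ ∧ a₃ < b - δ ∧ 2 * r < a₁ + a₂ + a₃ := by
  obtain ⟨t, ht, htlt⟩ := exists_between (show (0 : ℝ) < min (min (a / 3) (a - R₁))
    (min (min (a - R₂) (b - R₃)) ((2 * a - R₃) / 4)) by
      simp only [lt_min_iff]
      refine ⟨⟨?_, ?_⟩, ⟨?_, ?_⟩, ?_⟩ <;> linarith)
  simp only [lt_min_iff] at htlt
  obtain ⟨⟨t1, t2⟩, ⟨t3, t4⟩, t5⟩ := htlt
  have m1 := min_le_left (b - t) (2 * a - 4 * t)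
  have m2 := min_le_right (b - t) (2 * a - 4 * t)
  have m3 : a - t ≤ min (b - t) (2 * a - 4 * t) := le_min (by linarith) (by linarith)
  refine ⟨a - t, a - t, min (b - t) (2 * a - 4 * t), min (b - t) (2 * a - 4 * t) + t / 2, t / 2,
    by linarith, by linarith, by linarith, lt_min (by linarith) (by linarith), ?_⟩
  refine ⟨?_, ?_, ?_, ?_, ?_, ?_, ?_, ?_⟩ <;> linarith

theorem exists_exponents {a b R₁ R₂ R₃ : ℝ} (ha : 0 < a) (hb : 0 < b) (h₁ : R₁ < a)
    (h₁' : R₁ < b) (h₂ : R₂ < a) (h₂' : R₂ < 2 * b) (h₃ : R₃ < b) (h₃' : R₃ < 2 * a) :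
    ∃ a₁ a₂ a₃ r δ : ℝ, 0 < δ ∧ R₁ < a₁ ∧ R₂ < a₂ ∧ R₃ < a₃ ∧ a₁ < r ∧ a₂ < r ∧ a₃ < r ∧
      a₁ < a - δ ∧ a₁ < b - δ ∧ a₂ < a - δ ∧ a₃ < b - δ ∧ 2 * r < a₁ + a₂ + a₃ := by
  rcases le_total a b with hab | hab
  · exact exists_exponents_of_le hab ha h₁ h₂ h₃ h₃'
  · obtain ⟨a₁, a₂, a₃, r, δ, hδ, e₁, e₂, e₃, f₁, f₂, f₃, g₁, g₂, g₃, g₄, hs⟩ :=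
      exists_exponents_of_le hab hb h₁' h₃ h₂ h₂'
    exact ⟨a₁, a₃, a₂, r, δ, hδ, e₁, e₃, e₂, f₁, f₃, f₂, g₂, g₁, g₄, g₃, by linarith⟩

theorem ceil_le_two_mul {x : ℝ} (hx : 1 ≤ x) : (⌈x⌉₊ : ℝ) ≤ 2 * x := by
  have := Nat.ceil_lt_add_one (zero_le_one.trans hx)
  linarith

theorem tendsto_exp_neg_natCast_mul {c : ℝ} (hc : 0 < c) :
    Filter.Tendsto (fun n : ℕ => Real.exp (-(n * c))) Filter.atTop (nhds 0) := by
  simpa using tendsto_natCast_succ_pow_mul_exp_neg 0 hc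

theorem eventually_mul_exp_neg_le (C : ℝ) {c σ : ℝ} (hc : 0 < c) (hσ : 0 < σ) :
    ∀ᶠ n : ℕ in Filter.atTop, C * Real.exp (-(n * c)) ≤ σ := by
  have h := (tendsto_exp_neg_natCast_mul hc).const_mul C
  rw [mul_zero] at h
  exact h.eventually_le_const hσ

theorem eventually_sq_mul_exp_neg_le {R a ε σ : ℝ} (hR : 0 < R) (hRa : R < a) (hε : 0 < ε)
    (hσ : 0 < σ) :
    ∀ᶠ n : ℕ in Filter.atTop, ((2 * ⌈Real.exp (Real.exp (n * R))⌉₊ : ℕ) : ℝ) ^ 2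
      * Real.exp (-(2 * ε * ⌈Real.exp (n * a)⌉₊)) ≤ σ := by
  have h1 := eventually_mul_exp_neg_le 1 (sub_pos.2 hRa) (half_pos hε)
  have h2 : Filter.Tendsto (fun n : ℕ => 16 * Real.exp (-(ε * Real.exp (n * a))))
      Filter.atTop (nhds (16 * 0)) := by
    refine (Real.tendsto_exp_neg_atTop_nhds_zero.comp ?_).const_mul 16
    refine Filter.Tendsto.const_mul_atTop hε (Real.tendsto_exp_atTop.comp ?_)
    exact tendsto_natCast_atTop_atTop.atTop_mul_const (hR.trans hRa)
  rw [mul_zero] at h2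
  filter_upwards [h1, h2.eventually_le_const hσ] with n hn1 hn2
  refine le_trans ?_ hn2
  set A := Real.exp (n * a) with hA
  set B := Real.exp (n * R) with hB
  have hBA : B ≤ ε / 2 * A := by
    have h := mul_le_mul_of_nonneg_right hn1 (Real.exp_pos (n * a)).le
    rw [one_mul, ← Real.exp_add] at h
    rwa [show -(n * (a - R)) + n * a = n * R by ring] at h
  have hk : ((2 * ⌈Real.exp B⌉₊ : ℕ) : ℝ) ≤ 4 * Real.exp B := by
    have := ceil_le_two_mul (Real.one_le_exp (Real.exp_pos (n * R)).le)
    push_cast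
    linarith
  have hAle : A ≤ ⌈A⌉₊ := Nat.le_ceil A
  calc ((2 * ⌈Real.exp B⌉₊ : ℕ) : ℝ) ^ 2 * Real.exp (-(2 * ε * ⌈A⌉₊))
      ≤ (4 * Real.exp B) ^ 2 * Real.exp (-(2 * ε * A)) := by gcongr
    _ = 16 * Real.exp (2 * B - 2 * ε * A) := by
        rw [mul_pow, ← Real.exp_nat_mul, mul_assoc, ← Real.exp_add]
        norm_num
        ring_nf
    _ ≤ 16 * Real.exp (-(ε * A)) := by
        gcongr
        linarith

theorem eventually_ceil_mul_succ_div_le {R r σ : ℝ} (hR : 0 < R) (hr : 0 < r) (hσ : 0 < σ) :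
    ∀ᶠ n : ℕ in Filter.atTop, (⌈Real.exp (n * r)⌉₊ : ℝ) * (⌈Real.exp (n * r)⌉₊ + 1)
      / ⌈Real.exp (Real.exp (n * R))⌉₊ ≤ σ := by
  have h1 := (tendsto_natCast_succ_pow_mul_exp_neg 1 hR).const_mul (2 * r + 1)
  rw [mul_zero] at h1
  filter_upwards [h1.eventually_le_const one_pos, eventually_mul_exp_neg_le 6 one_pos hσ]
    with n hn1 hn2
  refine le_trans ?_ hn2
  have hA1 : 1 ≤ Real.exp (n * r) := Real.one_le_exp (by positivity)
  have hA := ceil_le_two_mul hA1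
  have hB : (2 * r + 1) * n ≤ Real.exp (n * R) := by
    have h := mul_le_mul_of_nonneg_right hn1 (Real.exp_pos (n * R)).le
    rw [pow_one, one_mul, mul_assoc, mul_assoc, ← Real.exp_add, neg_add_cancel, Real.exp_zero] at h
    nlinarith
  calc _ ≤ 2 * Real.exp (n * r) * (3 * Real.exp (n * r)) / Real.exp (Real.exp (n * R)) := by
        gcongr
        · linarith
        · exact Nat.le_ceil _
    _ ≤ 2 * Real.exp (n * r) * (3 * Real.exp (n * r)) / Real.exp ((2 * r + 1) * n) := by gcongr
    _ = 6 * Real.exp (-(n * 1)) := by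
        rw [div_eq_iff (Real.exp_pos _).ne', mul_assoc 6, ← Real.exp_add, mul_mul_mul_comm,
          ← Real.exp_add]
        norm_num
        ring

theorem ceil_exp_mul_le {n : ℕ} {a c r : ℝ} (ha : 0 < a) :
    (⌈Real.exp (n * a)⌉₊ : ℝ) * ((⌈Real.exp (n * r)⌉₊ : ℝ)⁻¹ + Real.exp (-(n * c)))
      ≤ 2 * Real.exp (-(n * (r - a))) + 2 * Real.exp (-(n * (c - a))) := by
  have hA := ceil_le_two_mul (Real.one_le_exp (show 0 ≤ n * a by positivity))
  have hN : (⌈Real.exp (n * r)⌉₊ : ℝ)⁻¹ ≤ Real.exp (-(n * r)) := by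
    rw [Real.exp_neg]
    exact inv_anti₀ (Real.exp_pos _) (Nat.le_ceil _)
  calc _ ≤ 2 * Real.exp (n * a) * (Real.exp (-(n * r)) + Real.exp (-(n * c))) := by gcongr
    _ = _ := by
        rw [mul_add, mul_assoc, mul_assoc, ← Real.exp_add, ← Real.exp_add]
        ring_nf

theorem triple_ceil_exp_le {n : ℕ} {a₁ a₂ a₃ r : ℝ} (hr : 0 < r) :
    32 / ((⌈Real.exp (n * a₁)⌉₊ * ⌈Real.exp (n * a₂)⌉₊ * ⌈Real.exp (n * a₃)⌉₊ : ℝ)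
      / (⌈Real.exp (n * r)⌉₊ : ℝ) ^ 2) ≤ 128 * Real.exp (-(n * (a₁ + a₂ + a₃ - 2 * r))) := by
  have hN := ceil_le_two_mul (Real.one_le_exp (show 0 ≤ n * r by positivity))
  have hN0 : (0 : ℝ) < ⌈Real.exp (n * r)⌉₊ := by
    exact_mod_cast Nat.ceil_pos.2 (Real.exp_pos _)
  calc _ ≤ 32 / ((Real.exp (n * a₁) * Real.exp (n * a₂) * Real.exp (n * a₃))
      / (2 * Real.exp (n * r)) ^ 2) := by
        gcongr <;> exact Nat.le_ceil _
    _ = _ := by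
        rw [div_div_eq_mul_div, div_eq_iff (by positivity), mul_pow, ← Real.exp_nat_mul,
          ← Real.exp_add, ← Real.exp_add, mul_assoc 128, ← Real.exp_add]
        push_cast
        ring_nf

theorem le_log_log_ceil_exp_exp {n : ℕ} (hn : 0 < n) (R : ℝ) :
    R ≤ 1 / n * Real.log (Real.log ⌈Real.exp (Real.exp (n * R))⌉₊) := by
  have hn' : (0 : ℝ) < n := by exact_mod_cast hn
  have h1 : Real.exp (n * R) ≤ Real.log ⌈Real.exp (Real.exp (n * R))⌉₊ := by
    rw [← Real.log_exp (Real.exp (n * R))]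
    exact Real.log_le_log (Real.exp_pos _) (by rw [Real.log_exp]; exact Nat.le_ceil _)
  have h2 : n * R ≤ Real.log (Real.log ⌈Real.exp (Real.exp (n * R))⌉₊) := by
    rw [← Real.log_exp (n * R)]
    exact Real.log_le_log (Real.exp_pos _) (by rw [Real.log_exp]; exact h1)
  rw [one_div, inv_mul_eq_div, le_div_iff₀ hn']
  linarith

/-- Rate triples strictly inside the inner bound, with all rates positive, are attained. -/
theorem exists_cms_code_of_lt {X Y Z : Type*} [Fintype X] [Fintype Y] [Fintype Z]
    {W : X → Y → Z → ℝ} (hW : IsBC W) {P : X → ℝ} (hP : IsPMF P) {R₁ R₂ R₃ η : ℝ} (hR₁ : 0 < R₁)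
    (hR₂ : 0 < R₂) (hR₃ : 0 < R₃) (h₁Y : R₁ < mutInf P (margY W)) (h₁Z : R₁ < mutInf P (margZ W))
    (h₂ : R₂ < mutInf P (margY W)) (h₂' : R₂ < 2 * mutInf P (margZ W))
    (h₃ : R₃ < mutInf P (margZ W)) (h₃' : R₃ < 2 * mutInf P (margY W)) (hη : 0 < η) :
    ∃ n₀ : ℕ, ∀ n : ℕ, n₀ ≤ n →
      ∃ (k kY kZ : ℕ) (Q : Fin k → Fin kY → Fin kZ → (Fin n → X) → ℝ)
        (DcY : Fin k → Finset (Fin n → Y)) (DY : Fin kY → Finset (Fin n → Y))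
        (DcZ : Fin k → Finset (Fin n → Z)) (DZ : Fin kZ → Finset (Fin n → Z)),
        IsCMSIDCode n k kY kZ W Q DcY DY DcZ DZ η η η η ∧ 0 < k ∧ 0 < kY ∧ 0 < kZ ∧
        R₁ ≤ (1 / n) * Real.log (Real.log k) ∧ R₂ ≤ (1 / n) * Real.log (Real.log kY) ∧
        R₃ ≤ (1 / n) * Real.log (Real.log kZ) := by
  obtain ⟨a₁, a₂, a₃, r, δ, hδ, e₁, e₂, e₃, f₁, f₂, f₃, g₁, g₂, g₃, g₄, hs⟩ :=
    exists_exponents (hR₁.trans h₁Y) (hR₁.trans h₁Z) h₁Y h₁Z h₂ h₂' h₃ h₃'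
  have ha₁ := hR₁.trans e₁
  have ha₂ := hR₂.trans e₂
  have ha₃ := hR₃.trans e₃
  have hr := ha₁.trans f₁
  set ε := η / 132 with hε
  have hε0 : 0 < ε := by positivity
  set σ := min (ε / 44) (1 / 44) with hσ
  have hσ0 : 0 < σ := by positivity
  have hσ1 : 44 * σ ≤ ε := by linarith [min_le_left (ε / 44) (1 / 44)]
  have hσ2 : 22 * σ < 1 := by linarith [min_le_right (ε / 44) (1 / 44)]
  have hinv : ∀ C : ℝ, ∀ᶠ n : ℕ in Filter.atTop, C / (n * δ ^ 2) ≤ σ / 18 := fun C =>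
    (Filter.Tendsto.const_div_atTop (tendsto_natCast_atTop_atTop.atTop_mul_const
      (by positivity)) C).eventually_le_const (by positivity)
  have hgap : ∀ c : ℝ, 0 < c → ∀ᶠ n : ℕ in Filter.atTop, 2 * Real.exp (-(n * c)) ≤ σ / 18 :=
    fun c hc => eventually_mul_exp_neg_le 2 hc (by positivity)
  have ev := (((hinv (16 * (Fintype.card X * Fintype.card Y))).and
    (hinv (16 * (Fintype.card X * Fintype.card Z)))).and
    (((hgap _ (sub_pos.2 f₁)).and (hgap _ (sub_pos.2 f₂))).and (hgap _ (sub_pos.2 f₃)))).and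
    ((((hgap _ (sub_pos.2 g₁)).and (hgap _ (sub_pos.2 g₂))).and
      ((hgap _ (sub_pos.2 g₃)).and (hgap _ (sub_pos.2 g₄)))).and
    ((((eventually_sq_mul_exp_neg_le hR₁ e₁ hε0 hσ0).and
      (eventually_sq_mul_exp_neg_le hR₂ e₂ hε0 hσ0)).and
      (eventually_sq_mul_exp_neg_le hR₃ e₃ hε0 hσ0)).and
    ((((eventually_ceil_mul_succ_div_le hR₁ hr hσ0).and
      (eventually_ceil_mul_succ_div_le hR₂ hr hσ0)).and
      (eventually_ceil_mul_succ_div_le hR₃ hr hσ0)).and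
    ((eventually_mul_exp_neg_le 128 (sub_pos.2 hs) hσ0).and (Filter.eventually_gt_atTop 0)))))
  obtain ⟨n₀, hn₀⟩ := Filter.eventually_atTop.1 ev
  refine ⟨n₀, fun n hn => ?_⟩
  obtain ⟨⟨⟨i₁, i₂⟩, ⟨u₁, u₂⟩, u₃⟩, ⟨⟨v₁, v₂⟩, v₃, v₄⟩, ⟨⟨w₁, w₂⟩, w₃⟩, ⟨⟨d₁, d₂⟩, d₃⟩, ht, hn0⟩ :=
    hn₀ n hn
  have hceil : ∀ x : ℝ, 0 < ⌈Real.exp x⌉₊ := fun x => Nat.ceil_pos.2 (Real.exp_pos x)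
  have hmono : ∀ {a : ℝ}, a < r → ⌈Real.exp (n * a)⌉₊ ≤ ⌈Real.exp (n * r)⌉₊ := fun h =>
    Nat.ceil_mono (Real.exp_le_exp.2 (mul_le_mul_of_nonneg_left h.le (Nat.cast_nonneg n)))
  obtain ⟨Q, DcY, DY, DcZ, DZ, hcode⟩ := exists_cms_code hW hP hn0 hδ hσ1 hσ2
    (N := ⌈Real.exp (n * r)⌉₊) (K₁ := ⌈Real.exp (n * a₁)⌉₊) (K₂ := ⌈Real.exp (n * a₂)⌉₊)
    (K₃ := ⌈Real.exp (n * a₃)⌉₊) (k₁ := ⌈Real.exp (Real.exp (n * R₁))⌉₊)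
    (k₂ := ⌈Real.exp (Real.exp (n * R₂))⌉₊) (k₃ := ⌈Real.exp (Real.exp (n * R₃))⌉₊)
    (hceil _) (hceil _) (hceil _) (hceil _) (hceil _) (hceil _) (hmono f₁) (hmono f₂) (hmono f₃)
    (by
      rw [add_mul, add_mul]
      linarith [ceil_exp_mul_le (n := n) (c := mutInf P (margY W) - δ) (r := r) ha₁,
        ceil_exp_mul_le (n := n) (c := mutInf P (margY W) - δ) (r := r) ha₂,
        ceil_exp_mul_le (n := n) (c := mutInf P (margZ W) - δ) (r := r) ha₁,
        ceil_exp_mul_le (n := n) (c := mutInf P (margZ W) - δ) (r := r) ha₃])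
    w₁ w₂ w₃ d₁ d₂ d₃ ((triple_ceil_exp_le hr).trans ht)
  rw [hε, mul_div_cancel₀ η (by norm_num : (132 : ℝ) ≠ 0)] at hcode
  exact ⟨_, _, _, Q, DcY, DY, DcZ, DZ, hcode, hceil _, hceil _, hceil _,
    le_log_log_ceil_exp_exp hn0 R₁, le_log_log_ceil_exp_exp hn0 R₂, le_log_log_ceil_exp_exp hn0 R₃⟩

end Asymptotics

section InnerBound

variable {X Y Z : Type*} [Fintype X] [Fintype Y] [Fintype Z]

theorem IDCodeErr.mono {M : Type*} {n : ℕ} {W : X → Y → ℝ} {Q : M → (Fin n → X) → ℝ}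
    {D : M → Finset (Fin n → Y)} {l₁ l₂ l₁' l₂' : ℝ} (h : IDCodeErr n W Q D l₁ l₂)
    (h₁ : l₁ ≤ l₁') (h₂ : l₂ ≤ l₂') : IDCodeErr n W Q D l₁' l₂' :=
  ⟨fun m => (h.1 m).trans h₁, fun m m' hm => (h.2 m m' hm).trans h₂⟩

theorem idCodeErr_univ {M : Type*} [Subsingleton M] {n : ℕ} (W : X → Y → ℝ)
    (Q : M → (Fin n → X) → ℝ) {l₁ : ℝ} (l₂ : ℝ) (hl : 0 ≤ l₁) :
    IDCodeErr n W Q (fun _ => Finset.univ) l₁ l₂ :=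
  ⟨fun m => by simpa using hl, fun m m' hm => absurd (Subsingleton.elim m m') hm⟩

theorem isPMF_inv_mul_sum {A : Type*} [Fintype A] {k : ℕ} (hk : 0 < k) {Q : Fin k → A → ℝ}
    (hQ : ∀ i, IsPMF (Q i)) : IsPMF fun a => (k : ℝ)⁻¹ * ∑ i, Q i a := by
  have hk' : (k : ℝ) ≠ 0 := by exact_mod_cast hk.ne'
  refine ⟨fun a => mul_nonneg (by positivity) (Finset.sum_nonneg fun i _ => (hQ i).1 a), ?_⟩
  rw [← Finset.mul_sum, Finset.sum_comm]
  simp [(hQ _).2, hk']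

variable {W : X → Y → Z → ℝ} {n k kY kZ : ℕ} {Q : Fin k → Fin kY → Fin kZ → (Fin n → X) → ℝ}
  {DcY : Fin k → Finset (Fin n → Y)} {DY : Fin kY → Finset (Fin n → Y)}
  {DcZ : Fin k → Finset (Fin n → Z)} {DZ : Fin kZ → Finset (Fin n → Z)} {l1Y l2Y l1Z l2Z : ℝ}

theorem IsCMSIDCode.forget_common (h : IsCMSIDCode n k kY kZ W Q DcY DY DcZ DZ l1Y l2Y l1Z l2Z)
    (hk : 0 < k) (hY : 0 ≤ l1Y) (hZ : 0 ≤ l1Z) :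
    IsCMSIDCode n 1 kY kZ W (fun _ my mz x => (k : ℝ)⁻¹ * ∑ m, Q m my mz x)
      (fun _ => Finset.univ) DY (fun _ => Finset.univ) DZ l1Y l2Y l1Z l2Z := by
  obtain ⟨hQ, -, h2, -, h4⟩ := h
  refine ⟨fun _ my mz => isPMF_inv_mul_sum hk fun m => hQ m my mz, idCodeErr_univ _ _ _ hY, ?_,
    idCodeErr_univ _ _ _ hZ, ?_⟩
  · convert h2 using 3 with my x
    rw [Finset.sum_comm]
    simp only [Finset.univ_unique, Finset.sum_singleton, ← Finset.mul_sum, ← mul_assoc]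
    push_cast
    rw [one_mul, mul_inv, mul_comm (k : ℝ)⁻¹]
    congr 1
    rw [Finset.sum_comm]
  · convert h4 using 3 with mz x
    rw [Finset.sum_comm]
    simp only [Finset.univ_unique, Finset.sum_singleton, ← Finset.mul_sum, ← mul_assoc]
    push_cast
    rw [one_mul, mul_inv, mul_comm (k : ℝ)⁻¹]
    congr 1
    rw [Finset.sum_comm]

theorem IsCMSIDCode.forget_Y (h : IsCMSIDCode n k kY kZ W Q DcY DY DcZ DZ l1Y l2Y l1Z l2Z)
    (hk : 0 < kY) (hY : 0 ≤ l1Y) :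
    IsCMSIDCode n k 1 kZ W (fun m _ mz x => (kY : ℝ)⁻¹ * ∑ my, Q m my mz x)
      DcY (fun _ => Finset.univ) DcZ DZ l1Y l2Y l1Z l2Z := by
  obtain ⟨hQ, h1, -, h3, h4⟩ := h
  have h : ∀ m x, ((1 * kZ : ℕ) : ℝ)⁻¹ * ∑ _my : Fin 1, ∑ mz, (kY : ℝ)⁻¹ * ∑ my, Q m my mz x
      = ((kY * kZ : ℕ) : ℝ)⁻¹ * ∑ my, ∑ mz, Q m my mz x := by
    intro m x
    simp only [Finset.univ_unique, Finset.sum_singleton, ← Finset.mul_sum, ← mul_assoc]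
    push_cast
    rw [one_mul, mul_inv, mul_comm (kY : ℝ)⁻¹]
    congr 1
    rw [Finset.sum_comm]
  refine ⟨fun m _ mz => isPMF_inv_mul_sum hk fun my => hQ m my mz, ?_, idCodeErr_univ _ _ _ hY,
    ?_, ?_⟩
  · simpa only [h] using h1
  · simpa only [h] using h3
  · convert h4 using 3 with mz x
    simp only [Finset.univ_unique, Finset.sum_singleton, ← Finset.mul_sum, ← mul_assoc]
    push_cast
    rw [mul_one, mul_inv]

theorem IsCMSIDCode.forget_Z (h : IsCMSIDCode n k kY kZ W Q DcY DY DcZ DZ l1Y l2Y l1Z l2Z)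
    (hk : 0 < kZ) (hZ : 0 ≤ l1Z) :
    IsCMSIDCode n k kY 1 W (fun m my _ x => (kZ : ℝ)⁻¹ * ∑ mz, Q m my mz x)
      DcY DY DcZ (fun _ => Finset.univ) l1Y l2Y l1Z l2Z := by
  obtain ⟨hQ, h1, h2, h3, -⟩ := h
  have h : ∀ m x, ((kY * 1 : ℕ) : ℝ)⁻¹ * ∑ my, ∑ _mz : Fin 1, (kZ : ℝ)⁻¹ * ∑ mz, Q m my mz x
      = ((kY * kZ : ℕ) : ℝ)⁻¹ * ∑ my, ∑ mz, Q m my mz x := by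
    intro m x
    simp only [Finset.univ_unique, Finset.sum_singleton, ← Finset.mul_sum, ← mul_assoc]
    push_cast
    rw [mul_one, mul_inv]
  refine ⟨fun m my _ => isPMF_inv_mul_sum hk fun mz => hQ m my mz, ?_, ?_, ?_,
    idCodeErr_univ _ _ _ hZ⟩
  · simpa only [h] using h1
  · convert h2 using 3 with my x
    simp only [Finset.univ_unique, Finset.sum_singleton, ← Finset.mul_sum, ← mul_assoc]
    push_cast
    rw [mul_one, mul_inv]
  · simpa only [h] using h3

theorem CMSAchievable_of_lt (hW : IsBC W) {P : X → ℝ} (hP : IsPMF P) {p : ℝ × ℝ × ℝ}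
    (h0 : 0 ≤ p.1 ∧ 0 ≤ p.2.1 ∧ 0 ≤ p.2.2)
    (h₁Y : p.1 < mutInf P (margY W)) (h₁Z : p.1 < mutInf P (margZ W))
    (h₂ : p.2.1 < mutInf P (margY W)) (h₂' : p.2.1 < 2 * mutInf P (margZ W))
    (h₃ : p.2.2 < mutInf P (margZ W)) (h₃' : p.2.2 < 2 * mutInf P (margY W)) :
    CMSAchievable W p := by
  obtain ⟨r₁, r₂, r₃⟩ := p
  obtain ⟨h01, h02, h03⟩ := h0
  dsimp only at *
  refine ⟨h01, h02, h03, fun l1Y l2Y l1Z l2Z hl1Y hl2Y hl1Z hl2Z => ?_⟩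
  obtain ⟨R₁, e₁, e₁'⟩ := exists_between (lt_min h₁Y h₁Z)
  obtain ⟨R₂, e₂, e₂'⟩ := exists_between (lt_min h₂ h₂')
  obtain ⟨R₃, e₃, e₃'⟩ := exists_between (lt_min h₃ h₃')
  rw [lt_min_iff] at e₁' e₂' e₃'
  have hη : 0 < min (min l1Y l2Y) (min l1Z l2Z) := by positivity
  obtain ⟨n₀, hn₀⟩ := exists_cms_code_of_lt hW hP (h01.trans_lt e₁) (h02.trans_lt e₂)
    (h03.trans_lt e₃) e₁'.1 e₁'.2 e₂'.1 e₂'.2 e₃'.1 e₃'.2 hη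
  refine ⟨n₀, fun n hn => ?_⟩
  obtain ⟨k, kY, kZ, Q, DcY, DY, DcZ, DZ, ⟨hQ, c1, c2, c3, c4⟩, hk, hkY, hkZ, hR₁, hR₂, hR₃⟩ :=
    hn₀ n hn
  have g1Y := (min_le_left (min l1Y l2Y) (min l1Z l2Z)).trans (min_le_left _ _)
  have g2Y := (min_le_left (min l1Y l2Y) (min l1Z l2Z)).trans (min_le_right _ _)
  have g1Z := (min_le_right (min l1Y l2Y) (min l1Z l2Z)).trans (min_le_left _ _)
  have g2Z := (min_le_right (min l1Y l2Y) (min l1Z l2Z)).trans (min_le_right _ _)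
  have hcode : IsCMSIDCode n k kY kZ W Q DcY DY DcZ DZ l1Y l2Y l1Z l2Z :=
    ⟨hQ, c1.mono g1Y g2Y, c2.mono g1Y g2Y, c3.mono g1Z g2Z, c4.mono g1Z g2Z⟩
  obtain ⟨k', hk', Q, DcY, DcZ, hcode⟩ : ∃ k' : ℕ,
      ((0 < r₁ → r₁ ≤ 1 / n * Real.log (Real.log k')) ∧ (r₁ = 0 → k' = 1)) ∧
      ∃ (Q : Fin k' → Fin kY → Fin kZ → (Fin n → X) → ℝ) (DcY : Fin k' → Finset (Fin n → Y))
        (DcZ : Fin k' → Finset (Fin n → Z)),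
        IsCMSIDCode n k' kY kZ W Q DcY DY DcZ DZ l1Y l2Y l1Z l2Z := by
    rcases h01.eq_or_lt with h | h
    · exact ⟨1, ⟨fun h' => absurd h h'.ne, fun _ => rfl⟩, _, _, _,
        hcode.forget_common hk hl1Y.le hl1Z.le⟩
    · exact ⟨k, ⟨fun _ => e₁.le.trans hR₁, fun h' => absurd h' h.ne'⟩, Q, DcY, DcZ, hcode⟩
  obtain ⟨kY', hkY', Q, DY, hcode⟩ : ∃ kY' : ℕ,
      ((0 < r₂ → r₂ ≤ 1 / n * Real.log (Real.log kY')) ∧ (r₂ = 0 → kY' = 1)) ∧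
      ∃ (Q : Fin k' → Fin kY' → Fin kZ → (Fin n → X) → ℝ) (DY : Fin kY' → Finset (Fin n → Y)),
        IsCMSIDCode n k' kY' kZ W Q DcY DY DcZ DZ l1Y l2Y l1Z l2Z := by
    rcases h02.eq_or_lt with h | h
    · exact ⟨1, ⟨fun h' => absurd h h'.ne, fun _ => rfl⟩, _, _, hcode.forget_Y hkY hl1Y.le⟩
    · exact ⟨kY, ⟨fun _ => e₂.le.trans hR₂, fun h' => absurd h' h.ne'⟩, Q, DY, hcode⟩
  rcases h03.eq_or_lt with h | h
  · exact ⟨k', kY', 1, _, DcY, DY, DcZ, _, hcode.forget_Z hkZ hl1Z.le, hk', hkY',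
      fun h' => absurd h h'.ne, fun _ => rfl⟩
  · exact ⟨k', kY', kZ, Q, DcY, DY, DcZ, DZ, hcode, hk', hkY',
      fun _ => e₃.le.trans hR₃, fun h' => absurd h' h.ne'⟩

theorem CMSAchievable_zero [Nonempty X] (W : X → Y → Z → ℝ) : CMSAchievable W 0 := by
  refine ⟨le_rfl, le_rfl, le_rfl, fun l1Y l2Y l1Z l2Z hl1Y hl2Y hl1Z hl2Z => ⟨0, fun n _ => ?_⟩⟩
  have x : Fin n → X := Classical.arbitrary _
  refine ⟨1, 1, 1, fun _ _ _ => mapWt (fun _ : Unit => x) fun _ => 1, fun _ => Finset.univ,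
    fun _ => Finset.univ, fun _ => Finset.univ, fun _ => Finset.univ,
    ⟨fun _ _ _ => isPMF_mapWt ⟨fun _ => zero_le_one, by simp⟩ _, idCodeErr_univ _ _ _ hl1Y.le,
      idCodeErr_univ _ _ _ hl1Y.le, idCodeErr_univ _ _ _ hl1Z.le, idCodeErr_univ _ _ _ hl1Z.le⟩,
    ⟨fun h => absurd h (lt_irrefl _), fun _ => rfl⟩, ⟨fun h => absurd h (lt_irrefl _), fun _ => rfl⟩,
    ⟨fun h => absurd h (lt_irrefl _), fun _ => rfl⟩⟩

/-- The inner bound. -/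
theorem mem_closure_CMSAchievable [Nonempty X] (hW : IsBC W) {P : X → ℝ} (hP : IsPMF P)
    {p : ℝ × ℝ × ℝ} (h01 : 0 ≤ p.1) (h02 : 0 ≤ p.2.1) (h03 : 0 ≤ p.2.2)
    (h₁Y : p.1 ≤ mutInf P (margY W)) (h₂ : p.2.1 ≤ mutInf P (margY W))
    (h₁Z : p.1 ≤ mutInf P (margZ W)) (h₃ : p.2.2 ≤ mutInf P (margZ W))
    (h₂' : p.2.1 ≤ 2 * mutInf P (margZ W)) (h₃' : p.2.2 ≤ 2 * mutInf P (margY W)) :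
    p ∈ closure {p : ℝ × ℝ × ℝ | CMSAchievable W p} := by
  have hY := mutInf_nonneg hP (isChannel_margY hW)
  have hZ := mutInf_nonneg hP (isChannel_margZ hW)
  by_cases hpos : 0 < mutInf P (margY W) ∧ 0 < mutInf P (margZ W)
  · obtain ⟨hY, hZ⟩ := hpos
    have hlim : Filter.Tendsto (fun t : ℝ => t • p) (nhdsWithin 1 (Set.Iio 1)) (nhds p) := by
      have h : Filter.Tendsto (fun t : ℝ => t • p) (nhds 1) (nhds ((1 : ℝ) • p)) :=
        (continuous_id.smul continuous_const).tendsto 1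
      rw [one_smul] at h
      exact h.mono_left nhdsWithin_le_nhds
    refine mem_closure_of_tendsto hlim ?_
    filter_upwards [Ioo_mem_nhdsLT zero_lt_one] with t ht
    have hmul : ∀ {x y : ℝ}, 0 ≤ x → x ≤ y → 0 < y → t * x < y := fun hx hxy hy => by
      nlinarith [ht.1, ht.2]
    refine CMSAchievable_of_lt hW hP
      ⟨mul_nonneg ht.1.le h01, mul_nonneg ht.1.le h02, mul_nonneg ht.1.le h03⟩
      (hmul h01 h₁Y hY) (hmul h01 h₁Z hZ) (hmul h02 h₂ hY) (hmul h02 h₂' (by linarith))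
      (hmul h03 h₃ hZ) (hmul h03 h₃' (by linarith))
  · have hp : p = 0 := by
      rw [not_and_or, not_lt, not_lt] at hpos
      refine Prod.ext ?_ (Prod.ext ?_ ?_) <;> simp only [Prod.fst_zero, Prod.snd_zero] <;>
        rcases hpos with h | h <;> linarith
    rw [hp]
    exact subset_closure (CMSAchievable_zero W)

end InnerBound

/-- **Theorem 9.** Outer and inner bounds on the ID capacity
region of the BC with a common message identified separately. -/
theorem bc_cms_id_capacity_bounds
    {X Y Z : Type} [Fintype X] [Fintype Y] [Fintype Z]
    [Nonempty X] [Nonempty Y] [Nonempty Z]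
    (W : X → Y → Z → ℝ) (hW : IsBC W) :
    closure {p : ℝ × ℝ × ℝ | CMSAchievable W p}
      ⊆ {p : ℝ × ℝ × ℝ | 0 ≤ p.1 ∧ 0 ≤ p.2.1 ∧ 0 ≤ p.2.2 ∧
          ∃ P : X → ℝ, IsPMF P ∧
            p.1 ≤ mutInf P (margY W) ∧ p.2.1 ≤ mutInf P (margY W) ∧
            p.1 ≤ mutInf P (margZ W) ∧ p.2.2 ≤ mutInf P (margZ W)} ∧
    {p : ℝ × ℝ × ℝ | 0 ≤ p.1 ∧ 0 ≤ p.2.1 ∧ 0 ≤ p.2.2 ∧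
        ∃ P : X → ℝ, IsPMF P ∧
          p.1 ≤ mutInf P (margY W) ∧ p.2.1 ≤ mutInf P (margY W) ∧
          p.1 ≤ mutInf P (margZ W) ∧ p.2.2 ≤ mutInf P (margZ W) ∧
          p.2.1 ≤ 2 * mutInf P (margZ W) ∧ p.2.2 ≤ 2 * mutInf P (margY W)}
      ⊆ closure {p : ℝ × ℝ × ℝ | CMSAchievable W p} := by
  refine ⟨closure_CMSAchievable_subset hW, ?_⟩
  rintro p ⟨h01, h02, h03, P, hP, h₁Y, h₂, h₁Z, h₃, h₂', h₃'⟩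
  exact mem_closure_CMSAchievable hW hP h01 h02 h03 h₁Y h₂ h₁Z h₃ h₂' h₃'
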